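/- For every pair of real numbers a and b with b ≤ 0, the set of positive real numbers c for which there exists a nonzero entire function w satisfying w''(z) + (z³ + a·z² + b·z − c)·w(z) = 0 for all z ∈ ℂ, such that w has infinitely many zeros and all but finitely many zeros of w are real, is infinite. -/

import Mathlib

open Complex Polynomial

namespace Cub

/-- padded Taylor coefficients of solutions of the cubic equation -/
noncomputable def coef (b c α β : ℝ) : ℕ → ℝ
  | 0 => 0
  | 1 => 0
  | 2 => 0
  | 3 => α
  | 4 => β
  | n + 5 => (coef b c α β n - b * coef b c α β (n + 2) + c * coef b c α β (n + 3))
      / ((n + 1) * (n + 2))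

def Rapid (a : ℕ → ℝ) : Prop := ∀ R : ℝ, 1 ≤ R → ∃ K : ℝ, ∀ n, |a n| * R ^ n ≤ K

noncomputable def pser (a : ℕ → ℝ) (x : ℂ) : ℂ := ∑' n, (a n : ℂ) * x ^ n

lemma geom_bound {a : ℕ → ℝ} {R K : ℝ} (hR : 1 ≤ R) (hK : ∀ n, |a n| * (2 * R) ^ n ≤ K) (n : ℕ)
    {x : ℂ} (hx : ‖x‖ ≤ R) : ‖(a n : ℂ) * x ^ n‖ ≤ K * (1 / 2 : ℝ) ^ n := by
  rw [norm_mul, norm_pow, Complex.norm_real, Real.norm_eq_abs]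
  calc |a n| * ‖x‖ ^ n ≤ |a n| * R ^ n := by gcongr
    _ = (|a n| * (2 * R) ^ n) * (1 / 2 : ℝ) ^ n := by
        rw [mul_pow, one_div, inv_pow]; field_simp
    _ ≤ K * (1 / 2 : ℝ) ^ n := by gcongr; exact hK n

lemma Rapid.summable {a : ℕ → ℝ} (h : Rapid a) (x : ℂ) : Summable fun n => (a n : ℂ) * x ^ n := by
  obtain ⟨K, hK⟩ := h (2 * (1 + ‖x‖)) (by linarith [norm_nonneg x])
  exact Summable.of_norm_bounded (summable_geometric_two.mul_left K)
    (fun n => geom_bound (by linarith [norm_nonneg x]) hK n (by linarith))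

lemma Rapid.shift {a : ℕ → ℝ} (h : Rapid a) : Rapid fun n => a (n + 1) := by
  intro R hR
  obtain ⟨K, hK⟩ := h R hR
  refine ⟨K, fun n => le_trans ?_ (hK (n + 1))⟩
  have : R ^ n ≤ R ^ (n + 1) := pow_le_pow_right₀ hR (Nat.le_succ n)
  gcongr

lemma Rapid.deriv {a : ℕ → ℝ} (h : Rapid a) : Rapid fun n => ((n : ℝ) + 1) * a (n + 1) := by
  intro R hR
  obtain ⟨K, hK⟩ := h (2 * R) (by linarith)
  refine ⟨K, fun n => le_trans ?_ (hK (n + 1))⟩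
  rw [abs_mul, mul_pow]
  have h1 : ((n : ℝ) + 1) ≤ 2 ^ (n + 1) := by
    have := (Nat.lt_two_pow_self (n := n + 1)).le
    exact_mod_cast this
  have h2 : R ^ n ≤ R ^ (n + 1) := pow_le_pow_right₀ hR (Nat.le_succ n)
  rw [abs_of_nonneg (by positivity : (0 : ℝ) ≤ (n : ℝ) + 1)]
  calc ((n : ℝ) + 1) * |a (n + 1)| * R ^ n ≤ 2 ^ (n + 1) * |a (n + 1)| * R ^ (n + 1) := by gcongr
    _ = _ := by ring

lemma pser_succ {a : ℕ → ℝ} (h : Rapid a) (x : ℂ) :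
    pser a x = a 0 + x * pser (fun n => a (n + 1)) x := by
  unfold pser
  rw [(h.summable x).tsum_eq_zero_add, ← tsum_mul_left]
  congr 1
  · simp
  · congr 1; ext n; ring

lemma pser_hasDerivAt {a : ℕ → ℝ} (h : Rapid a) (x : ℂ) :
    HasDerivAt (pser a) (pser (fun n => ((n : ℝ) + 1) * a (n + 1)) x) x := by
  set S := 1 + ‖x‖ with hS
  have hS1 : 1 ≤ S := by linarith [norm_nonneg x]
  obtain ⟨K, hK⟩ := h.deriv (2 * S) (by linarith)
  have key := hasDerivAt_tsum_of_isPreconnected (𝕜 := ℂ) (F := ℂ)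
    (u := fun n => match n with | 0 => 0 | k + 1 => K * (1 / 2 : ℝ) ^ k)
    (g := fun n y => (a n : ℂ) * y ^ n) (g' := fun n y => (a n : ℂ) * (n * y ^ (n - 1)))
    (t := Metric.ball 0 S) (y₀ := x) (y := x) ?_ Metric.isOpen_ball
    (convex_ball _ _).isPreconnected ?_ ?_ (by simp [hS]) (h.summable x) (by simp [hS])
  · refine HasDerivAt.congr_deriv key ?_
    unfold pser
    have hs : Summable fun n : ℕ => (a n : ℂ) * (n * x ^ (n - 1)) := by
      rw [← summable_nat_add_iff 1]
      refine (h.deriv.summable x).congr (fun n => ?_)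
      push_cast; ring
    rw [hs.tsum_eq_zero_add]
    simp only [Nat.cast_zero, zero_mul, mul_zero, zero_add]
    congr 1; ext n
    push_cast; ring
  · rw [← summable_nat_add_iff 1]
    exact summable_geometric_two.mul_left K
  · intro n y _
    exact (hasDerivAt_pow n y).const_mul _
  · intro n y hy
    rcases n with _ | k
    · simp
    · have := geom_bound hS1 hK k (x := y) (by simpa using (mem_ball_zero_iff.1 hy).le)
      refine le_trans (le_of_eq ?_) this
      congr 1; push_cast; ring

lemma pser_conj (a : ℕ → ℝ) (x : ℂ) :
    pser a ((starRingEnd ℂ) x) = (starRingEnd ℂ) (pser a x) := by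
  unfold pser
  rw [Complex.conj_tsum]
  congr 1; ext n; simp

lemma pser_zero {a : ℕ → ℝ} (h : Rapid a) : pser a 0 = a 0 := by
  rw [pser_succ h]; simp

lemma coef_bound (b M α β : ℝ) (R : ℝ) (hR : 1 ≤ R) :
    ∃ K : ℝ, ∀ c : ℝ, |c| ≤ M → ∀ n, |coef b c α β n| * R ^ n ≤ K := by
  set L : ℝ := R ^ 5 * (1 + |b| + |M|) with hL
  have hR5 : (1 : ℝ) ≤ R ^ 5 := one_le_pow₀ hR
  have hL1 : 1 ≤ L := by
    rw [hL]
    nlinarith [abs_nonneg b, abs_nonneg M]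
  obtain ⟨N, hN', hN6⟩ : ∃ N : ℕ, L ≤ N ∧ 6 ≤ N := by
    obtain ⟨N, hN⟩ := exists_nat_ge L
    exact ⟨N + 6, by push_cast; linarith, by omega⟩
  have hN := hN'
  set T : ℝ := (|α| + |β|) * R ^ 4 with hT
  have hT0 : 0 ≤ T := by positivity
  refine ⟨T * L ^ N, fun c hc => ?_⟩
  have hcM : |c| ≤ |M| := hc.trans (le_abs_self M)
  have main : ∀ n, ∀ k ≤ n, |coef b c α β k| * R ^ k ≤ T * L ^ (min n N) := by
    intro n
    induction n with
    | zero => intro k hk; interval_cases k; simp [coef]; exact hT0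
    | succ n ih =>
      have hmono : T * L ^ (min n N) ≤ T * L ^ (min (n + 1) N) := by
        gcongr
        omega
      intro k hk
      rcases Nat.lt_or_ge k (n + 1) with hk' | hk'
      · exact (ih k (by omega)).trans hmono
      · have hkn : k = n + 1 := by omega
        subst hkn
        have hTL : T ≤ T * L ^ (min (n + 1) N) := le_mul_of_one_le_right hT0 (one_le_pow₀ hL1)
        match n, ih, hmono, hTL with
        | 0, _, _, hTL => simp [coef]; positivity
        | 1, _, _, hTL => simp [coef]; positivity
        | 2, _, _, hTL =>
          refine le_trans ?_ hTL
          simp only [coef, hT]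
          have : R ^ 3 ≤ R ^ 4 := pow_le_pow_right₀ hR (by norm_num)
          have h0 : (0 : ℝ) ≤ R ^ 3 := by positivity
          calc |α| * R ^ (2 + 1) ≤ |α| * R ^ 4 := by gcongr
            _ ≤ (|α| + |β|) * R ^ 4 := by gcongr; linarith [abs_nonneg β]
        | 3, _, _, hTL =>
          refine le_trans ?_ hTL
          simp only [coef, hT]
          gcongr; linarith [abs_nonneg α]
        | n + 4, ih, hmono, hTL =>
          set B := T * L ^ (min (n + 4) N) with hB
          have e0 := ih n (by omega)
          have e2 := ih (n + 2) (by omega)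
          have e3 := ih (n + 3) (by omega)
          have hB0 : 0 ≤ B := by positivity
          have hden : (0 : ℝ) < ((n : ℝ) + 1) * (n + 2) := by positivity
          have step : |coef b c α β (n + 4 + 1)| * R ^ (n + 4 + 1)
              ≤ L * B / (((n : ℝ) + 1) * (n + 2)) := by
            simp only [coef]
            rw [abs_div, abs_of_pos hden, div_mul_eq_mul_div]
            refine div_le_div_of_nonneg_right ?_ hden.le
            have t1 : |coef b c α β n - b * coef b c α β (n + 2) + c * coef b c α β (n + 3)|
                ≤ |coef b c α β n| + |b| * |coef b c α β (n + 2)| + |M| * |coef b c α β (n + 3)| := by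
              refine (abs_add_le _ _).trans ?_
              refine add_le_add ((abs_sub _ _).trans ?_) ?_
              · rw [abs_mul]
              · rw [abs_mul]; gcongr
            have p0 : R ^ (n + 4 + 1) = R ^ n * R ^ 5 := by ring
            have q2 : R ^ (n + 4 + 1) ≤ R ^ (n + 2) * R ^ 5 := by
              rw [← pow_add]; exact pow_le_pow_right₀ hR (by omega)
            have q3 : R ^ (n + 4 + 1) ≤ R ^ (n + 3) * R ^ 5 := by
              rw [← pow_add]; exact pow_le_pow_right₀ hR (by omega)
            calc _ ≤ (|coef b c α β n| + |b| * |coef b c α β (n + 2)| + |M| * |coef b c α β (n + 3)|)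
                  * R ^ (n + 4 + 1) := by gcongr
              _ = |coef b c α β n| * R ^ (n + 4 + 1) + |b| * (|coef b c α β (n + 2)| * R ^ (n + 4 + 1))
                  + |M| * (|coef b c α β (n + 3)| * R ^ (n + 4 + 1)) := by ring
              _ ≤ |coef b c α β n| * (R ^ n * R ^ 5)
                  + |b| * (|coef b c α β (n + 2)| * (R ^ (n + 2) * R ^ 5))
                  + |M| * (|coef b c α β (n + 3)| * (R ^ (n + 3) * R ^ 5)) := by
                  rw [← p0]; gcongr
              _ = R ^ 5 * (|coef b c α β n| * R ^ n + |b| * (|coef b c α β (n + 2)| * R ^ (n + 2))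
                  + |M| * (|coef b c α β (n + 3)| * R ^ (n + 3))) := by ring
              _ ≤ R ^ 5 * (B + |b| * B + |M| * B) := by gcongr
              _ = L * B := by rw [hL]; ring
          refine step.trans ?_
          rcases Nat.lt_or_ge (n + 4) N with hnN | hnN
          · have : L * B / (((n : ℝ) + 1) * (n + 2)) ≤ L * B := by
              apply div_le_self (by positivity)
              nlinarith [(Nat.cast_nonneg n : (0 : ℝ) ≤ n)]
            refine this.trans (le_of_eq ?_)
            rw [hB, min_eq_left (by omega), min_eq_left (by omega), pow_succ (n := n + 4)]; ring
          · refine le_trans ?_ hmono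
            rw [div_le_iff₀ hden, mul_comm]
            have hLn : L ≤ (n : ℝ) + 4 := by
              refine hN.trans ?_
              exact_mod_cast hnN
            rcases Nat.lt_or_ge n 2 with h2 | h2
            · omega
            · have : L ≤ ((n : ℝ) + 1) * (n + 2) := by
                have : (2 : ℝ) ≤ n := by exact_mod_cast h2
                nlinarith
              gcongr
  intro n
  refine (main n n le_rfl).trans ?_
  gcongr
  exact min_le_right _ _

lemma coef_rapid (b c α β : ℝ) : Rapid (coef b c α β) := by
  intro R hR
  obtain ⟨K, hK⟩ := coef_bound b |c| α β R hR
  exact ⟨K, hK c le_rfl⟩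

lemma coef_cont (b α β : ℝ) (n : ℕ) : Continuous fun c => coef b c α β n := by
  induction n using Nat.strong_induction_on with
  | _ n ih =>
    match n, ih with
    | 0, _ => simp only [coef]; fun_prop
    | 1, _ => simp only [coef]; fun_prop
    | 2, _ => simp only [coef]; fun_prop
    | 3, _ => simp only [coef]; fun_prop
    | 4, _ => simp only [coef]; fun_prop
    | n + 5, ih =>
      have h0 := ih n (by omega)
      have h2 := ih (n + 2) (by omega)
      have h3 := ih (n + 3) (by omega)
      simp only [coef]
      fun_prop

lemma pser_cont {a : ℝ → ℕ → ℝ} (hc : ∀ n, Continuous fun c => a c n)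
    (hb : ∀ M R : ℝ, 1 ≤ R → ∃ K : ℝ, ∀ c, |c| ≤ M → ∀ n, |a c n| * R ^ n ≤ K) (x : ℂ) :
    Continuous fun c => pser (a c) x := by
  rw [continuous_iff_continuousAt]
  intro c0
  obtain ⟨K, hK⟩ := hb (|c0| + 1) (2 * (1 + ‖x‖)) (by linarith [norm_nonneg x])
  have : ContinuousOn (fun c => pser (a c) x) (Set.Icc (-(|c0| + 1)) (|c0| + 1)) := by
    unfold pser
    refine continuousOn_tsum (u := fun n => K * (1 / 2 : ℝ) ^ n) ?_
      (summable_geometric_two.mul_left K) ?_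
    · intro n
      have := hc n
      fun_prop
    · intro n c hcm
      exact geom_bound (by linarith [norm_nonneg x]) (hK c (abs_le.2 hcm)) n (by linarith)
  refine this.continuousAt (Icc_mem_nhds ?_ ?_)
  · linarith [neg_abs_le c0]
  · linarith [le_abs_self c0]

/-- the entire solution with real data `α, β` at `0` -/
noncomputable def sol (b c α β : ℝ) : ℂ → ℂ := pser fun n => coef b c α β (n + 3)
noncomputable def sol' (b c α β : ℝ) : ℂ → ℂ :=
  pser fun n => ((n : ℝ) + 1) * coef b c α β (n + 4)

lemma sol_hasDerivAt (b c α β : ℝ) (x : ℂ) : HasDerivAt (sol b c α β) (sol' b c α β x) x :=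
  pser_hasDerivAt (coef_rapid b c α β).shift.shift.shift x

lemma sol'_hasDerivAt (b c α β : ℝ) (x : ℂ) :
    HasDerivAt (sol' b c α β) ((x ^ 3 - b * x + c) * sol b c α β x) x := by
  have h := coef_rapid b c α β
  have h3 := h.shift.shift.shift
  refine (pser_hasDerivAt h3.deriv x).congr_deriv ?_
  have e0 : pser (coef b c α β) x = x ^ 3 * sol b c α β x := by
    rw [pser_succ h, pser_succ h.shift, pser_succ h.shift.shift]
    simp [coef, sol]; ring
  have e2 : pser (fun n => coef b c α β (n + 2)) x = x * sol b c α β x := by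
    rw [pser_succ h.shift.shift]
    simp [coef, sol]
  have s0 := h.summable x
  have s2 := h.shift.shift.summable x
  have s3 := h3.summable x
  have : (x ^ 3 - b * x + c) * sol b c α β x = pser (coef b c α β) x
      - b * pser (fun n => coef b c α β (n + 2)) x + c * sol b c α β x := by
    rw [e0, e2]; ring
  rw [this]
  unfold sol pser
  rw [← tsum_mul_left, ← tsum_mul_left, ← (s0.tsum_sub (s2.mul_left _)),
    ← (s0.sub (s2.mul_left _)).tsum_add (s3.mul_left _)]
  congr 1
  ext n
  simp only [coef]
  have h1 : ((n : ℂ) + 1) ≠ 0 := by exact_mod_cast Nat.succ_ne_zero n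
  have h2 : ((n : ℂ) + 2) ≠ 0 := by exact_mod_cast Nat.succ_ne_zero (n + 1)
  push_cast
  field_simp
  ring

lemma sol_zero (b c α β : ℝ) : sol b c α β 0 = α := by
  have h3 := (coef_rapid b c α β).shift.shift.shift
  unfold sol; rw [pser_zero h3]; simp [coef]

lemma sol'_zero (b c α β : ℝ) : sol' b c α β 0 = β := by
  have h3 := (coef_rapid b c α β).shift.shift.shift
  unfold sol'; rw [pser_zero h3.deriv]; simp [coef]

lemma sol_conj (b c α β : ℝ) (x : ℂ) :
    sol b c α β ((starRingEnd ℂ) x) = (starRingEnd ℂ) (sol b c α β x) := pser_conj _ _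

lemma sol_cont (b α β : ℝ) (x : ℂ) : Continuous fun c => sol b c α β x := by
  refine pser_cont (fun n => coef_cont b α β (n + 3)) ?_ x
  intro M R hR
  obtain ⟨K, hK⟩ := coef_bound b M α β R hR
  refine ⟨K, fun c hc n => le_trans ?_ (hK c hc (n + 3))⟩
  have : R ^ n ≤ R ^ (n + 3) := pow_le_pow_right₀ hR (by omega)
  gcongr

lemma sol'_cont (b α β : ℝ) (x : ℂ) : Continuous fun c => sol' b c α β x := by
  refine pser_cont (fun n => (coef_cont b α β (n + 4)).const_mul _) ?_ x
  intro M R hR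
  obtain ⟨K, hK⟩ := coef_bound b M α β (2 * R) (by linarith)
  refine ⟨K, fun c hc n => le_trans ?_ (hK c hc (n + 4))⟩
  rw [abs_mul, mul_pow, abs_of_nonneg (by positivity : (0 : ℝ) ≤ (n : ℝ) + 1)]
  have h1 : ((n : ℝ) + 1) ≤ 2 ^ (n + 4) := by
    have h := (Nat.lt_two_pow_self (n := n + 4)).le
    have h' : n + 1 ≤ 2 ^ (n + 4) := by omega
    exact_mod_cast h'
  have : R ^ n ≤ R ^ (n + 4) := pow_le_pow_right₀ hR (by omega)
  calc ((n : ℝ) + 1) * |coef b c α β (n + 4)| * R ^ n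
      ≤ 2 ^ (n + 4) * |coef b c α β (n + 4)| * R ^ (n + 4) := by gcongr
    _ = _ := by ring

end Cub

namespace Cub
open MeasureTheory Set Filter Topology

structure VData (Y : ℝ) (Φ g : ℝ → ℂ) : Prop where
  contΦ : ContinuousOn Φ (Ici Y)
  anti : ∀ y s, Y ≤ y → y ≤ s → (Φ s).re ≤ (Φ y).re
  contg : ContinuousOn g (Ici Y)
  int : IntegrableOn g (Ioi Y)
  small : ∫ s in Ioi Y, ‖g s‖ ≤ 1 / 4

structure VSol (Y : ℝ) (Φ g m B : ℝ → ℂ) : Prop where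
  cont : ContinuousOn m (Ici Y)
  bd : ∀ y, Y ≤ y → ‖m y‖ ≤ 2
  eqm : ∀ y, Y ≤ y → m y = 1 + ∫ s in Ioi y, (exp (2 * (Φ s - Φ y)) - 1) * (g s * m s)
  eqB : ∀ y, Y ≤ y → B y = ∫ s in Ioi y, exp (2 * (Φ s - Φ y)) * (g s * m s)

lemma tail_split {f : ℝ → ℂ} {Y y : ℝ} (hf : IntegrableOn f (Ioi Y)) (hy : Y ≤ y) :
    ∫ s in Ioi y, f s = (∫ s in Ioi Y, f s) - ∫ s in Y..y, f s := by
  rw [← intervalIntegral.integral_Ioi_sub_Ioi hf hy]; ring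

lemma tail_cont {f : ℝ → ℂ} {Y : ℝ} (hf : IntegrableOn f (Ioi Y)) :
    Continuous fun y => ∫ s in Ioi (max y Y), f s := by
  have h1 : ∀ y, ∫ s in Ioi (max y Y), f s
      = (∫ s in Ioi Y, f s) - ∫ s in Y..(max y Y), (indicator (Ioi Y) f) s := by
    intro y
    rw [tail_split hf (le_max_right y Y)]
    congr 1
    rw [intervalIntegral.integral_of_le (le_max_right y Y),
      intervalIntegral.integral_of_le (le_max_right y Y)]
    refine setIntegral_congr_fun measurableSet_Ioc ?_
    intro s hs
    simp [indicator, hs.1]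
  simp_rw [h1]
  have h2 : Integrable (indicator (Ioi Y) f) := (integrable_indicator_iff measurableSet_Ioi).2 hf
  have h3 := intervalIntegral.continuous_primitive (f := indicator (Ioi Y) f) (μ := volume)
    (fun a b => h2.intervalIntegrable) Y
  exact continuous_const.sub (h3.comp (continuous_id.max continuous_const))

lemma tail_hasDerivAt {f : ℝ → ℂ} {Y y : ℝ} (hf : IntegrableOn f (Ioi Y)) (hy : Y < y)
    (hc : ContinuousOn f (Ici Y)) :
    HasDerivAt (fun y => ∫ s in Ioi y, f s) (- f y) y := by
  have hca : ContinuousAt f y := hc.continuousAt (Ici_mem_nhds hy)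
  have h1 : HasDerivAt (fun u => ∫ x in Y..u, f x) (f y) y := by
    refine intervalIntegral.integral_hasDerivAt_right ?_ ?_ hca
    · rw [intervalIntegrable_iff_integrableOn_Ioc_of_le hy.le]
      exact hf.mono_set Ioc_subset_Ioi_self
    · exact (hc.mono Ioi_subset_Ici_self).stronglyMeasurableAtFilter isOpen_Ioi y hy
  refine ((h1.const_sub (∫ s in Ioi Y, f s))).congr_of_eventuallyEq ?_
  filter_upwards [Ioi_mem_nhds hy] with u hu
  exact tail_split hf (le_of_lt hu)

lemma norm_exp_le_one {z : ℂ} (h : z.re ≤ 0) : ‖exp z‖ ≤ 1 := by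
  rw [Complex.norm_exp]; exact Real.exp_le_one_iff.2 h

section
variable {Y : ℝ} {Φ g : ℝ → ℂ}

lemma VData.ker_le (h : VData Y Φ g) {y s : ℝ} (hy : Y ≤ y) (hs : y ≤ s) :
    ‖exp (2 * (Φ s - Φ y))‖ ≤ 1 := by
  apply norm_exp_le_one
  have := h.anti y s hy hs
  simp; linarith

lemma VData.ker_int (h : VData Y Φ g) {y : ℝ} (hy : Y ≤ y) {f : ℝ → ℂ}
    (hf : IntegrableOn f (Ioi Y)) :
    IntegrableOn (fun s => exp (2 * (Φ s - Φ y)) * f s) (Ioi y) := by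
  refine Integrable.bdd_mul (c := 1) (hf.mono_set (Ioi_subset_Ioi hy)) ?_ ?_
  · have hc : ContinuousOn (fun s => exp (2 * (Φ s - Φ y))) (Ioi y) := by
      have := h.contΦ.mono (fun s hs => (hy.trans (le_of_lt hs) : Y ≤ s) : Ioi y ⊆ Ici Y)
      fun_prop
    exact hc.aestronglyMeasurable measurableSet_Ioi
  · filter_upwards [self_mem_ae_restrict measurableSet_Ioi] with s hs
    exact h.ker_le hy (le_of_lt hs)

lemma VData.ker_bd (h : VData Y Φ g) {y : ℝ} (hy : Y ≤ y) {f : ℝ → ℂ}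
    (hf : IntegrableOn f (Ioi Y)) :
    ‖∫ s in Ioi y, exp (2 * (Φ s - Φ y)) * f s‖ ≤ ∫ s in Ioi y, ‖f s‖ := by
  refine norm_integral_le_of_norm_le (hf.mono_set (Ioi_subset_Ioi hy)).norm ?_
  filter_upwards [self_mem_ae_restrict measurableSet_Ioi] with s hs
  rw [norm_mul]
  exact mul_le_of_le_one_left (norm_nonneg _) (h.ker_le hy (le_of_lt hs))

lemma VData.ker_bd2 (h : VData Y Φ g) {y : ℝ} (hy : Y ≤ y) {f : ℝ → ℂ}
    (hf : IntegrableOn f (Ioi Y)) :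
    ‖∫ s in Ioi y, (exp (2 * (Φ s - Φ y)) - 1) * f s‖ ≤ 2 * ∫ s in Ioi y, ‖f s‖ := by
  rw [← integral_const_mul]
  refine norm_integral_le_of_norm_le ((hf.mono_set (Ioi_subset_Ioi hy)).norm.const_mul 2) ?_
  filter_upwards [self_mem_ae_restrict measurableSet_Ioi] with s hs
  rw [norm_mul]
  gcongr
  refine (norm_sub_le _ _).trans ?_
  have := h.ker_le hy (le_of_lt hs)
  simp only [norm_one]; linarith

lemma VData.gm_int (h : VData Y Φ g) {m : ℝ → ℂ} {K : ℝ} (hm : ContinuousOn m (Ici Y))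
    (hK : ∀ y, Y ≤ y → ‖m y‖ ≤ K) : IntegrableOn (fun s => g s * m s) (Ioi Y) := by
  have e : (fun s => g s * m s) = fun s => m s * g s := by ext s; ring
  rw [e]
  refine Integrable.bdd_mul (c := K) h.int ?_ ?_
  · exact (hm.mono Ioi_subset_Ici_self).aestronglyMeasurable measurableSet_Ioi
  · filter_upwards [self_mem_ae_restrict measurableSet_Ioi] with s hs
    exact hK s (le_of_lt hs)

lemma VData.gm_bd (h : VData Y Φ g) {y : ℝ} (hy : Y ≤ y) {m : ℝ → ℂ} {K : ℝ}
    (hm : ContinuousOn m (Ici Y))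
    (hK : ∀ y, Y ≤ y → ‖m y‖ ≤ K) : ∫ s in Ioi y, ‖g s * m s‖ ≤ K * ∫ s in Ioi y, ‖g s‖ := by
  rw [← integral_const_mul]
  refine setIntegral_mono_on ((h.gm_int hm hK).mono_set (Ioi_subset_Ioi hy)).norm
    ((h.int.mono_set (Ioi_subset_Ioi hy)).norm.const_mul K) measurableSet_Ioi ?_
  intro s hs
  rw [norm_mul, mul_comm]
  have := hK s (hy.trans (le_of_lt hs))
  gcongr

lemma VData.tail_le (h : VData Y Φ g) {y : ℝ} (hy : Y ≤ y) :
    ∫ s in Ioi y, ‖g s‖ ≤ ∫ s in Ioi Y, ‖g s‖ :=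
  setIntegral_mono_set h.int.norm (Eventually.of_forall fun _ => norm_nonneg _)
    (Ioi_subset_Ioi hy).eventuallyLE

lemma VData.split (h : VData Y Φ g) {y : ℝ} (hy : Y ≤ y) {f : ℝ → ℂ}
    (hf : IntegrableOn f (Ioi Y)) :
    ∫ s in Ioi y, (exp (2 * (Φ s - Φ y)) - 1) * f s
      = (∫ s in Ioi y, exp (2 * (Φ s - Φ y)) * f s) - ∫ s in Ioi y, f s := by
  rw [← integral_sub (h.ker_int hy hf) (hf.mono_set (Ioi_subset_Ioi hy))]
  congr 1; ext s; ring

lemma VData.ker_eq (Φ : ℝ → ℂ) {Y y : ℝ} {f : ℝ → ℂ} :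
    ∫ s in Ioi y, exp (2 * (Φ s - Φ y)) * f s
      = exp (-2 * (Φ y - Φ Y)) * ∫ s in Ioi y, exp (2 * (Φ s - Φ Y)) * f s := by
  rw [← integral_const_mul]
  congr 1; ext s
  rw [← mul_assoc, ← Complex.exp_add]
  congr 2; ring

lemma VData.ker_cont (h : VData Y Φ g) {f : ℝ → ℂ} (hf : IntegrableOn f (Ioi Y)) :
    Continuous fun y => ∫ s in Ioi (max y Y), (exp (2 * (Φ s - Φ (max y Y))) - 1) * f s := by
  have e : ∀ y, ∫ s in Ioi (max y Y), (exp (2 * (Φ s - Φ (max y Y))) - 1) * f s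
      = exp (-2 * (Φ (max y Y) - Φ Y)) * (∫ s in Ioi (max y Y), exp (2 * (Φ s - Φ Y)) * f s)
        - ∫ s in Ioi (max y Y), f s := by
    intro y
    rw [h.split (le_max_right y Y) hf, VData.ker_eq Φ (Y := Y)]
  simp_rw [e]
  have h1 := tail_cont (h.ker_int le_rfl hf)
  have h2 := tail_cont hf
  have h3 : Continuous fun y => Φ (max y Y) :=
    h.contΦ.comp_continuous (continuous_id.max continuous_const) (fun y => le_max_right y Y)
  exact (Continuous.mul
    (Complex.continuous_exp.comp (continuous_const.mul (h3.sub continuous_const))) h1).sub h2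

theorem VData.exists_sol (h : VData Y Φ g) : ∃ m B, VSol Y Φ g m B := by
  classical
  have bint : ∀ m : BoundedContinuousFunction ℝ ℂ, IntegrableOn (fun s => g s * m s) (Ioi Y) :=
    fun m => h.gm_int m.continuous.continuousOn (fun y _ => m.norm_coe_le_norm y)
  let T : BoundedContinuousFunction ℝ ℂ → BoundedContinuousFunction ℝ ℂ := fun m =>
    BoundedContinuousFunction.ofNormedAddCommGroup
      (fun y => 1 + ∫ s in Ioi (max y Y), (exp (2 * (Φ s - Φ (max y Y))) - 1) * (g s * m s))
      (continuous_const.add (h.ker_cont (bint m)))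
      (1 + 2 * (‖m‖ * (1 / 4))) (by
        intro y
        refine (norm_add_le _ _).trans ?_
        rw [norm_one]
        have h1 := h.ker_bd2 (le_max_right y Y) (bint m)
        have h2 := h.gm_bd (le_max_right y Y) m.continuous.continuousOn
          (fun y _ => m.norm_coe_le_norm y)
        have h3 := (h.tail_le (le_max_right y Y)).trans h.small
        have h4 : ‖m‖ * ∫ s in Ioi (max y Y), ‖g s‖ ≤ ‖m‖ * (1 / 4) := by gcongr
        linarith)
  have hT : ∀ m y, T m y
      = 1 + ∫ s in Ioi (max y Y), (exp (2 * (Φ s - Φ (max y Y))) - 1) * (g s * m s) := fun m y => rfl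
  have hcon : ContractingWith (1 / 2 : NNReal) T := by
    refine ⟨by rw [div_lt_one] <;> norm_num, ?_⟩
    refine LipschitzWith.of_dist_le_mul fun m1 m2 => ?_
    have hd : (0 : ℝ) ≤ ((1 / 2 : NNReal) : ℝ) * dist m1 m2 := by positivity
    rw [BoundedContinuousFunction.dist_le hd]
    intro y
    have hY := le_max_right y Y
    rw [dist_eq_norm, hT, hT, add_sub_add_left_eq_sub, h.split hY (bint m1), h.split hY (bint m2)]
    have e := h.split hY (bint (m1 - m2))
    have e1 : ∫ s in Ioi (max y Y), exp (2 * (Φ s - Φ (max y Y))) * (g s * (m1 - m2) s)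
      = (∫ s in Ioi (max y Y), exp (2 * (Φ s - Φ (max y Y))) * (g s * m1 s))
       - ∫ s in Ioi (max y Y), exp (2 * (Φ s - Φ (max y Y))) * (g s * m2 s) := by
      rw [← integral_sub (h.ker_int hY (bint m1)) (h.ker_int hY (bint m2))]
      congr 1; ext s; simp; ring
    have e2 : ∫ s in Ioi (max y Y), (g s * (m1 - m2) s)
      = (∫ s in Ioi (max y Y), (g s * m1 s)) - ∫ s in Ioi (max y Y), (g s * m2 s) := by
      rw [← integral_sub ((bint m1).mono_set (Ioi_subset_Ioi hY))
        ((bint m2).mono_set (Ioi_subset_Ioi hY))]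
      congr 1; ext s; simp; ring
    rw [e1, e2] at e
    have h1 := h.ker_bd2 hY (bint (m1 - m2))
    have h2 := h.gm_bd hY (m1 - m2).continuous.continuousOn
          (fun y _ => (m1 - m2).norm_coe_le_norm y)
    have h3 := (h.tail_le hY).trans h.small
    have h4 : ‖m1 - m2‖ * ∫ s in Ioi (max y Y), ‖g s‖ ≤ ‖m1 - m2‖ * (1 / 4) := by gcongr
    rw [e] at h1
    rw [dist_eq_norm]
    have : ((1 / 2 : NNReal) : ℝ) = 1 / 2 := by simp
    rw [this]
    refine le_trans (le_of_eq ?_) (h1.trans (by linarith))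
    congr 1; ring
  set m := ContractingWith.fixedPoint T hcon with hm
  have hfix : T m = m := hcon.fixedPoint_isFixedPt
  have hbd : ‖m‖ ≤ 2 := by
    have : ‖m‖ ≤ 1 + 2 * (‖m‖ * (1 / 4)) := by
      conv_lhs => rw [← hfix]
      exact BoundedContinuousFunction.norm_ofNormedAddCommGroup_le _ (by positivity) _
    linarith
  refine ⟨m, fun y => ∫ s in Ioi y, exp (2 * (Φ s - Φ y)) * (g s * m s),
    m.continuous.continuousOn, fun y _ => (m.norm_coe_le_norm y).trans hbd, ?_, fun y _ => rfl⟩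
  intro y hy
  have := hT m y
  rw [hfix, max_eq_left hy] at this
  exact this

variable {m B : ℝ → ℂ}

lemma VSol.int (h : VData Y Φ g) (S : VSol Y Φ g m B) :
    IntegrableOn (fun s => g s * m s) (Ioi Y) := h.gm_int S.cont S.bd

lemma VSol.m_sub_one (h : VData Y Φ g) (S : VSol Y Φ g m B) {y : ℝ} (hy : Y ≤ y) :
    ‖m y - 1‖ ≤ 4 * ∫ s in Ioi y, ‖g s‖ := by
  rw [S.eqm y hy, add_sub_cancel_left]
  have h1 := h.ker_bd2 hy (S.int h)
  have h2 := h.gm_bd hy S.cont S.bd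
  linarith

lemma VSol.B_le (h : VData Y Φ g) (S : VSol Y Φ g m B) {y : ℝ} (hy : Y ≤ y) :
    ‖B y‖ ≤ 2 * ∫ s in Ioi y, ‖g s‖ := by
  rw [S.eqB y hy]
  exact (h.ker_bd hy (S.int h)).trans (h.gm_bd hy S.cont S.bd)

lemma VSol.B_hasDerivAt (h : VData Y Φ g) (S : VSol Y Φ g m B) {y : ℝ} (hy : Y < y) {q : ℂ}
    (hΦ : HasDerivAt Φ q y) : HasDerivAt B (-2 * q * B y - g y * m y) y := by
  have hc : ContinuousOn (fun s => exp (2 * (Φ s - Φ Y)) * (g s * m s)) (Ici Y) := by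
    have := h.contΦ
    have := h.contg
    have := S.cont
    fun_prop
  have h1 := tail_hasDerivAt (h.ker_int le_rfl (S.int h)) hy hc
  have h2 : HasDerivAt (fun y => exp (-2 * (Φ y - Φ Y)))
      (exp (-2 * (Φ y - Φ Y)) * (-2 * q)) y := ((hΦ.sub_const _).const_mul (-2)).cexp
  refine ((h2.mul h1).congr_of_eventuallyEq ?_).congr_deriv ?_
  · filter_upwards [Ioi_mem_nhds hy] with u hu
    rw [S.eqB u (le_of_lt hu), VData.ker_eq Φ (Y := Y)]; rfl
  · rw [S.eqB y hy.le, VData.ker_eq Φ (Y := Y)]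
    have : exp (-2 * (Φ y - Φ Y)) * exp (2 * (Φ y - Φ Y)) = 1 := by
      rw [← Complex.exp_add]; simp
    linear_combination (-(g y * m y)) * this

lemma VSol.m_hasDerivAt (h : VData Y Φ g) (S : VSol Y Φ g m B) {y : ℝ} (hy : Y < y) {q : ℂ}
    (hΦ : HasDerivAt Φ q y) : HasDerivAt m (-2 * q * B y) y := by
  have hc : ContinuousOn (fun s => g s * m s) (Ici Y) := h.contg.mul S.cont
  have h1 := tail_hasDerivAt (S.int h) hy hc
  refine ((((S.B_hasDerivAt h hy hΦ).const_add 1).sub h1).congr_of_eventuallyEq ?_).congr_deriv ?_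
  · filter_upwards [Ioi_mem_nhds hy] with u hu
    simp only [Pi.sub_apply]
    rw [S.eqm u (le_of_lt hu), h.split (le_of_lt hu) (S.int h), S.eqB u (le_of_lt hu)]; ring
  · ring

/-- stability in the coefficient `g` -/
lemma VSol.diff {g' m' B' : ℝ → ℂ} (h : VData Y Φ g) (S : VSol Y Φ g m B)
    (h' : VData Y Φ g') (S' : VSol Y Φ g' m' B') {y : ℝ} (hy : Y ≤ y) :
    ‖m y - m' y‖ ≤ 8 * (∫ s in Ioi Y, ‖g s - g' s‖) ∧
    ‖B y - B' y‖ ≤ 4 * (∫ s in Ioi Y, ‖g s - g' s‖) := by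
  set D := ∫ s in Ioi Y, ‖g s - g' s‖ with hD
  have i1 := S.int h
  have i2 := S'.int h'
  have i3 : IntegrableOn (fun s => g s * m s - g' s * m' s) (Ioi Y) := i1.sub i2
  have id : IntegrableOn (fun s => g s - g' s) (Ioi Y) := h.int.sub h'.int
  have hD0 : 0 ≤ D := integral_nonneg fun _ => norm_nonneg _
  have key : ∀ K : ℝ, (∀ y, Y ≤ y → ‖m y - m' y‖ ≤ K) → ∀ y, Y ≤ y →
      ∫ s in Ioi y, ‖g s * m s - g' s * m' s‖ ≤ K / 4 + 2 * D := by
    intro K hK y hy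
    have hK0 : 0 ≤ K := (norm_nonneg _).trans (hK Y le_rfl)
    have a1 : ∫ s in Ioi y, ‖g s * m s - g' s * m' s‖
        ≤ ∫ s in Ioi Y, ‖g s * m s - g' s * m' s‖ :=
      setIntegral_mono_set i3.norm (Eventually.of_forall fun _ => norm_nonneg _)
        (Ioi_subset_Ioi hy).eventuallyLE
    have a2 : ∫ s in Ioi Y, ‖g s * m s - g' s * m' s‖
        ≤ ∫ s in Ioi Y, (K * ‖g s‖ + 2 * ‖g s - g' s‖) := by
      refine setIntegral_mono_on i3.norm ((h.int.norm.const_mul K).add (id.norm.const_mul 2))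
        measurableSet_Ioi ?_
      intro s hs
      have hs' : Y ≤ s := le_of_lt hs
      have : g s * m s - g' s * m' s = (m s - m' s) * g s + m' s * (g s - g' s) := by ring
      rw [this]
      refine (norm_add_le _ _).trans ?_
      rw [norm_mul, norm_mul]
      have := hK s hs'
      have := S'.bd s hs'
      gcongr
    rw [integral_add (h.int.norm.const_mul K) (id.norm.const_mul 2), integral_const_mul,
      integral_const_mul] at a2
    have := mul_le_mul_of_nonneg_left h.small hK0
    linarith
  have keym : ∀ y, Y ≤ y → m y - m' y
      = ∫ s in Ioi y, (exp (2 * (Φ s - Φ y)) - 1) * (g s * m s - g' s * m' s) := by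
    intro y hy
    rw [S.eqm y hy, S'.eqm y hy, h.split hy i1, h.split hy i2, h.split hy i3]
    have e1 : ∫ s in Ioi y, exp (2 * (Φ s - Φ y)) * (g s * m s - g' s * m' s)
      = (∫ s in Ioi y, exp (2 * (Φ s - Φ y)) * (g s * m s))
       - ∫ s in Ioi y, exp (2 * (Φ s - Φ y)) * (g' s * m' s) := by
      rw [← integral_sub (h.ker_int hy i1) (h.ker_int hy i2)]
      congr 1; ext s; ring
    have e2 := integral_sub (i1.mono_set (Ioi_subset_Ioi hy)) (i2.mono_set (Ioi_subset_Ioi hy))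
    rw [e1, e2]; ring
  have keyB : ∀ y, Y ≤ y → B y - B' y
      = ∫ s in Ioi y, exp (2 * (Φ s - Φ y)) * (g s * m s - g' s * m' s) := by
    intro y hy
    rw [S.eqB y hy, S'.eqB y hy, ← integral_sub (h.ker_int hy i1) (h.ker_int hy i2)]
    congr 1; ext s; ring
  have step : ∀ K : ℝ, (∀ y, Y ≤ y → ‖m y - m' y‖ ≤ K) →
      (∀ y, Y ≤ y → ‖m y - m' y‖ ≤ K / 2 + 4 * D) := by
    intro K hK y hy
    rw [keym y hy]
    have := h.ker_bd2 hy i3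
    have := key K hK y hy
    linarith
  have iter : ∀ n : ℕ, ∀ y, Y ≤ y → ‖m y - m' y‖ ≤ 4 * (1 / 2) ^ n + 8 * D := by
    intro n
    induction n with
    | zero =>
      intro y hy
      have := norm_sub_le (m y) (m' y)
      have := S.bd y hy
      have := S'.bd y hy
      simp; linarith
    | succ n ih =>
      intro y hy
      have := step _ ih y hy
      rw [pow_succ]; linarith
  have fin : ∀ y, Y ≤ y → ‖m y - m' y‖ ≤ 8 * D := by
    intro y hy
    have ht : Tendsto (fun n : ℕ => 4 * (1 / 2 : ℝ) ^ n + 8 * D) atTop (𝓝 (4 * 0 + 8 * D)) :=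
      ((tendsto_pow_atTop_nhds_zero_of_lt_one (by norm_num) (by norm_num)).const_mul 4).add_const _
    have := ge_of_tendsto' ht (fun n => iter n y hy)
    linarith
  refine ⟨fin y hy, ?_⟩
  rw [keyB y hy]
  have := h.ker_bd hy i3
  have := key _ fin y hy
  linarith

end
end Cub

namespace Cub
open MeasureTheory Set Filter Topology

/-- Liouville-Green ansatz -/
lemma lg_hasDerivAt {Φ ρ ρ1 m B : ℝ → ℂ} {y : ℝ} {κ q g ρ2 V : ℂ} (hρ0 : ρ y ≠ 0)
    (hq : q = κ / ρ y ^ 2) (hΦ : HasDerivAt Φ q y) (hρ : HasDerivAt ρ (ρ1 y) y)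
    (hρ1 : HasDerivAt ρ1 ρ2 y) (hm : HasDerivAt m (-2 * q * B y) y)
    (hB : HasDerivAt B (-2 * q * B y - g * m y) y)
    (hg : 2 * q * g * ρ y = (V - q ^ 2) * ρ y - ρ2) :
    HasDerivAt (fun y => ρ y * exp (Φ y) * m y)
      (exp (Φ y) * (ρ1 y * m y + κ / ρ y * (m y - 2 * B y))) y ∧
    HasDerivAt (fun y => exp (Φ y) * (ρ1 y * m y + κ / ρ y * (m y - 2 * B y)))
      (V * (ρ y * exp (Φ y) * m y)) y := by
  have hκ : κ = q * ρ y ^ 2 := by rw [hq]; field_simp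
  constructor
  · refine ((hρ.mul hΦ.cexp).mul hm).congr_deriv ?_
    simp only [Pi.mul_apply]
    rw [hκ]; field_simp; ring
  · have hinv : HasDerivAt (fun y => κ / ρ y) (-κ * ρ1 y / ρ y ^ 2) y := by
      refine (hρ.inv hρ0 |>.const_mul κ).congr_deriv ?_
      ring
    refine (hΦ.cexp.mul ((hρ1.mul hm).add (hinv.mul (hm.sub (hB.const_mul 2))))).congr_deriv ?_
    simp only [Pi.mul_apply, Pi.add_apply, Pi.sub_apply]
    have : V * ρ y = 2 * q * g * ρ y + q ^ 2 * ρ y + ρ2 := by rw [hg]; ring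
    rw [show V * (ρ y * exp (Φ y) * m y) = (V * ρ y) * (exp (Φ y) * m y) by ring, this, hκ]
    field_simp
    ring

section
variable {U U1 u u1 W : ℝ → ℂ} {Y : ℝ}

lemma const_of_deriv {f : ℝ → ℂ} (h : ∀ y, Y < y → HasDerivAt f 0 y) {s t : ℝ} (hs : Y < s)
    (ht : Y < t) : f s = f t := by
  have h1 : DifferentiableOn ℝ f (Ioi Y) :=
    fun y hy => (h y hy).differentiableAt.differentiableWithinAt
  refine isOpen_Ioi.is_const_of_deriv_eq_zero isPreconnected_Ioi h1 ?_ hs ht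
  intro y hy
  exact (h y hy).deriv

lemma wr_const (hU : ∀ y, Y < y → HasDerivAt U (U1 y) y)
    (hU1 : ∀ y, Y < y → HasDerivAt U1 (W y * U y) y)
    (hu : ∀ y, Y < y → HasDerivAt u (u1 y) y)
    (hu1 : ∀ y, Y < y → HasDerivAt u1 (W y * u y) y) {s t : ℝ} (hs : Y < s) (ht : Y < t) :
    U s * u1 s - U1 s * u s = U t * u1 t - U1 t * u t := by
  refine const_of_deriv (f := fun y => U y * u1 y - U1 y * u y) (Y := Y) ?_ hs ht
  intro y hy
  refine (((hU y hy).mul (hu1 y hy)).sub ((hU1 y hy).mul (hu y hy))).congr_deriv ?_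
  ring

lemma wr_prop (hU : ∀ y, Y < y → HasDerivAt U (U1 y) y)
    (hu : ∀ y, Y < y → HasDerivAt u (u1 y) y)
    (h0 : ∀ y, Y < y → u y ≠ 0) (hw : ∀ y, Y < y → U y * u1 y - U1 y * u y = 0)
    {y0 : ℝ} (hy0 : Y < y0) {y : ℝ} (hy : Y < y) : U y = (U y0 / u y0) * u y := by
  have : U y / u y = U y0 / u y0 := by
    refine const_of_deriv (f := fun y => U y / u y) (Y := Y) ?_ hy hy0
    intro y hy
    refine ((hU y hy).div (hu y hy) (h0 y hy)).congr_deriv ?_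
    rw [div_eq_zero_iff]; left
    linear_combination - hw y hy
  rw [← this, div_mul_cancel₀ _ (h0 y hy)]

lemma wr_zero_of_tendsto (hU : ∀ y, Y < y → HasDerivAt U (U1 y) y)
    (hU1 : ∀ y, Y < y → HasDerivAt U1 (W y * U y) y)
    (hu : ∀ y, Y < y → HasDerivAt u (u1 y) y)
    (hu1 : ∀ y, Y < y → HasDerivAt u1 (W y * u y) y)
    (ht : Tendsto (fun y => U y * u1 y - U1 y * u y) atTop (𝓝 0)) {y : ℝ} (hy : Y < y) :
    U y * u1 y - U1 y * u y = 0 := by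
  have h1 : Tendsto (fun _ : ℝ => U y * u1 y - U1 y * u y) atTop (𝓝 0) := by
    refine ht.congr' ?_
    filter_upwards [Ioi_mem_atTop Y] with s hs
    exact wr_const hU hU1 hu hu1 hs hy
  exact tendsto_nhds_unique tendsto_const_nhds h1

end

/-- general entire solution -/
noncomputable def ent (b c : ℝ) (p q : ℂ) (x : ℂ) : ℂ := p * sol b c 1 0 x + q * sol b c 0 1 x
noncomputable def ent1 (b c : ℝ) (p q : ℂ) (x : ℂ) : ℂ := p * sol' b c 1 0 x + q * sol' b c 0 1 x

lemma ent_hasDerivAt (b c : ℝ) (p q x : ℂ) : HasDerivAt (ent b c p q) (ent1 b c p q x) x :=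
  ((sol_hasDerivAt b c 1 0 x).const_mul p).add ((sol_hasDerivAt b c 0 1 x).const_mul q)

lemma ent1_hasDerivAt (b c : ℝ) (p q x : ℂ) :
    HasDerivAt (ent1 b c p q) ((x ^ 3 - b * x + c) * ent b c p q x) x := by
  refine (((sol'_hasDerivAt b c 1 0 x).const_mul p).add
    ((sol'_hasDerivAt b c 0 1 x).const_mul q)).congr_deriv ?_
  unfold ent; ring

lemma ent_zero (b c : ℝ) (p q : ℂ) : ent b c p q 0 = p := by
  simp [ent, sol_zero]

lemma ent1_zero (b c : ℝ) (p q : ℂ) : ent1 b c p q 0 = q := by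
  simp [ent1, sol'_zero]

lemma sol_wr (b c : ℝ) (x : ℂ) :
    sol b c 1 0 x * sol' b c 0 1 x - sol' b c 1 0 x * sol b c 0 1 x = 1 := by
  have h : ∀ x, HasDerivAt
      (fun x => sol b c 1 0 x * sol' b c 0 1 x - sol' b c 1 0 x * sol b c 0 1 x) 0 x := by
    intro x
    refine (((sol_hasDerivAt b c 1 0 x).mul (sol'_hasDerivAt b c 0 1 x)).sub
      ((sol'_hasDerivAt b c 1 0 x).mul (sol_hasDerivAt b c 0 1 x))).congr_deriv ?_
    ring
  have := is_const_of_deriv_eq_zero (fun x => (h x).differentiableAt) (fun x => (h x).deriv) x 0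
  rw [this]; simp [sol_zero, sol'_zero]

lemma ent_of_data (b c : ℝ) (x P Q : ℂ) :
    ent b c (P * sol' b c 0 1 x - Q * sol b c 0 1 x) (Q * sol b c 1 0 x - P * sol' b c 1 0 x) x = P ∧
    ent1 b c (P * sol' b c 0 1 x - Q * sol b c 0 1 x) (Q * sol b c 1 0 x - P * sol' b c 1 0 x) x = Q
    := by
  have h := sol_wr b c x
  unfold ent ent1
  constructor
  · linear_combination P * h
  · linear_combination Q * h

/-- restriction of an entire solution to a vertical line -/
lemma ent_vert (b c : ℝ) (p q : ℂ) (r y : ℝ) :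
    HasDerivAt (fun y : ℝ => ent b c p q (r + y * I)) (I * ent1 b c p q (r + y * I)) y ∧
    HasDerivAt (fun y : ℝ => I * ent1 b c p q (r + y * I))
      (-((r + y * I : ℂ) ^ 3 - b * (r + y * I) + c) * ent b c p q (r + y * I)) y := by
  have hl : HasDerivAt (fun y : ℝ => (r + y * I : ℂ)) I y := by
    simpa using ((Complex.ofRealCLM.hasDerivAt (x := y)).mul_const I).const_add (r : ℂ)
  constructor
  · refine ((ent_hasDerivAt b c p q (r + y * I)).comp y hl).congr_deriv ?_
    ring
  · refine (((ent1_hasDerivAt b c p q (r + y * I)).comp y hl).const_mul I).congr_deriv ?_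
    linear_combination (((r + y * I : ℂ) ^ 3 - b * (r + y * I) + c) * ent b c p q (r + y * I)) * I_mul_I

lemma ent_horiz (b c : ℝ) (p q : ℂ) (y s : ℝ) :
    HasDerivAt (fun s : ℝ => ent b c p q (s + y * I)) (ent1 b c p q (s + y * I)) s ∧
    HasDerivAt (fun s : ℝ => ent1 b c p q (s + y * I))
      (((s + y * I : ℂ) ^ 3 - b * (s + y * I) + c) * ent b c p q (s + y * I)) s := by
  have hl : HasDerivAt (fun s : ℝ => (s + y * I : ℂ)) 1 s := by
    simpa using (Complex.ofRealCLM.hasDerivAt (x := s)).add_const (y * I : ℂ)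
  constructor
  · refine ((ent_hasDerivAt b c p q (s + y * I)).comp s hl).congr_deriv ?_
    ring
  · refine (((ent1_hasDerivAt b c p q (s + y * I)).comp s hl)).congr_deriv ?_
    ring

end Cub

set_option linter.unusedVariables false
namespace Cub
open MeasureTheory Set Filter Topology

/-- principal fourth root -/
noncomputable def hh (x : ℂ) : ℂ := exp (log x / 4)

lemma hh_ne (x : ℂ) : hh x ≠ 0 := Complex.exp_ne_zero _

lemma hh_pow {x : ℂ} (hx : x ≠ 0) : hh x ^ 4 = x := by
  unfold hh
  rw [← Complex.exp_nat_mul]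
  push_cast
  rw [mul_div_cancel₀ _ (by norm_num : (4 : ℂ) ≠ 0), Complex.exp_log hx]

lemma hh_hasDerivAt {x : ℂ} (hx : x ∈ slitPlane) : HasDerivAt hh (1 / (4 * hh x ^ 3)) x := by
  have h0 := hh_ne x
  refine (((Complex.hasDerivAt_log hx).div_const 4).cexp).congr_deriv ?_
  have h4 := hh_pow (slitPlane_ne_zero hx)
  change hh x * (x⁻¹ / 4) = _
  have hx0 := slitPlane_ne_zero hx
  field_simp
  rw [h4]

lemma hh_norm {x : ℂ} (hx : x ≠ 0) : ‖hh x‖ ^ 4 = ‖x‖ := by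
  rw [← norm_pow, hh_pow hx]

lemma hh_sq_re_im {x : ℂ} (hr : 0 ≤ x.re) (hi : 0 ≤ x.im) (hx : x ≠ 0) :
    0 < (hh x ^ 2).re ∧ 0 ≤ (hh x ^ 2).im := by
  have e : hh x ^ 2 = exp (log x / 2) := by
    unfold hh; rw [← Complex.exp_nat_mul]; congr 1; push_cast; ring
  have him : (log x / 2).im = arg x / 2 := by
    rw [show log x / 2 = log x / ((2 : ℝ) : ℂ) by norm_num, Complex.div_ofReal_im, Complex.log_im]
  have h1 : 0 ≤ arg x := Complex.arg_nonneg_iff.2 hi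
  have h2 : arg x ≤ Real.pi := Complex.arg_le_pi x
  have h3 : |arg x| ≤ Real.pi / 2 := Complex.abs_arg_le_pi_div_two_iff.2 hr
  have h4 := (abs_le.1 h3).2
  have hp := Real.pi_pos
  rw [e, Complex.exp_re, Complex.exp_im, him]
  constructor
  · exact mul_pos (Real.exp_pos _) (Real.cos_pos_of_mem_Ioo ⟨by linarith, by linarith⟩)
  · exact mul_nonneg (Real.exp_pos _).le (Real.sin_nonneg_of_nonneg_of_le_pi (by linarith) (by linarith))

noncomputable def EP (β : ℝ) (x : ℂ) : ℂ :=
  2 / 5 * hh x ^ 10 - 4 * β * hh x ^ 2 - 2 / 3 * β ^ 2 * (hh x ^ 6)⁻¹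
noncomputable def RR (β : ℝ) (x : ℂ) : ℂ := hh x ^ 5 / (hh x ^ 8 - β)
noncomputable def RR1 (β : ℝ) (x : ℂ) : ℂ := hh x * (-3 * hh x ^ 8 - 5 * β) / (4 * (hh x ^ 8 - β) ^ 2)
noncomputable def RR2 (β : ℝ) (x : ℂ) : ℂ :=
  (21 * hh x ^ 16 + 102 * β * hh x ^ 8 + 5 * β ^ 2) / (16 * hh x ^ 3 * (hh x ^ 8 - β) ^ 3)

section
variable {β : ℝ} {x : ℂ}

lemma EP_hasDerivAt (hx : x ∈ slitPlane) (hD : hh x ^ 8 - β ≠ 0) :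
    HasDerivAt (EP β) (1 / RR β x ^ 2) x := by
  have h0 := hh_ne x
  have h := hh_hasDerivAt hx
  refine ((((h.pow 10).const_mul (2 / 5)).sub ((h.pow 2).const_mul (4 * (β : ℂ)))).sub
    (((h.pow 6).inv (pow_ne_zero 6 h0)).const_mul (2 / 3 * (β : ℂ) ^ 2))).congr_deriv ?_
  unfold RR
  simp only [Pi.pow_apply]
  field_simp
  push_cast
  ring

lemma RR_ne (hD : hh x ^ 8 - β ≠ 0) : RR β x ≠ 0 :=
  div_ne_zero (pow_ne_zero _ (hh_ne x)) hD

lemma RR_hasDerivAt (hx : x ∈ slitPlane) (hD : hh x ^ 8 - β ≠ 0) :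
    HasDerivAt (RR β) (RR1 β x) x := by
  have h0 := hh_ne x
  have h := hh_hasDerivAt hx
  refine ((h.pow 5).div ((h.pow 8).sub_const (β : ℂ)) hD).congr_deriv ?_
  unfold RR1
  simp only [Pi.pow_apply]
  field_simp
  push_cast
  ring

lemma RR1_hasDerivAt (hx : x ∈ slitPlane) (hD : hh x ^ 8 - β ≠ 0) :
    HasDerivAt (RR1 β) (RR2 β x) x := by
  have h0 := hh_ne x
  have h := hh_hasDerivAt hx
  refine ((h.mul (((h.pow 8).const_mul (-3)).sub_const (5 * (β : ℂ)))).div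
    ((((h.pow 8).sub_const (β : ℂ)).pow 2).const_mul 4)
      (mul_ne_zero (by norm_num) (pow_ne_zero 2 hD))).congr_deriv ?_
  unfold RR2
  simp only [Pi.pow_apply, Pi.mul_apply]
  field_simp
  push_cast
  ring

/-- the WKB error function -/
noncomputable def fE (β c : ℝ) (x : ℂ) : ℂ :=
  c - 6 * β ^ 2 / x + 4 * β ^ 3 / x ^ 3 - β ^ 4 / x ^ 5
    - (21 * x ^ 4 + 102 * β * x ^ 2 + 5 * β ^ 2) / (16 * x ^ 2 * (x ^ 2 - β) ^ 2)

lemma fE_eq (c : ℝ) (hx : x ≠ 0) (hD : hh x ^ 8 - β ≠ 0) :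
    fE β c x * RR β x = (x ^ 3 - 4 * β * x + c - 1 / RR β x ^ 4) * RR β x - RR2 β x := by
  have h0 := hh_ne x
  have h4 := hh_pow hx
  unfold fE RR RR2
  generalize hh x = h at *
  subst h4
  have e : (h ^ 4) ^ 2 - (β : ℂ) = h ^ 8 - β := by ring
  rw [e]
  field_simp
  ring

structure Quad (β : ℝ) (x : ℂ) : Prop where
  hβ : 0 ≤ β
  re : 0 ≤ x.re
  im : 0 ≤ x.im
  big : 200 * (1 + β) ^ 2 ≤ x.re + x.im

lemma Quad.norm_ge (h : Quad β x) : x.re + x.im ≤ 2 * ‖x‖ := by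
  have := Complex.re_le_norm x
  have := Complex.im_le_norm x
  linarith

lemma Quad.norm_ge' (h : Quad β x) : 100 * (1 + β) ^ 2 ≤ ‖x‖ := by
  have := h.norm_ge
  have := h.big
  linarith

lemma Quad.one_le (h : Quad β x) : 1 ≤ ‖x‖ := by
  have := h.norm_ge'
  nlinarith [h.hβ]

lemma Quad.ne (h : Quad β x) : x ≠ 0 := by
  have := h.one_le
  intro h0; rw [h0] at this; norm_num at this

lemma Quad.slit (h : Quad β x) : x ∈ slitPlane := by
  rw [Complex.mem_slitPlane_iff]
  by_contra hc
  push Not at hc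
  have h1 : x.re = 0 := le_antisymm hc.1 h.re
  exact h.ne (Complex.ext h1 hc.2)

lemma Quad.norm_beta (h : Quad β x) : β ≤ ‖x‖ := by
  have := h.norm_ge'
  nlinarith [h.hβ]

lemma Quad.norm_D (h : Quad β x) : 3 / 4 * ‖x‖ ^ 2 ≤ ‖x ^ 2 - β‖ := by
  have h1 := norm_sub_norm_le (x ^ 2) (β : ℂ)
  rw [norm_pow, Complex.norm_real, Real.norm_eq_abs, abs_of_nonneg h.hβ] at h1
  have h2 := h.norm_beta
  have h3 := h.one_le
  have h4 := h.norm_ge'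
  nlinarith [h.hβ]

lemma Quad.norm_D2 (h : Quad β x) : ‖x ^ 2 - β‖ ≤ 5 / 4 * ‖x‖ ^ 2 := by
  have h1 := norm_sub_le (x ^ 2) (β : ℂ)
  rw [norm_pow, Complex.norm_real, Real.norm_eq_abs, abs_of_nonneg h.hβ] at h1
  have h2 := h.norm_beta
  have h3 := h.one_le
  have h4 := h.norm_ge'
  nlinarith [h.hβ]

lemma hh8 (hx : x ≠ 0) : hh x ^ 8 = x ^ 2 := by
  rw [show hh x ^ 8 = (hh x ^ 4) ^ 2 by ring, hh_pow hx]

lemma Quad.hD (h : Quad β x) : hh x ^ 8 - β ≠ 0 := by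
  rw [hh8 h.ne]
  have h1 := h.norm_D
  have h3 := h.one_le
  intro h0
  rw [h0, norm_zero] at h1
  nlinarith

lemma Quad.fE_le (h : Quad β x) {c : ℝ} (hc : 0 ≤ c) : ‖fE β c x‖ ≤ c + 1 := by
  have h1 := h.norm_D
  have h3 := h.one_le
  have h4 := h.norm_ge'
  have hβ := h.hβ
  have hn : 0 < ‖x‖ := by linarith
  have hb2 : 100 * β ^ 2 ≤ ‖x‖ := by nlinarith
  have hb1 : 100 * β ≤ ‖x‖ := by nlinarith
  have hb100 : 100 ≤ ‖x‖ := by nlinarith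
  unfold fE
  have e1 : ‖(6 * β ^ 2 / x : ℂ)‖ ≤ 1 / 10 := by
    rw [norm_div, norm_mul, norm_pow, Complex.norm_real, Real.norm_eq_abs, abs_of_nonneg hβ,
      div_le_iff₀ hn]
    norm_num; linarith
  have e2 : ‖(4 * β ^ 3 / x ^ 3 : ℂ)‖ ≤ 1 / 10 := by
    rw [norm_div, norm_mul, norm_pow, norm_pow, Complex.norm_real, Real.norm_eq_abs,
      abs_of_nonneg hβ, div_le_iff₀ (by positivity)]
    norm_num
    have : (100 * β) ^ 3 ≤ ‖x‖ ^ 3 := by gcongr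
    have h0 : 0 ≤ β ^ 3 := by positivity
    nlinarith
  have e3 : ‖(β ^ 4 / x ^ 5 : ℂ)‖ ≤ 1 / 10 := by
    rw [norm_div, norm_pow, norm_pow, Complex.norm_real, Real.norm_eq_abs,
      abs_of_nonneg hβ, div_le_iff₀ (by positivity)]
    have h5 : (100 * β) ^ 4 ≤ ‖x‖ ^ 4 := by gcongr
    have h6 : ‖x‖ ^ 4 ≤ ‖x‖ ^ 5 := pow_le_pow_right₀ h3 (by norm_num)
    have h0 : 0 ≤ β ^ 4 := by positivity
    nlinarith
  have e4 : ‖((21 * x ^ 4 + 102 * β * x ^ 2 + 5 * β ^ 2) / (16 * x ^ 2 * (x ^ 2 - β) ^ 2) : ℂ)‖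
      ≤ 1 / 10 := by
    rw [norm_div]
    have hden : 9 * ‖x‖ ^ 6 ≤ ‖(16 * x ^ 2 * (x ^ 2 - β) ^ 2 : ℂ)‖ := by
      rw [norm_mul, norm_mul, norm_pow, norm_pow]
      have : (3 / 4 * ‖x‖ ^ 2) ^ 2 ≤ ‖x ^ 2 - (β : ℂ)‖ ^ 2 := by gcongr
      have h16 : ‖(16 : ℂ)‖ = 16 := by norm_num
      rw [h16]
      calc 9 * ‖x‖ ^ 6 = 16 * ‖x‖ ^ 2 * (3 / 4 * ‖x‖ ^ 2) ^ 2 := by ring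
        _ ≤ _ := by gcongr
    rw [div_le_iff₀ (lt_of_lt_of_le (by positivity) hden)]
    have hnum : ‖(21 * x ^ 4 + 102 * β * x ^ 2 + 5 * β ^ 2 : ℂ)‖ ≤ 128 * ‖x‖ ^ 4 := by
      have hb : β ≤ ‖x‖ := h.norm_beta
      refine (norm_add₃_le).trans ?_
      simp only [norm_mul, norm_pow, Complex.norm_real, Real.norm_eq_abs, abs_of_nonneg hβ]
      norm_num
      have q1 : β * ‖x‖ ^ 2 ≤ ‖x‖ ^ 4 := by
        calc β * ‖x‖ ^ 2 ≤ ‖x‖ * ‖x‖ ^ 2 := by gcongr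
          _ = ‖x‖ ^ 3 := by ring
          _ ≤ ‖x‖ ^ 4 := pow_le_pow_right₀ h3 (by norm_num)
      have q2 : β ^ 2 ≤ ‖x‖ ^ 4 := by
        calc β ^ 2 ≤ ‖x‖ ^ 2 := by gcongr
          _ ≤ ‖x‖ ^ 4 := pow_le_pow_right₀ h3 (by norm_num)
      nlinarith
    refine hnum.trans ?_
    have h44 : 0 < ‖x‖ ^ 4 := by positivity
    have : (100 : ℝ) ^ 2 ≤ ‖x‖ ^ 2 := by gcongr
    have : 100 ^ 2 * ‖x‖ ^ 4 ≤ ‖x‖ ^ 6 := by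
      calc 100 ^ 2 * ‖x‖ ^ 4 ≤ ‖x‖ ^ 2 * ‖x‖ ^ 4 := by gcongr
        _ = _ := by ring
    linarith
  have ec : ‖(c : ℂ)‖ = c := by rw [Complex.norm_real, Real.norm_eq_abs, abs_of_nonneg hc]
  refine (norm_sub_le _ _).trans ?_
  have s1 := norm_sub_le ((c : ℂ) - 6 * β ^ 2 / x + 4 * β ^ 3 / x ^ 3) (β ^ 4 / x ^ 5)
  have s2 := norm_add_le ((c : ℂ) - 6 * β ^ 2 / x) (4 * β ^ 3 / x ^ 3)
  have s3 := norm_sub_le (c : ℂ) (6 * β ^ 2 / x)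
  linarith

lemma Quad.hh_one (h : Quad β x) : 1 ≤ ‖hh x‖ := by
  have h1 := hh_norm h.ne
  have h2 := h.one_le
  by_contra hc
  push Not at hc
  have : ‖hh x‖ ^ 4 < 1 := pow_lt_one₀ (norm_nonneg _) hc (by norm_num)
  linarith

lemma Quad.RR_norm (h : Quad β x) : ‖RR β x‖ ^ 2 ≤ 2 / ‖hh x‖ ^ 6 := by
  have h1 := h.norm_D
  have hN := h.hh_one
  have e := hh_norm h.ne
  unfold RR
  rw [hh8 h.ne, norm_div, norm_pow, div_pow]
  have hN0 : 0 < ‖hh x‖ := by linarith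
  have hx0 : 0 < ‖x‖ := by linarith [h.one_le]
  rw [div_le_div_iff₀ (by nlinarith [pow_pos hx0 2, mul_pos (pow_pos hx0 2) (pow_pos hx0 2)])
    (by positivity)]
  have h2 : (3 / 4 * ‖x‖ ^ 2) ^ 2 ≤ ‖x ^ 2 - (β : ℂ)‖ ^ 2 := by gcongr
  rw [← e] at h2
  have : 0 < ‖hh x‖ ^ 16 := by positivity
  calc _ = ‖hh x‖ ^ 16 := by ring
    _ ≤ 2 * (3 / 4 * (‖hh x‖ ^ 4) ^ 2) ^ 2 := by ring_nf; linarith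
    _ ≤ _ := by gcongr

lemma Quad.RR_le (h : Quad β x) : ‖RR β x‖ ≤ 2 := by
  have h1 := h.RR_norm
  have hN := h.hh_one
  have : 1 ≤ ‖hh x‖ ^ 6 := one_le_pow₀ hN
  have : 2 / ‖hh x‖ ^ 6 ≤ 2 := div_le_self (by norm_num) this
  nlinarith [norm_nonneg (RR β x)]

lemma Quad.RR_inv_le (h : Quad β x) : ‖1 / RR β x‖ ≤ 2 * ‖x‖ := by
  have h1 := h.norm_D2
  have hN := h.hh_one
  have e := hh_norm h.ne
  have hN0 : 0 < ‖hh x‖ := by linarith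
  unfold RR
  rw [hh8 h.ne, one_div_div, norm_div, norm_pow, div_le_iff₀ (by positivity)]
  refine h1.trans ?_
  rw [← e]
  have : (‖hh x‖ ^ 8) ≤ ‖hh x‖ ^ 9 := pow_le_pow_right₀ hN (by norm_num)
  nlinarith [pow_pos hN0 9]

lemma Quad.RR1_le (h : Quad β x) : ‖RR1 β x‖ ≤ 8 * ‖x‖ := by
  have h1 := h.norm_D
  have hN := h.hh_one
  have hb : β ≤ ‖x‖ := h.norm_beta
  have h3 := h.one_le
  have e := hh_norm h.ne
  have hN0 : 0 < ‖hh x‖ := by linarith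
  unfold RR1
  rw [hh8 h.ne, norm_div]
  have hden : 9 / 4 * ‖x‖ ^ 4 ≤ ‖(4 * (x ^ 2 - β) ^ 2 : ℂ)‖ := by
    rw [norm_mul, norm_pow]
    have : (3 / 4 * ‖x‖ ^ 2) ^ 2 ≤ ‖x ^ 2 - (β : ℂ)‖ ^ 2 := by gcongr
    have h16 : ‖(4 : ℂ)‖ = 4 := by norm_num
    rw [h16]
    nlinarith
  rw [div_le_iff₀ (lt_of_lt_of_le (by positivity) hden)]
  have hnum : ‖(-3 * x ^ 2 - 5 * β : ℂ)‖ ≤ 8 * ‖x‖ ^ 2 := by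
    refine (norm_sub_le _ _).trans ?_
    simp only [norm_mul, norm_pow, Complex.norm_real, Real.norm_eq_abs, abs_of_nonneg h.hβ]
    norm_num
    nlinarith
  have hh1 : ‖hh x‖ ≤ ‖x‖ := by
    rw [← e]; exact le_self_pow₀ hN (by norm_num)
  rw [norm_mul]
  calc ‖hh x‖ * ‖(-3 * x ^ 2 - 5 * β : ℂ)‖ ≤ ‖x‖ * (8 * ‖x‖ ^ 2) := by gcongr
    _ ≤ 8 * ‖x‖ * ‖x‖ ^ 2 := by ring_nf; exact le_rfl
    _ ≤ 8 * ‖x‖ * (9 / 4 * ‖x‖ ^ 4) := by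
        have : ‖x‖ ^ 2 ≤ ‖x‖ ^ 4 := pow_le_pow_right₀ h3 (by norm_num)
        gcongr; nlinarith [pow_pos (by linarith : 0 < ‖x‖) 4]
    _ ≤ _ := by gcongr

/-- decay of the exponent in the vertical direction -/
lemma Quad.re_q (h : Quad β x) : (I / RR β x ^ 2).re ≤ -(x.im * Real.sqrt x.im / 3) := by
  obtain ⟨hX, hZ⟩ := hh_sq_re_im h.re h.im h.ne
  have h0 := hh_ne x
  have e4 : (hh x ^ 2) ^ 2 = x := by rw [← pow_mul]; exact hh_pow h.ne
  have en : ‖hh x ^ 2‖ ^ 2 = ‖x‖ := by rw [← norm_pow, e4]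
  have eq : I / RR β x ^ 2 = I * (hh x ^ 2) ^ 3 - 2 * β * (I * (hh x ^ 2)⁻¹)
      + β ^ 2 * (I * ((hh x ^ 2)⁻¹) ^ 5) := by
    have hD := h.hD
    unfold RR
    field_simp
    ring
  rw [eq]
  have h1 := h.one_le
  have hb2 := h.norm_ge'
  have hβ := h.hβ
  have hpos := h.re
  have hy := h.im
  generalize hh x ^ 2 = t at *
  obtain ⟨X, Z⟩ := t
  simp only at hX hZ
  have er : X ^ 2 - Z ^ 2 = x.re := by rw [← e4]; simp [pow_two]
  have ei : 2 * X * Z = x.im := by rw [← e4]; simp [pow_two]; ring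
  have eN : X ^ 2 + Z ^ 2 = ‖x‖ := by
    rw [← en, ← Complex.normSq_eq_norm_sq, Complex.normSq_mk]; ring
  have hN0 : 0 < X ^ 2 + Z ^ 2 := by positivity
  have einv : (⟨X, Z⟩ : ℂ)⁻¹ = ⟨X / (X ^ 2 + Z ^ 2), -Z / (X ^ 2 + Z ^ 2)⟩ := by
    apply Complex.ext
    · rw [Complex.inv_re, Complex.normSq_mk]; simp only [pow_two]
    · rw [Complex.inv_im, Complex.normSq_mk]; simp only [pow_two]
  have c1 : (I * (⟨X, Z⟩ : ℂ) ^ 3).re = -(3 * X ^ 2 * Z - Z ^ 3) := by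
    simp [pow_succ]; ring
  have c2 : (2 * (β : ℂ) * (I * (⟨X, Z⟩ : ℂ)⁻¹)).re = 2 * β * (Z / (X ^ 2 + Z ^ 2)) := by
    rw [einv]; simp; ring
  have c3 : ((β : ℂ) ^ 2 * (I * ((⟨X, Z⟩ : ℂ)⁻¹) ^ 5)).re
      = β ^ 2 * ((5 * X ^ 4 * Z - 10 * X ^ 2 * Z ^ 3 + Z ^ 5) / (X ^ 2 + Z ^ 2) ^ 5) := by
    rw [einv]
    have : (β : ℂ) ^ 2 = ((β ^ 2 : ℝ) : ℂ) := by push_cast; rfl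
    rw [this, Complex.re_ofReal_mul]
    congr 1
    rw [div_eq_mul_inv _ ((X ^ 2 + Z ^ 2) ^ 5), div_eq_mul_inv, div_eq_mul_inv, ← inv_pow]
    generalize (X ^ 2 + Z ^ 2)⁻¹ = k
    simp [pow_succ]; ring
  rw [Complex.add_re, Complex.sub_re, c1, c2, c3]
  have p2 : 0 ≤ 2 * β * (Z / (X ^ 2 + Z ^ 2)) := by positivity
  have hX2 : X ^ 2 + Z ^ 2 ≤ 2 * X ^ 2 := by linarith
  have p3 : β ^ 2 * ((5 * X ^ 4 * Z - 10 * X ^ 2 * Z ^ 3 + Z ^ 5) / (X ^ 2 + Z ^ 2) ^ 5)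
      ≤ X ^ 2 * Z := by
    rw [← mul_div_assoc, div_le_iff₀ (by positivity)]
    have k1 : 5 * X ^ 4 * Z - 10 * X ^ 2 * Z ^ 3 + Z ^ 5 ≤ 6 * (X ^ 2 + Z ^ 2) ^ 2 * Z := by
      have : 0 ≤ Z * (X ^ 4 + 22 * X ^ 2 * Z ^ 2 + 5 * Z ^ 4) := by positivity
      nlinarith
    have k2 : 12 * β ^ 2 ≤ (X ^ 2 + Z ^ 2) ^ 4 := by
      rw [eN]
      have : ‖x‖ ≤ ‖x‖ ^ 4 := le_self_pow₀ h1 (by norm_num)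
      nlinarith
    calc β ^ 2 * (5 * X ^ 4 * Z - 10 * X ^ 2 * Z ^ 3 + Z ^ 5)
        ≤ β ^ 2 * (6 * (X ^ 2 + Z ^ 2) ^ 2 * Z) := by gcongr
      _ = (12 * β ^ 2) * ((X ^ 2 + Z ^ 2) ^ 2 * Z / 2) := by ring
      _ ≤ (12 * β ^ 2) * ((X ^ 2 + Z ^ 2) ^ 1 * (2 * X ^ 2) * Z / 2) := by
          rw [pow_two (X ^ 2 + Z ^ 2), pow_one]; gcongr
      _ ≤ (X ^ 2 + Z ^ 2) ^ 4 * ((X ^ 2 + Z ^ 2) ^ 1 * (2 * X ^ 2) * Z / 2) := by gcongr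
      _ = _ := by ring
  have k3 : Z ^ 3 ≤ X ^ 2 * Z := by nlinarith
  have k4 : Real.sqrt x.im * (2 / 3) ≤ X := by
    have h5 : Real.sqrt x.im ^ 2 = x.im := Real.sq_sqrt hy
    have : x.im ≤ 2 * X ^ 2 := by nlinarith [sq_nonneg (X - Z)]
    have h6 := Real.sqrt_nonneg x.im
    nlinarith
  have : x.im * Real.sqrt x.im / 3 ≤ X ^ 2 * Z := by
    have : X ^ 2 * Z = x.im * X / 2 := by rw [← ei]; ring
    rw [this]
    nlinarith
  linarith

end
end Cub

set_option linter.unusedVariables false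
namespace Cub
open MeasureTheory Set Filter Topology

noncomputable def gE (β c r y : ℝ) : ℂ := I * fE β c (r + y * I) * RR β (r + y * I) ^ 2 / 2
noncomputable def Rc (β c : ℝ) : ℝ := (96 * (c + 1)) ^ 2 + 200 * (1 + β) ^ 2
noncomputable def EE (β : ℝ) (x : ℂ) : ℂ := RR β x * exp (EP β x)
noncomputable def u1L (β r : ℝ) (m B : ℝ → ℂ) (y : ℝ) : ℂ :=
  exp (EP β (r + y * I)) * (I * RR1 β (r + y * I) * m y
    + I / RR β (r + y * I) * (m y - 2 * B y))

section
variable {β c r Y : ℝ}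

lemma line_re (r y : ℝ) : (r + y * I : ℂ).re = r := by simp
lemma line_im (r y : ℝ) : (r + y * I : ℂ).im = y := by simp

lemma quad_line (hβ : 0 ≤ β) (hr : 0 ≤ r) {y : ℝ} (hy : 0 ≤ y) (h : 200 * (1 + β) ^ 2 ≤ r + y) :
    Quad β (r + y * I) :=
  ⟨hβ, by rw [line_re]; exact hr, by rw [line_im]; exact hy, by rw [line_re, line_im]; exact h⟩

lemma line_deriv (r y : ℝ) : HasDerivAt (fun y : ℝ => (r + y * I : ℂ)) I y := by
  simpa using ((Complex.ofRealCLM.hasDerivAt (x := y)).mul_const I).const_add (r : ℂ)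

lemma gE_le (hc : 0 ≤ c) {y : ℝ} (h : Quad β (r + y * I)) :
    ‖gE β c r y‖ ≤ 3 * (c + 1) * (1 / Real.sqrt (r + y) ^ 3) := by
  have h1 := h.fE_le hc
  have h2 := h.RR_norm
  have h3 := h.norm_ge
  have h4 := hh_norm h.ne
  have h5 := h.big
  rw [line_re, line_im] at h3 h5
  have hN := h.hh_one
  set N := ‖hh (r + y * I)‖ with hNd
  have hpos : 0 < r + y := by nlinarith [h.hβ]
  have ht := Real.sqrt_pos.2 hpos
  have ht2 := Real.sq_sqrt hpos.le
  set t := Real.sqrt (r + y) with htd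
  have k : t ^ 3 ≤ 3 * N ^ 6 := by
    have : t ^ 2 ≤ 2 * N ^ 4 := by rw [ht2, h4]; exact h3
    have h6 : (t ^ 2) ^ 3 ≤ (2 * N ^ 4) ^ 3 := by gcongr
    have h7 : 0 < N ^ 6 := by positivity
    by_contra hcon
    push Not at hcon
    have h8 : (3 * N ^ 6) ^ 2 < (t ^ 3) ^ 2 := by gcongr
    nlinarith
  have hN0 : 0 < N := by linarith
  unfold gE
  rw [norm_div, norm_mul, norm_mul, norm_pow, Complex.norm_I, one_mul, Complex.norm_two]
  calc ‖fE β c (r + y * I)‖ * ‖RR β (r + y * I)‖ ^ 2 / 2 ≤ (c + 1) * (2 / N ^ 6) / 2 := by gcongr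
    _ = (c + 1) * (1 / N ^ 6) := by ring
    _ ≤ (c + 1) * (3 * (1 / t ^ 3)) := by
        gcongr
        rw [mul_one_div, div_le_div_iff₀ (by positivity) (by positivity)]
        linarith
    _ = _ := by ring

lemma tail_int (h : 0 < r + Y) : IntegrableOn (fun s => 1 / Real.sqrt (r + s) ^ 3) (Ioi Y) ∧
    ∫ s in Ioi Y, 1 / Real.sqrt (r + s) ^ 3 = 2 / Real.sqrt (r + Y) := by
  have hd : ∀ x ∈ Ici Y, HasDerivAt (fun s => -(2 / Real.sqrt (r + s)))
      (1 / Real.sqrt (r + x) ^ 3) x := by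
    intro x hx
    have hpos : 0 < r + x := by have : Y ≤ x := hx; linarith
    have hs := Real.sqrt_pos.2 hpos
    have h1 : HasDerivAt (fun s => Real.sqrt (r + s)) (1 / (2 * Real.sqrt (r + x))) x :=
      ((hasDerivAt_id x).const_add r).sqrt hpos.ne'
    have h2 := ((h1.inv hs.ne').const_mul 2).neg
    refine h2.congr_deriv ?_
    field_simp
  have hpos : ∀ x ∈ Ioi Y, (0 : ℝ) ≤ 1 / Real.sqrt (r + x) ^ 3 := fun x _ => by positivity
  have ht : Tendsto (fun s => -(2 / Real.sqrt (r + s))) atTop (𝓝 0) := by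
    rw [← neg_zero]
    refine Tendsto.neg ?_
    refine Tendsto.div_atTop tendsto_const_nhds ?_
    exact Real.tendsto_sqrt_atTop.comp (tendsto_atTop_add_const_left _ r tendsto_id)
  refine ⟨integrableOn_Ioi_deriv_of_nonneg' hd hpos ht, ?_⟩
  rw [integral_Ioi_of_hasDerivAt_of_nonneg' hd hpos ht]
  ring

lemma EP_line (h : Quad β (r + Y * I)) :
    HasDerivAt (fun y : ℝ => EP β (r + y * I)) (I / RR β (r + Y * I) ^ 2) Y := by
  refine ((EP_hasDerivAt h.slit h.hD).comp Y (line_deriv r Y)).congr_deriv ?_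
  ring

lemma RR_line (h : Quad β (r + Y * I)) :
    HasDerivAt (fun y : ℝ => RR β (r + y * I)) (I * RR1 β (r + Y * I)) Y := by
  refine ((RR_hasDerivAt h.slit h.hD).comp Y (line_deriv r Y)).congr_deriv ?_
  ring

lemma RR1_line (h : Quad β (r + Y * I)) :
    HasDerivAt (fun y : ℝ => I * RR1 β (r + y * I)) (-RR2 β (r + Y * I)) Y := by
  refine (((RR1_hasDerivAt h.slit h.hD).comp Y (line_deriv r Y)).const_mul I).congr_deriv ?_
  linear_combination (RR2 β (r + Y * I)) * I_mul_I

lemma EP_re_line (h : Quad β (r + Y * I)) :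
    HasDerivAt (fun y : ℝ => (EP β (r + y * I)).re) ((I / RR β (r + Y * I) ^ 2).re) Y := by
  have := (Complex.reCLM.hasFDerivAt.comp_hasDerivAt Y (EP_line h))
  exact this

lemma EP_re_anti (hβ : 0 ≤ β) (hr : 0 ≤ r) (hY : 0 ≤ Y) (h : 200 * (1 + β) ^ 2 ≤ r + Y) {K : ℝ}
    (hK : ∀ y, Y ≤ y → 6 * K ≤ Real.sqrt y) :
    AntitoneOn (fun y : ℝ => (EP β (r + y * I)).re + K * y ^ 2) (Ici Y) := by
  have hd : ∀ y ∈ Ici Y, HasDerivAt (fun y : ℝ => (EP β (r + y * I)).re + K * y ^ 2)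
      ((I / RR β (r + y * I) ^ 2).re + K * (2 * y)) y := by
    intro y hy
    have hy' : Y ≤ y := hy
    have hq : Quad β (r + y * I) := quad_line hβ hr (hY.trans hy') (by linarith)
    refine ((EP_re_line hq).add ((hasDerivAt_pow 2 y).const_mul K)).congr_deriv ?_
    norm_num
  refine antitoneOn_of_deriv_nonpos (convex_Ici Y) ?_ ?_ ?_
  · exact fun y hy => (hd y hy).continuousAt.continuousWithinAt
  · intro y hy
    rw [interior_Ici] at hy
    exact (hd y (mem_Ici.2 (le_of_lt hy))).differentiableAt.differentiableWithinAt
  · intro y hy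
    rw [interior_Ici] at hy
    have hy' : Y ≤ y := le_of_lt hy
    rw [(hd y hy').deriv]
    have hq : Quad β (r + y * I) := quad_line hβ hr (hY.trans hy') (by linarith)
    have h1 := hq.re_q
    rw [line_im] at h1
    have h2 := hK y hy'
    have : 0 ≤ y := hY.trans hy'
    nlinarith

lemma EP_decay (hβ : 0 ≤ β) (hr : 0 ≤ r) (hY : 0 ≤ Y) (h : 200 * (1 + β) ^ 2 ≤ r + Y) {K : ℝ}
    (hK : 0 ≤ K) : ∃ C : ℝ, 0 < C ∧ ∀ y, Y ≤ y →
      ‖exp (EP β (r + y * I))‖ ≤ C * Real.exp (-(K * y ^ 2)) := by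
  set y1 := max Y ((6 * K) ^ 2) with hy1
  have hYy : Y ≤ y1 := le_max_left _ _
  have a0 := EP_re_anti hβ hr hY h (K := 0) (fun y _ => by simp)
  have a1 := EP_re_anti hβ hr (hY.trans hYy) (by linarith) (r := r) (Y := y1) (K := K) (fun y hy => by
    apply Real.le_sqrt_of_sq_le
    exact (le_max_right _ _).trans hy)
  simp only [zero_mul, add_zero] at a0
  refine ⟨Real.exp ((EP β (r + Y * I)).re + K * y1 ^ 2), Real.exp_pos _, fun y hy => ?_⟩
  rw [Complex.norm_exp, ← Real.exp_add, Real.exp_le_exp]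
  rcases le_total y y1 with hle | hle
  · have h1 := a0 (mem_Ici.2 le_rfl) (mem_Ici.2 hy) hy
    simp only at h1
    have : y ^ 2 ≤ y1 ^ 2 := by
      have : 0 ≤ y := hY.trans hy
      gcongr
    nlinarith
  · have h1 := a0 (mem_Ici.2 le_rfl) (mem_Ici.2 hYy) hYy
    have h2 := a1 (mem_Ici.2 le_rfl) (mem_Ici.2 hle) hle
    simp only at h1 h2
    linarith

lemma Rc_ge (hc : 0 ≤ c) (h : Rc β c ≤ r + Y) : 200 * (1 + β) ^ 2 ≤ r + Y := by
  unfold Rc at h; nlinarith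

lemma Rc_pos (β : ℝ) (hc : 0 ≤ c) : 0 < Rc β c := by unfold Rc; positivity

lemma fE_cont_line (h : Quad β (r + Y * I)) : ContinuousAt (fun y : ℝ => gE β c r y) Y := by
  have hx := h.ne
  have hl : ContinuousAt (fun y : ℝ => (r + y * I : ℂ)) Y := (line_deriv r Y).continuousAt
  have hR := (RR_line h).continuousAt
  have hD : (r + Y * I : ℂ) ^ 2 - β ≠ 0 := by rw [← hh8 hx]; exact h.hD
  have hf : ContinuousAt (fE β c) (r + Y * I) := by
    unfold fE
    refine ContinuousAt.sub (ContinuousAt.sub (ContinuousAt.add (ContinuousAt.sub ?_ ?_) ?_) ?_) ?_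
    · exact continuousAt_const
    · exact continuousAt_const.div continuousAt_id hx
    · exact continuousAt_const.div (continuousAt_id.pow 3) (pow_ne_zero 3 hx)
    · exact continuousAt_const.div (continuousAt_id.pow 5) (pow_ne_zero 5 hx)
    · refine ContinuousAt.div (by fun_prop) (by fun_prop) ?_
      exact mul_ne_zero (mul_ne_zero (by norm_num) (pow_ne_zero 2 hx)) (pow_ne_zero 2 hD)
  have hf' : ContinuousAt (fun y : ℝ => fE β c (r + y * I)) Y :=
    ContinuousAt.comp (f := fun y : ℝ => (r + y * I : ℂ)) hf hl
  unfold gE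
  exact ((continuousAt_const.mul hf').mul (hR.pow 2)).div_const 2

theorem line_data (hβ : 0 ≤ β) (hc : 0 ≤ c) (hr : 0 ≤ r) (hY : 0 ≤ Y) (h : Rc β c ≤ r + Y) :
    VData Y (fun y => EP β (r + y * I)) (gE β c r) ∧
    ∀ y, Y ≤ y → ∫ s in Ioi y, ‖gE β c r s‖ ≤ 6 * (c + 1) / Real.sqrt (r + y) := by
  have h2 := Rc_ge hc h
  have hq : ∀ y, Y ≤ y → Quad β (r + y * I) := fun y hy =>
    quad_line hβ hr (hY.trans hy) (by linarith)
  have hpos : 0 < r + Y := lt_of_lt_of_le (Rc_pos β hc) h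
  have hcg : ContinuousOn (gE β c r) (Ici Y) := fun y hy =>
    (fE_cont_line (hq y hy)).continuousWithinAt
  have h_integ : ∀ y, Y ≤ y → IntegrableOn (gE β c r) (Ioi y) := by
    intro y hy
    have ht := (tail_int (r := r) (Y := y) (by linarith)).1.const_mul (3 * (c + 1))
    refine Integrable.mono' ht ?_ ?_
    · exact (hcg.mono (fun s hs => hy.trans (le_of_lt hs))).aestronglyMeasurable measurableSet_Ioi
    · filter_upwards [self_mem_ae_restrict measurableSet_Ioi] with s hs
      exact gE_le hc (hq s (hy.trans (le_of_lt hs)))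
  have htail : ∀ y, Y ≤ y → ∫ s in Ioi y, ‖gE β c r s‖ ≤ 6 * (c + 1) / Real.sqrt (r + y) := by
    intro y hy
    have ht := (tail_int (r := r) (Y := y) (by linarith))
    have : ∫ s in Ioi y, ‖gE β c r s‖ ≤ ∫ s in Ioi y, 3 * (c + 1) * (1 / Real.sqrt (r + s) ^ 3) :=
      setIntegral_mono_on (h_integ y hy).norm (ht.1.const_mul _) measurableSet_Ioi
        (fun s hs => gE_le hc (hq s (hy.trans (le_of_lt hs))))
    rw [integral_const_mul, ht.2] at this
    refine this.trans (le_of_eq (by ring))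
  refine ⟨⟨?_, ?_, hcg, h_integ Y le_rfl, ?_⟩, htail⟩
  · exact fun y hy => (EP_line (hq y hy)).continuousAt.continuousWithinAt
  · intro y s hy hs
    have a0 := EP_re_anti hβ hr hY h2 (K := 0) (fun y _ => by simp)
    simp only [zero_mul, add_zero] at a0
    exact a0 (mem_Ici.2 hy) (mem_Ici.2 (hy.trans hs)) hs
  · refine (htail Y le_rfl).trans ?_
    have : 96 * (c + 1) ≤ Real.sqrt (r + Y) := by
      apply Real.le_sqrt_of_sq_le
      unfold Rc at h; nlinarith [sq_nonneg (1 + β)]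
    rw [div_le_iff₀ (by linarith)]
    linarith

lemma sqrt_ge (hβ : 0 ≤ β) (hc : 0 ≤ c) {y : ℝ} (h : Rc β c ≤ r + y) : 
    96 * (c + 1) ≤ Real.sqrt (r + y) := by
  apply Real.le_sqrt_of_sq_le
  unfold Rc at h; nlinarith [sq_nonneg (1 + β)]

variable {m B : ℝ → ℂ}

lemma line_m (hβ : 0 ≤ β) (hc : 0 ≤ c) (hr : 0 ≤ r) (hY : 0 ≤ Y) (h : Rc β c ≤ r + Y)
    (S : VSol Y (fun y => EP β (r + y * I)) (gE β c r) m B) {y : ℝ} (hy : Y ≤ y) :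
    ‖m y - 1‖ ≤ 24 * (c + 1) / Real.sqrt (r + y) ∧ ‖m y - 1‖ ≤ 1 / 4 ∧ m y ≠ 0 ∧ ‖B y‖ ≤ 1 := by
  obtain ⟨D, ht⟩ := line_data hβ hc hr hY h
  have h1 := S.m_sub_one D hy
  have h2 := S.B_le D hy
  have h3 := ht y hy
  have h4 := sqrt_ge hβ hc (h.trans (by linarith : r + Y ≤ r + y))
  have h5 : 6 * (c + 1) / Real.sqrt (r + y) ≤ 1 / 16 := by
    rw [div_le_iff₀ (by linarith)]; linarith
  have h6 : 24 * (c + 1) / Real.sqrt (r + y) = 4 * (6 * (c + 1) / Real.sqrt (r + y)) := by ring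
  refine ⟨by rw [h6]; linarith, by linarith, ?_, by linarith⟩
  intro h0
  rw [h0, zero_sub, norm_neg, norm_one] at h1
  linarith

theorem line_ode (hβ : 0 ≤ β) (hc : 0 ≤ c) (hr : 0 ≤ r) (hY : 0 ≤ Y) (h : Rc β c ≤ r + Y)
    (S : VSol Y (fun y => EP β (r + y * I)) (gE β c r) m B) {y : ℝ} (hy : Y < y) :
    HasDerivAt (fun y : ℝ => EE β (r + y * I) * m y) (u1L β r m B y) y ∧
    HasDerivAt (u1L β r m B)
      (-((r + y * I : ℂ) ^ 3 - (4 * β : ℝ) * (r + y * I) + c) * (EE β (r + y * I) * m y)) y := by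
  obtain ⟨D, ht⟩ := line_data hβ hc hr hY h
  have h2 := Rc_ge hc h
  have hq : Quad β (r + y * I) := quad_line hβ hr (hY.trans hy.le) (by linarith)
  have hR0 := RR_ne hq.hD
  have key := lg_hasDerivAt (Φ := fun y => EP β (r + y * I)) (ρ := fun y => RR β (r + y * I))
    (ρ1 := fun y => I * RR1 β (r + y * I)) (m := m) (B := B) (y := y) (κ := I)
    (q := I / RR β (r + y * I) ^ 2) (g := gE β c r y) (ρ2 := -RR2 β (r + y * I))
    (V := -((r + y * I : ℂ) ^ 3 - (4 * β : ℝ) * (r + y * I) + c)) hR0 rfl (EP_line hq) (RR_line hq)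
    (RR1_line hq) (S.m_hasDerivAt D hy (EP_line hq)) (S.B_hasDerivAt D hy (EP_line hq)) ?_
  · exact key
  · have hf := fE_eq (β := β) c hq.ne hq.hD
    have hs : (I / RR β (r + y * I) ^ 2) ^ 2 = -(1 / RR β (r + y * I) ^ 4) := by
      rw [div_pow, I_sq]; ring
    rw [hs]
    have e : 2 * (I / RR β (r + y * I) ^ 2) * gE β c r y * RR β (r + y * I)
        = -(fE β c (r + y * I) * RR β (r + y * I)) := by
      unfold gE
      field_simp
      rw [I_sq]; ring
    rw [e, hf]
    push_cast
    ring

lemma line_decay (hβ : 0 ≤ β) (hc : 0 ≤ c) (hr : 0 ≤ r) (hY : 0 ≤ Y) (h : Rc β c ≤ r + Y)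
    (S : VSol Y (fun y => EP β (r + y * I)) (gE β c r) m B) {K : ℝ} (hK : 0 ≤ K) :
    ∃ C : ℝ, 0 < C ∧ ∀ y, Y ≤ y → ‖EE β (r + y * I) * m y‖ ≤ C * Real.exp (-(K * y ^ 2)) ∧
      ‖u1L β r m B y‖ ≤ C * Real.exp (-(K * y ^ 2)) := by
  have h2 := Rc_ge hc h
  obtain ⟨C, hC, hd⟩ := EP_decay hβ hr hY h2 (K := K + 1) (by linarith)
  refine ⟨C * (24 * (r + 1)), by positivity, fun y hy => ?_⟩
  have hq : Quad β (r + y * I) := quad_line hβ hr (hY.trans hy) (by linarith)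
  obtain ⟨-, -, -, hB⟩ := line_m hβ hc hr hY h S hy
  have hm := S.bd y hy
  have hy0 : 0 ≤ y := hY.trans hy
  have hx : ‖(r + y * I : ℂ)‖ ≤ r + y := by
    refine (norm_add_le _ _).trans ?_
    simp [abs_of_nonneg hr, abs_of_nonneg hy0]
  have hxr : (r + y) * Real.exp (-(y ^ 2)) ≤ r + 1 := by
    have e1 : Real.exp (-(y ^ 2)) ≤ 1 := Real.exp_le_one_iff.2 (by nlinarith)
    have e2 : y * Real.exp (-(y ^ 2)) ≤ 1 := by
      rw [Real.exp_neg, ← div_eq_mul_inv, div_le_one (Real.exp_pos _)]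
      have := Real.add_one_le_exp (y ^ 2)
      nlinarith [sq_nonneg (y - 1)]
    nlinarith
  have hexp : Real.exp (-((K + 1) * y ^ 2)) = Real.exp (-(y ^ 2)) * Real.exp (-(K * y ^ 2)) := by
    rw [← Real.exp_add]; congr 1; ring
  have hd' := hd y hy
  rw [hexp] at hd'
  have hE0 := Real.exp_pos (-(K * y ^ 2))
  have hE1 := Real.exp_pos (-(y ^ 2))
  constructor
  · unfold EE
    rw [norm_mul, norm_mul]
    have e1 : Real.exp (-(y ^ 2)) ≤ 1 := Real.exp_le_one_iff.2 (by nlinarith)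
    calc ‖RR β (r + y * I)‖ * ‖exp (EP β (r + y * I))‖ * ‖m y‖
        ≤ 2 * (C * (1 * Real.exp (-(K * y ^ 2)))) * 2 := by
          have := hq.RR_le
          gcongr
          exact hd'.trans (by gcongr)
      _ ≤ _ := by
          have : 0 ≤ C * Real.exp (-(K * y ^ 2)) := by positivity
          nlinarith
  · unfold u1L
    have n1 := hq.RR1_le
    have n2 := hq.RR_inv_le
    have n3 : ‖I / RR β (r + y * I)‖ ≤ 2 * (r + y) := by
      rw [norm_div, Complex.norm_I, ← norm_one (α := ℂ), ← norm_div]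
      linarith
    rw [norm_mul]
    have n4 : ‖I * RR1 β (r + y * I) * m y + I / RR β (r + y * I) * (m y - 2 * B y)‖
        ≤ 24 * (r + y) := by
      refine (norm_add_le _ _).trans ?_
      rw [norm_mul, norm_mul, norm_mul, Complex.norm_I]
      have n5 : ‖m y - 2 * B y‖ ≤ 4 := by
        refine (norm_sub_le _ _).trans ?_
        rw [norm_mul, Complex.norm_two]; linarith
      calc 1 * ‖RR1 β (r + y * I)‖ * ‖m y‖ + ‖I / RR β (r + y * I)‖ * ‖m y - 2 * B y‖
          ≤ 1 * (8 * (r + y)) * 2 + 2 * (r + y) * 4 := by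
            gcongr
            linarith
        _ = _ := by ring
    calc ‖exp (EP β (r + y * I))‖ * ‖I * RR1 β (r + y * I) * m y + I / RR β (r + y * I) * (m y - 2 * B y)‖
        ≤ (C * (Real.exp (-(y ^ 2)) * Real.exp (-(K * y ^ 2)))) * (24 * (r + y)) := by gcongr
      _ = C * 24 * Real.exp (-(K * y ^ 2)) * ((r + y) * Real.exp (-(y ^ 2))) := by ring
      _ ≤ C * 24 * Real.exp (-(K * y ^ 2)) * (r + 1) := by gcongr
      _ = _ := by ring

end
end Cub

set_option linter.unusedVariables false
namespace Cub
open MeasureTheory Set Filter Topology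

structure NormSol (β c : ℝ) (p q : ℂ) : Prop where
  lim : Tendsto (fun y : ℝ => ent (4 * β) c p q ((0 : ℝ) + y * I) / EE β ((0 : ℝ) + y * I)) atTop (𝓝 1)
  dec : ∀ K : ℝ, 0 ≤ K → ∃ C Y : ℝ, 0 < C ∧ ∀ y, Y ≤ y →
    ‖ent (4 * β) c p q ((0 : ℝ) + y * I)‖ ≤ C * Real.exp (-(K * y ^ 2)) ∧
    ‖ent1 (4 * β) c p q ((0 : ℝ) + y * I)‖ ≤ C * Real.exp (-(K * y ^ 2))

section
variable {β c r Y : ℝ} {m B : ℝ → ℂ}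

lemma EE_ne {x : ℂ} (h : Quad β x) : EE β x ≠ 0 :=
  mul_ne_zero (RR_ne h.hD) (Complex.exp_ne_zero _)

lemma line_ext (hβ : 0 ≤ β) (hc : 0 ≤ c) (hr : 0 ≤ r) (hY : 0 ≤ Y) (h : Rc β c ≤ r + Y)
    (S : VSol Y (fun y => EP β (r + y * I)) (gE β c r) m B) {p q : ℂ}
    (hw : ∀ y, Y < y → ent (4 * β) c p q (r + y * I) * u1L β r m B y
      - (I * ent1 (4 * β) c p q (r + y * I)) * (EE β (r + y * I) * m y) = 0)
    {y0 y : ℝ} (hy0 : Y < y0) (hy : Y < y) :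
    ent (4 * β) c p q (r + y * I) =
      (ent (4 * β) c p q (r + y0 * I) / (EE β (r + y0 * I) * m y0)) * (EE β (r + y * I) * m y) := by
  refine wr_prop (U := fun y : ℝ => ent (4 * β) c p q (r + y * I))
    (U1 := fun y : ℝ => I * ent1 (4 * β) c p q (r + y * I))
    (u := fun y : ℝ => EE β (r + y * I) * m y) (u1 := u1L β r m B) (Y := Y) ?_ ?_ ?_ hw hy0 hy
  · exact fun y _ => (ent_vert (4 * β) c p q r y).1
  · exact fun y hy => (line_ode hβ hc hr hY h S hy).1
  · intro y hy
    have h2 := Rc_ge hc h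
    exact mul_ne_zero (EE_ne (quad_line hβ hr (hY.trans hy.le) (by linarith)))
      (line_m hβ hc hr hY h S hy.le).2.2.1

lemma line_wr (hβ : 0 ≤ β) (hc : 0 ≤ c) (hr : 0 ≤ r) (hY : 0 ≤ Y) (h : Rc β c ≤ r + Y)
    (S : VSol Y (fun y => EP β (r + y * I)) (gE β c r) m B) {p q : ℂ} {s t : ℝ} (hs : Y < s)
    (ht : Y < t) :
    ent (4 * β) c p q (r + s * I) * u1L β r m B s
      - (I * ent1 (4 * β) c p q (r + s * I)) * (EE β (r + s * I) * m s) =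
    ent (4 * β) c p q (r + t * I) * u1L β r m B t
      - (I * ent1 (4 * β) c p q (r + t * I)) * (EE β (r + t * I) * m t) := by
  refine wr_const (U := fun y : ℝ => ent (4 * β) c p q (r + y * I))
    (U1 := fun y : ℝ => I * ent1 (4 * β) c p q (r + y * I))
    (u := fun y : ℝ => EE β (r + y * I) * m y) (u1 := u1L β r m B) (Y := Y)
    (W := fun y : ℝ => -((r + y * I : ℂ) ^ 3 - (4 * β : ℝ) * (r + y * I) + c)) ?_ ?_ ?_ ?_ hs ht
  · exact fun y _ => (ent_vert (4 * β) c p q r y).1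
  · exact fun y _ => (ent_vert (4 * β) c p q r y).2
  · exact fun y hy => (line_ode hβ hc hr hY h S hy).1
  · exact fun y hy => (line_ode hβ hc hr hY h S hy).2

lemma m_tendsto (hβ : 0 ≤ β) (hc : 0 ≤ c) (hr : 0 ≤ r) (hY : 0 ≤ Y) (h : Rc β c ≤ r + Y)
    (S : VSol Y (fun y => EP β (r + y * I)) (gE β c r) m B) : Tendsto m atTop (𝓝 1) := by
  rw [tendsto_iff_norm_sub_tendsto_zero]
  have h1 : Tendsto (fun y => 24 * (c + 1) / Real.sqrt (r + y)) atTop (𝓝 0) := by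
    refine Tendsto.div_atTop tendsto_const_nhds ?_
    exact Real.tendsto_sqrt_atTop.comp (tendsto_atTop_add_const_left _ r tendsto_id)
  refine squeeze_zero' (Eventually.of_forall fun _ => norm_nonneg _) ?_ h1
  filter_upwards [Ici_mem_atTop Y] with y hy
  exact (line_m hβ hc hr hY h S hy).1

lemma Rc_mono {c c' : ℝ} (hc : 0 ≤ c) (h : c ≤ c') : Rc β c ≤ Rc β c' := by
  unfold Rc; gcongr

/-- the solution with given asymptotics on the imaginary axis -/
lemma norm_of_data (hβ : 0 ≤ β) (hc : 0 ≤ c) (hY : 0 ≤ Y) (h : Rc β c ≤ Y)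
    (S : VSol Y (fun y => EP β ((0 : ℝ) + y * I)) (gE β c 0) m B) {p q : ℂ} {y0 : ℝ} (hy0 : Y < y0)
    (h1 : ent (4 * β) c p q ((0 : ℝ) + y0 * I) = EE β ((0 : ℝ) + y0 * I) * m y0)
    (h2 : I * ent1 (4 * β) c p q ((0 : ℝ) + y0 * I) = u1L β 0 m B y0) : NormSol β c p q := by
  have h' : Rc β c ≤ 0 + Y := by linarith
  have hq := Rc_ge hc h'
  have hE : ∀ y, Y < y → EE β ((0 : ℝ) + y * I) ≠ 0 := fun y hy =>
    EE_ne (quad_line hβ le_rfl (hY.trans hy.le) (by linarith))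
  have hm : ∀ y, Y < y → m y ≠ 0 := fun y hy => (line_m hβ hc le_rfl hY h' S hy.le).2.2.1
  have hw : ∀ y, Y < y → ent (4 * β) c p q ((0 : ℝ) + y * I) * u1L β 0 m B y
      - (I * ent1 (4 * β) c p q ((0 : ℝ) + y * I)) * (EE β ((0 : ℝ) + y * I) * m y) = 0 := by
    intro y hy
    rw [line_wr hβ hc le_rfl hY h' S hy hy0, h1, h2]; ring
  have he : ∀ y, Y < y → ent (4 * β) c p q ((0 : ℝ) + y * I) = EE β ((0 : ℝ) + y * I) * m y := by
    intro y hy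
    rw [line_ext hβ hc le_rfl hY h' S hw hy0 hy, h1,
      div_self (mul_ne_zero (hE y0 hy0) (hm y0 hy0)), one_mul]
  have he1 : ∀ y, Y < y → I * ent1 (4 * β) c p q ((0 : ℝ) + y * I) = u1L β 0 m B y := by
    intro y hy
    have := hw y hy
    rw [he y hy] at this
    refine mul_left_cancel₀ (mul_ne_zero (hE y hy) (hm y hy)) ?_
    linear_combination -this
  refine ⟨?_, ?_⟩
  · refine (m_tendsto hβ hc le_rfl hY h' S).congr' ?_
    filter_upwards [Ioi_mem_atTop Y] with y hy
    rw [he y hy, mul_div_cancel_left₀ _ (hE y hy)]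
  · intro K hK
    obtain ⟨C, hC, hd⟩ := line_decay hβ hc le_rfl hY h' S hK
    refine ⟨C, Y + 1, hC, fun y hy => ?_⟩
    have hy' : Y < y := by linarith
    have h3 := hd y hy'.le
    rw [← he y hy', ← he1 y hy', norm_mul, Complex.norm_I, one_mul] at h3
    exact h3

lemma gE_sub (β c c' r y : ℝ) :
    gE β c r y - gE β c' r y = ((c - c' : ℝ) : ℂ) * (I * RR β (r + y * I) ^ 2 / 2) := by
  unfold gE fE; push_cast; ring

theorem family (hβ : 0 ≤ β) {C2 : ℝ} (hC2 : 0 ≤ C2) : ∃ P Q : ℝ → ℂ,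
    (∀ c ∈ Icc 0 C2, NormSol β c (P c) (Q c)) ∧ ContinuousOn P (Icc 0 C2) := by
  set Y := Rc β C2 with hYd
  have hY0 : 0 ≤ Y := (Rc_pos β hC2).le
  have hR : ∀ c ∈ Icc 0 C2, Rc β c ≤ 0 + Y := fun c hc => by
    rw [zero_add]; exact Rc_mono hc.1 hc.2
  have hD : ∀ c ∈ Icc 0 C2, VData Y (fun y => EP β ((0 : ℝ) + y * I)) (gE β c 0) := fun c hc =>
    (line_data hβ hc.1 le_rfl hY0 (hR c hc)).1
  have hex : ∀ c, ∃ mB : (ℝ → ℂ) × (ℝ → ℂ), c ∈ Icc 0 C2 →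
      VSol Y (fun y => EP β ((0 : ℝ) + y * I)) (gE β c 0) mB.1 mB.2 := by
    intro c
    by_cases hc : c ∈ Icc 0 C2
    · obtain ⟨m, B, S⟩ := (hD c hc).exists_sol
      exact ⟨(m, B), fun _ => S⟩
    · exact ⟨(fun _ => 0, fun _ => 0), fun h => absurd h hc⟩
  choose mB hS using hex
  set y0 := Y + 1 with hy0
  have hYy : Y < y0 := by linarith
  set x0 : ℂ := (0 : ℝ) + y0 * I with hx0
  have hm : ContinuousOn (fun c => (mB c).1 y0) (Icc 0 C2) ∧
      ContinuousOn (fun c => (mB c).2 y0) (Icc 0 C2) := by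
    set K := ∫ s in Ioi Y, ‖I * RR β ((0 : ℝ) + s * I) ^ 2 / 2‖ with hK
    have hK0 : 0 ≤ K := integral_nonneg fun _ => norm_nonneg _
    have hI : ∀ c c' : ℝ, ∫ s in Ioi Y, ‖gE β c 0 s - gE β c' 0 s‖ = |c - c'| * K := by
      intro c c'
      simp_rw [gE_sub, norm_mul, Complex.norm_real, Real.norm_eq_abs]
      rw [integral_const_mul, hK]
    have hdiff : ∀ c ∈ Icc 0 C2, ∀ c' ∈ Icc 0 C2, 
        ‖(mB c).1 y0 - (mB c').1 y0‖ ≤ 8 * (|c - c'| * K) ∧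
        ‖(mB c).2 y0 - (mB c').2 y0‖ ≤ 8 * (|c - c'| * K) := by
      intro c hc c' hc'
      have := VSol.diff (hD c hc) (hS c hc) (hD c' hc') (hS c' hc') hYy.le
      rw [hI] at this
      have : 0 ≤ |c - c'| * K := by positivity
      refine ⟨by linarith, by linarith⟩
    have hlip : ∀ f : ℝ → ℂ, (∀ c ∈ Icc 0 C2, ∀ c' ∈ Icc 0 C2, ‖f c - f c'‖ ≤ 8 * (|c - c'| * K)) →
        ContinuousOn f (Icc 0 C2) := by
      intro f hf
      refine (LipschitzOnWith.of_dist_le_mul (K := ⟨8 * K, by positivity⟩) ?_).continuousOn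
      intro c hc c' hc'
      rw [dist_eq_norm, Real.dist_eq]
      refine (hf c hc c' hc').trans (le_of_eq ?_)
      change _ = 8 * K * _
      ring
    exact ⟨hlip _ fun c hc c' hc' => (hdiff c hc c' hc').1,
      hlip _ fun c hc c' hc' => (hdiff c hc c' hc').2⟩
  set P0 : ℝ → ℂ := fun c => EE β x0 * (mB c).1 y0 with hP0
  set Q0 : ℝ → ℂ := fun c => -I * u1L β 0 (mB c).1 (mB c).2 y0 with hQ0
  have hP0c : ContinuousOn P0 (Icc 0 C2) := continuousOn_const.mul hm.1
  have hQ0c : ContinuousOn Q0 (Icc 0 C2) := by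
    obtain ⟨m1, m2⟩ := hm
    simp only [hQ0, u1L]
    exact continuousOn_const.mul (continuousOn_const.mul ((continuousOn_const.mul m1).add
      (continuousOn_const.mul (m1.sub (continuousOn_const.mul m2)))))
  refine ⟨fun c => P0 c * sol' (4 * β) c 0 1 x0 - Q0 c * sol (4 * β) c 0 1 x0,
    fun c => Q0 c * sol (4 * β) c 1 0 x0 - P0 c * sol' (4 * β) c 1 0 x0, ?_, ?_⟩
  · intro c hc
    obtain ⟨e1, e2⟩ := ent_of_data (4 * β) c x0 (P0 c) (Q0 c)
    refine norm_of_data hβ hc.1 hY0 (by linarith [hR c hc]) (hS c hc) hYy e1 ?_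
    rw [← hx0, e2, hQ0]
    linear_combination (-u1L β 0 (mB c).1 (mB c).2 y0) * I_mul_I
  · exact (hP0c.mul (sol'_cont _ _ _ _).continuousOn).sub (hQ0c.mul (sol_cont _ _ _ _).continuousOn)

end
end Cub

set_option linter.unusedVariables false
namespace Cub
open MeasureTheory Set Filter Topology

noncomputable def wI (b c y : ℝ) : ℂ := (c : ℂ) - ((y ^ 3 + b * y : ℝ) : ℂ) * I
noncomputable def wI1 (b y : ℝ) : ℂ := - ((3 * y ^ 2 + b : ℝ) : ℂ) * I
noncomputable def wI2 (y : ℝ) : ℂ := - ((6 * y : ℝ) : ℂ) * I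
noncomputable def pI (b c y : ℝ) : ℂ := hh (wI b c y) ^ 2
noncomputable def PhiI (b c y : ℝ) : ℂ := -I * ∫ s in (0 : ℝ)..y, pI b c s
noncomputable def rhoI (b c y : ℝ) : ℂ := 1 / hh (wI b c y)
noncomputable def rho1I (b c y : ℝ) : ℂ := - wI1 b y / (4 * hh (wI b c y) ^ 5)
noncomputable def rho2I (b c y : ℝ) : ℂ :=
  - wI2 y / (4 * hh (wI b c y) ^ 5) + 5 * wI1 b y ^ 2 / (16 * hh (wI b c y) ^ 9)
noncomputable def gI (b c y : ℝ) : ℂ :=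
  (-I / 2) * (- wI2 y / (4 * hh (wI b c y) ^ 6) + 5 * wI1 b y ^ 2 / (16 * hh (wI b c y) ^ 10))

section
variable {b c y : ℝ}

lemma wI_re (b c y : ℝ) : (wI b c y).re = c := by
  unfold wI; rw [Complex.sub_re, Complex.re_ofReal_mul]; simp
lemma wI_im (b c y : ℝ) : (wI b c y).im = -(y ^ 3 + b * y) := by
  unfold wI
  rw [Complex.sub_im, Complex.im_ofReal_mul]; simp

lemma wI_slit (hc : 0 < c) : wI b c y ∈ slitPlane := by
  rw [Complex.mem_slitPlane_iff]; left; rw [wI_re]; exact hc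

lemma wI_ne (hc : 0 < c) : wI b c y ≠ 0 := slitPlane_ne_zero (wI_slit hc)

lemma wI_hasDerivAt (b c y : ℝ) : HasDerivAt (wI b c) (wI1 b y) y := by
  have h : HasDerivAt (fun y : ℝ => y ^ 3 + b * y) (3 * y ^ 2 + b) y := by
    refine ((hasDerivAt_pow 3 y).add ((hasDerivAt_id y).const_mul b)).congr_deriv ?_
    norm_num
  refine ((h.ofReal_comp.mul_const I).const_sub (c : ℂ)).congr_deriv ?_
  unfold wI1; ring

lemma wI1_hasDerivAt (b y : ℝ) : HasDerivAt (wI1 b) (wI2 y) y := by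
  have h : HasDerivAt (fun y : ℝ => 3 * y ^ 2 + b) (6 * y) y := by
    refine (((hasDerivAt_pow 2 y).const_mul 3).add_const b).congr_deriv ?_
    norm_num; ring
  refine ((h.ofReal_comp.neg).mul_const I).congr_deriv ?_
  unfold wI2; ring

lemma hI_hasDerivAt (hc : 0 < c) (b y : ℝ) : HasDerivAt (fun y => hh (wI b c y))
    (wI1 b y / (4 * hh (wI b c y) ^ 3)) y := by
  refine ((hh_hasDerivAt (wI_slit hc)).comp y (wI_hasDerivAt b c y)).congr_deriv ?_
  ring

lemma pI_cont (hc : 0 < c) (b : ℝ) : Continuous (pI b c) :=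
  (continuous_iff_continuousAt.2 fun y => (hI_hasDerivAt hc b y).continuousAt).pow 2

lemma PhiI_hasDerivAt (hc : 0 < c) (b y : ℝ) : HasDerivAt (PhiI b c) (-I * pI b c y) y := by
  exact (intervalIntegral.integral_hasDerivAt_right ((pI_cont hc b).intervalIntegrable _ _)
    ((pI_cont hc b).stronglyMeasurableAtFilter _ _) (pI_cont hc b).continuousAt).const_mul (-I)

lemma rhoI_hasDerivAt (hc : 0 < c) (b y : ℝ) : HasDerivAt (rhoI b c) (rho1I b c y) y := by
  have h0 := hh_ne (wI b c y)
  refine ((hasDerivAt_const y (1 : ℂ)).div (hI_hasDerivAt hc b y) h0).congr_deriv ?_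
  unfold rho1I; field_simp; ring

lemma rho1I_hasDerivAt (hc : 0 < c) (b y : ℝ) : HasDerivAt (rho1I b c) (rho2I b c y) y := by
  have h0 := hh_ne (wI b c y)
  refine ((wI1_hasDerivAt b y).neg.div (((hI_hasDerivAt hc b y).pow 5).const_mul 4)
    (mul_ne_zero (by norm_num) (pow_ne_zero 5 h0))).congr_deriv ?_
  unfold rho2I; simp only [Pi.pow_apply, Pi.neg_apply]; field_simp; ring

lemma gI_eq (hc : 0 < c) (b y : ℝ) :
    2 * (-I * pI b c y) * gI b c y * rhoI b c y
      = (-wI b c y - (-I * pI b c y) ^ 2) * rhoI b c y - rho2I b c y := by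
  have h0 := hh_ne (wI b c y)
  have h4 := hh_pow (wI_ne (b := b) (y := y) hc)
  have e : (-I * pI b c y) ^ 2 = - wI b c y := by
    rw [mul_pow, neg_sq, I_sq, pI, ← pow_mul, h4]; ring
  rw [e, sub_self, zero_mul, zero_sub]
  unfold pI gI rhoI rho2I
  field_simp
  rw [I_sq]; ring

lemma pI_sq (hc : 0 < c) (b y : ℝ) : pI b c y ^ 2 = wI b c y := by
  rw [pI, ← pow_mul, hh_pow (wI_ne hc)]

lemma exp_log_re {z : ℂ} (hz : 0 < z.re) {k : ℝ} (hk : 1 ≤ k) : 0 < (exp (log z / (k : ℂ))).re := by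
  rw [Complex.exp_re]
  refine mul_pos (Real.exp_pos _) (Real.cos_pos_of_mem_Ioo ?_)
  rw [Complex.div_ofReal_im, Complex.log_im]
  have h1 := abs_lt.1 (Complex.abs_arg_lt_pi_div_two_iff.2 (Or.inl hz))
  have hp := Real.pi_pos
  constructor
  · rw [lt_div_iff₀ (by linarith)]; nlinarith
  · rw [div_lt_iff₀ (by linarith)]; nlinarith

lemma hI_re (hc : 0 < c) (b y : ℝ) : 0 < (hh (wI b c y)).re := by
  have := exp_log_re (z := wI b c y) (by rw [wI_re]; exact hc) (k := 4) (by norm_num)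
  simpa [hh] using this

lemma pI_re (hc : 0 < c) (b y : ℝ) : 0 < (pI b c y).re := by
  have := exp_log_re (z := wI b c y) (by rw [wI_re]; exact hc) (k := 2) (by norm_num)
  have e : pI b c y = exp (log (wI b c y) / ((2 : ℝ) : ℂ)) := by
    unfold pI hh; rw [← Complex.exp_nat_mul]; congr 1; push_cast; ring
  rw [e]; exact this

lemma pI_parts (hc : 0 < c) (b y : ℝ) : (pI b c y).re ^ 2 - (pI b c y).im ^ 2 = c ∧
    2 * (pI b c y).re * (pI b c y).im = -(y ^ 3 + b * y) := by
  have h := pI_sq hc b y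
  have h1 := congrArg Complex.re h
  have h2 := congrArg Complex.im h
  rw [wI_re, sq, Complex.mul_re] at h1
  rw [wI_im, sq, Complex.mul_im] at h2
  constructor <;> linarith

lemma pI_im (hb : 0 ≤ b) (hc : 0 < c) (hy : 0 ≤ y) : (pI b c y).im ≤ 0 := by
  have h1 := (pI_parts hc b y).2
  have h2 := pI_re hc b y
  by_contra hcon
  push Not at hcon
  have : 0 < (pI b c y).re * (pI b c y).im := mul_pos h2 hcon
  have : 0 ≤ y ^ 3 + b * y := by positivity
  nlinarith

lemma pI_re_sq (hc : 0 < c) (b y : ℝ) : ‖pI b c y‖ ^ 2 ≤ 2 * (pI b c y).re ^ 2 := by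
  have h1 := (pI_parts hc b y).1
  rw [Complex.sq_norm, Complex.normSq_apply]
  nlinarith

lemma pI_norm (hc : 0 < c) (b y : ℝ) : ‖pI b c y‖ ^ 2 = ‖wI b c y‖ := by
  rw [← norm_pow, pI_sq hc]

lemma wI_ge (hb : 0 ≤ b) (hc : 1 ≤ c) (hy : 0 ≤ y) : c ≤ ‖wI b c y‖ ∧ (1 + y ^ 3) ≤ 2 * ‖wI b c y‖ := by
  have h1 := Complex.abs_re_le_norm (wI b c y)
  have h2 := Complex.abs_im_le_norm (wI b c y)
  rw [wI_re] at h1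
  rw [wI_im, abs_neg] at h2
  have h3 := le_abs_self c
  have h4 := le_abs_self (y ^ 3 + b * y)
  have : 0 ≤ b * y := by positivity
  constructor <;> linarith

lemma wI_le (hb : 0 ≤ b) (hc : 1 ≤ c) (hy : 0 ≤ y) : ‖wI b c y‖ ≤ c + (y ^ 3 + b * y) := by
  refine (norm_sub_le _ _).trans ?_
  rw [norm_mul, Complex.norm_I, mul_one, Complex.norm_real, Complex.norm_real, Real.norm_of_nonneg (by linarith),
    Real.norm_of_nonneg (by positivity)]

lemma hI_ge (hb : 0 ≤ b) (hc : 1 ≤ c) (hy : 0 ≤ y) : 1 ≤ ‖hh (wI b c y)‖ := by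
  have h1 := hh_norm (wI_ne (b := b) (c := c) (y := y) (by linarith))
  have h2 := (wI_ge hb hc hy).1
  by_contra hcon
  push Not at hcon
  have : ‖hh (wI b c y)‖ ^ 4 < 1 := pow_lt_one₀ (norm_nonneg _) hcon (by norm_num)
  linarith

lemma gI_le (hb : 0 ≤ b) (hc : 1 ≤ c) (hy : 0 ≤ y) :
    ‖gI b c y‖ ≤ 3 * (3 + b) ^ 2 / Real.sqrt c * (1 + y ^ 2)⁻¹ := by
  have hc0 : 0 < c := by linarith
  have hh1 := hI_ge hb hc hy
  have h4 := hh_norm (wI_ne (b := b) (c := c) (y := y) hc0)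
  obtain ⟨g1, g2⟩ := wI_ge hb hc hy
  set H := ‖hh (wI b c y)‖ with hH
  set W := ‖wI b c y‖ with hW
  have hH0 : 0 < H := by linarith
  have hs : Real.sqrt c ≤ H ^ 2 := by
    apply Real.sqrt_le_iff.2 ⟨by positivity, ?_⟩
    rw [← pow_mul, h4]; exact g1
  have hs0 := Real.sqrt_pos.2 hc0
  set t := Real.sqrt c with ht
  have e1 : ‖wI1 b y‖ = 3 * y ^ 2 + b := by
    unfold wI1; rw [norm_mul, norm_neg, Complex.norm_I, mul_one, Complex.norm_real,
      Real.norm_of_nonneg (by positivity)]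
  have e2 : ‖wI2 y‖ = 6 * y := by
    unfold wI2; rw [norm_mul, norm_neg, Complex.norm_I, mul_one, Complex.norm_real,
      Real.norm_of_nonneg (by positivity)]
  have n1 : ‖-wI2 y / (4 * hh (wI b c y) ^ 6)‖ = 6 * y / (4 * H ^ 6) := by
    rw [norm_div, norm_neg, e2, norm_mul, norm_pow]; norm_num
    simp [hH]
  have n2 : ‖5 * wI1 b y ^ 2 / (16 * hh (wI b c y) ^ 10)‖ = 5 * (3 * y ^ 2 + b) ^ 2 / (16 * H ^ 10) := by
    rw [norm_div, norm_mul, norm_mul, norm_pow, norm_pow, e1]; norm_num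
    simp [hH]
  have n3 : ‖(-I / 2 : ℂ)‖ = 1 / 2 := by simp
  have W0 : 0 < W := by linarith
  -- elementary
  have q1 : y * (1 + y ^ 2) ≤ 4 * W := by
    have : y * (1 + y ^ 2) ≤ 2 * (1 + y ^ 3) := by nlinarith [mul_nonneg hy (sq_nonneg (y - 1)), sq_nonneg (y-1), mul_nonneg (mul_nonneg hy hy) hy]
    linarith
  have q2 : (3 * y ^ 2 + b) ^ 2 * (1 + y ^ 2) ≤ (3 + b) ^ 2 * (16 * W ^ 2) := by
    have a1 : 3 * y ^ 2 + b ≤ (3 + b) * (1 + y ^ 2) := by nlinarith [sq_nonneg y, mul_nonneg hb (sq_nonneg y)]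
    have a2 : (1 + y ^ 2) ^ 3 ≤ 4 * (1 + y ^ 3) ^ 2 := by
      nlinarith [sq_nonneg (y ^ 2 - 1), sq_nonneg (y - 1), sq_nonneg (y^3), mul_nonneg hy (sq_nonneg y), sq_nonneg (y^3 - 1), sq_nonneg (y ^ 2), sq_nonneg y, mul_nonneg (sq_nonneg y) (sq_nonneg (y-1)), mul_nonneg (sq_nonneg y) (sq_nonneg (y^2-1))]
    have a3 : (1 + y ^ 3) ^ 2 ≤ (2 * W) ^ 2 := by gcongr
    calc (3 * y ^ 2 + b) ^ 2 * (1 + y ^ 2) ≤ ((3 + b) * (1 + y ^ 2)) ^ 2 * (1 + y ^ 2) := by gcongr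
      _ = (3 + b) ^ 2 * (1 + y ^ 2) ^ 3 := by ring
      _ ≤ (3 + b) ^ 2 * (4 * (2 * W) ^ 2) := by gcongr; linarith
      _ = _ := by ring
  have d1 : 6 * y / (4 * H ^ 6) ≤ 6 / (t * (1 + y ^ 2)) := by
    rw [div_le_div_iff₀ (by positivity) (by positivity)]
    have : H ^ 6 = H ^ 2 * W := by rw [← h4]; ring
    rw [this]
    calc 6 * y * (t * (1 + y ^ 2)) = 6 * t * (y * (1 + y ^ 2)) := by ring
      _ ≤ 6 * H ^ 2 * (4 * W) := by gcongr
      _ = _ := by ring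
  have d2 : 5 * (3 * y ^ 2 + b) ^ 2 / (16 * H ^ 10) ≤ 5 * (3 + b) ^ 2 / (t * (1 + y ^ 2)) := by
    rw [div_le_div_iff₀ (by positivity) (by positivity)]
    have : H ^ 10 = H ^ 2 * W ^ 2 := by rw [← h4]; ring
    rw [this]
    calc 5 * (3 * y ^ 2 + b) ^ 2 * (t * (1 + y ^ 2)) = 5 * t * ((3 * y ^ 2 + b) ^ 2 * (1 + y ^ 2)) := by ring
      _ ≤ 5 * H ^ 2 * ((3 + b) ^ 2 * (16 * W ^ 2)) := by gcongr
      _ = _ := by ring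
  unfold gI
  rw [norm_mul, n3]
  have n4 := norm_add_le (-wI2 y / (4 * hh (wI b c y) ^ 6)) (5 * wI1 b y ^ 2 / (16 * hh (wI b c y) ^ 10))
  rw [n1, n2] at n4
  have e3 : 3 * (3 + b) ^ 2 / t * (1 + y ^ 2)⁻¹ = 3 * (3 + b) ^ 2 / (t * (1 + y ^ 2)) := by
    field_simp
  rw [e3]
  have e4 : 6 / (t * (1 + y ^ 2)) ≤ (3 + b) ^ 2 / (t * (1 + y ^ 2)) := by
    gcongr; nlinarith
  have e5 : 3 * (3 + b) ^ 2 / (t * (1 + y ^ 2)) = 3 * ((3 + b) ^ 2 / (t * (1 + y ^ 2))) := by ring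
  have e6 : 5 * (3 + b) ^ 2 / (t * (1 + y ^ 2)) = 5 * ((3 + b) ^ 2 / (t * (1 + y ^ 2))) := by ring
  rw [e5]; rw [e6] at d2
  linarith

noncomputable def cst (b : ℝ) : ℝ := (48 * (3 + b) ^ 2) ^ 2

lemma cst_ge (hb : 0 ≤ b) : 1 ≤ cst b := by
  unfold cst
  have : (9 : ℝ) ≤ (3 + b) ^ 2 := by nlinarith
  nlinarith

lemma gI_cont (hc : 0 < c) (b : ℝ) : Continuous (gI b c) := by
  have h : Continuous fun y => hh (wI b c y) :=
    continuous_iff_continuousAt.2 fun y => (hI_hasDerivAt hc b y).continuousAt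
  have h1 : Continuous (wI1 b) := by unfold wI1; fun_prop
  have h2 : Continuous wI2 := by unfold wI2; fun_prop
  unfold gI
  refine continuous_const.mul (Continuous.add (Continuous.div (by fun_prop) (by fun_prop) ?_)
    (Continuous.div (by fun_prop) (by fun_prop) ?_))
  · exact fun y => mul_ne_zero (by norm_num) (pow_ne_zero _ (hh_ne _))
  · exact fun y => mul_ne_zero (by norm_num) (pow_ne_zero _ (hh_ne _))

lemma PhiI_re_anti (hb : 0 ≤ b) (hc : 0 < c) : AntitoneOn (fun y => (PhiI b c y).re) (Ici 0) := by
  have hd : ∀ y, HasDerivAt (fun y => (PhiI b c y).re) ((pI b c y).im) y := by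
    intro y
    have := Complex.reCLM.hasFDerivAt.comp_hasDerivAt y (PhiI_hasDerivAt hc b y)
    refine this.congr_deriv ?_
    simp
  refine antitoneOn_of_deriv_nonpos (convex_Ici 0) ?_ ?_ ?_
  · exact fun y _ => (hd y).continuousAt.continuousWithinAt
  · exact fun y _ => (hd y).differentiableAt.differentiableWithinAt
  · intro y hy
    rw [interior_Ici] at hy
    rw [(hd y).deriv]
    exact pI_im hb hc (le_of_lt hy)

lemma gI_data (hb : 0 ≤ b) (hc : cst b ≤ c) :
    VData 0 (PhiI b c) (gI b c) ∧ ∫ s in Ioi (0 : ℝ), ‖gI b c s‖ ≤ 1 / 8 := by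
  have hc1 : 1 ≤ c := (cst_ge hb).trans hc
  have hc0 : 0 < c := by linarith
  have hi : IntegrableOn (fun y : ℝ => 3 * (3 + b) ^ 2 / Real.sqrt c * (1 + y ^ 2)⁻¹) (Ioi 0) :=
    (integrable_inv_one_add_sq.const_mul _).integrableOn
  have h_integ : IntegrableOn (gI b c) (Ioi 0) := by
    refine Integrable.mono' hi (gI_cont hc0 b).aestronglyMeasurable ?_
    filter_upwards [self_mem_ae_restrict measurableSet_Ioi] with s hs
    exact gI_le hb hc1 (le_of_lt hs)
  have hsm : ∫ s in Ioi (0 : ℝ), ‖gI b c s‖ ≤ 1 / 8 := by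
    have h1 : ∫ s in Ioi (0 : ℝ), ‖gI b c s‖ ≤ ∫ s in Ioi (0 : ℝ), 3 * (3 + b) ^ 2 / Real.sqrt c * (1 + s ^ 2)⁻¹ :=
      setIntegral_mono_on h_integ.norm hi measurableSet_Ioi (fun s hs => gI_le hb hc1 (le_of_lt hs))
    rw [integral_const_mul, integral_Ioi_inv_one_add_sq] at h1
    simp only [Real.arctan_zero, sub_zero] at h1
    have hs : 48 * (3 + b) ^ 2 ≤ Real.sqrt c := by
      apply Real.le_sqrt_of_sq_le; exact hc
    have hp := Real.pi_lt_four
    have hpos : 0 < (3 + b) ^ 2 := by positivity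
    refine h1.trans ?_
    rw [div_mul_eq_mul_div, div_le_iff₀ (by linarith)]
    nlinarith
  refine ⟨⟨?_, ?_, (gI_cont hc0 b).continuousOn, h_integ, by linarith⟩, hsm⟩
  · exact fun y _ => (PhiI_hasDerivAt hc0 b y).continuousAt.continuousWithinAt
  · intro y s hy hs
    exact PhiI_re_anti hb hc0 (mem_Ici.2 hy) (mem_Ici.2 (hy.trans hs)) hs

end
end Cub

set_option linter.unusedVariables false
namespace Cub
open MeasureTheory Set Filter Topology

section
variable {b c c' y β : ℝ}

lemma tail_tendsto {f : ℝ → ℝ} (hf : IntegrableOn f (Ioi 0)) :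
    Tendsto (fun y => ∫ s in Ioi y, f s) atTop (𝓝 0) := by
  have h1 := intervalIntegral_tendsto_integral_Ioi (0 : ℝ) hf tendsto_id
  have h2 : Tendsto (fun y => (∫ s in Ioi (0 : ℝ), f s) - ∫ s in (0 : ℝ)..y, f s) atTop (𝓝 0) := by
    have := (tendsto_const_nhds (x := ∫ s in Ioi (0 : ℝ), f s)).sub h1
    rwa [sub_self] at this
  refine h2.congr' ?_
  filter_upwards [Ici_mem_atTop 0] with y hy
  rw [← intervalIntegral.integral_Ioi_sub_Ioi hf hy]; ring

lemma wI_eq (b c y : ℝ) : (((0 : ℝ) : ℂ) + y * I) ^ 3 - (b : ℂ) * (((0 : ℝ) : ℂ) + y * I) + c = wI b c y := by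
  unfold wI
  push_cast
  have : I ^ 3 = -I := by rw [pow_succ, I_sq]; ring
  linear_combination (y : ℂ) ^ 3 * this

lemma rhoI_ne : rhoI b c y ≠ 0 := one_div_ne_zero (hh_ne _)

lemma poly_exp (y : ℝ) : y ≤ Real.exp (y ^ 2) ∧ y ^ 2 ≤ Real.exp (y ^ 2) ∧ 1 ≤ Real.exp (y ^ 2) ∧
    y ^ 3 ≤ 5 * Real.exp (y ^ 2) := by
  have h1 := Real.add_one_le_exp (y ^ 2)
  have h2 := Real.add_one_le_exp (y ^ 2 / 2)
  have h3 : Real.exp (y ^ 2) = Real.exp (y ^ 2 / 2) ^ 2 := by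
    rw [← Real.exp_nat_mul]; congr 1; push_cast; ring
  refine ⟨by nlinarith [sq_nonneg (y - 1)], by linarith, by nlinarith [sq_nonneg y], ?_⟩
  have : (y ^ 2 / 2 + 1) ^ 2 ≤ Real.exp (y ^ 2) := by
    rw [h3]; gcongr
  nlinarith [sq_nonneg (y ^ 2 - y), sq_nonneg y, sq_nonneg (y^2)]

theorem axis_sol (hβ : 0 ≤ β) (hc : cst (4 * β) ≤ c) {p q : ℂ} (N : NormSol β c p q) :
    ∃ (γ : ℂ) (m : ℝ → ℂ), (∀ y : ℝ, 0 < y → ent (4 * β) c p q ((0 : ℝ) + y * I)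
        = γ * (rhoI (4 * β) c y * exp (PhiI (4 * β) c y) * m y)) ∧
      (∀ y, 0 ≤ y → ‖m y - 1‖ ≤ 1 / 2) ∧ Tendsto m atTop (𝓝 1) := by
  have hb : 0 ≤ 4 * β := by linarith
  have hc1 : 1 ≤ c := (cst_ge hb).trans hc
  have hc0 : 0 < c := by linarith
  obtain ⟨D, hs⟩ := gI_data hb hc
  obtain ⟨m, B, S⟩ := D.exists_sol
  have hm : ∀ y, 0 ≤ y → ‖m y - 1‖ ≤ 1 / 2 := fun y hy => by
    have h1 := S.m_sub_one D hy
    have h2 := D.tail_le hy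
    linarith
  have hB : ∀ y, 0 ≤ y → ‖B y‖ ≤ 1 := fun y hy => by
    have h1 := S.B_le D hy
    have h2 := D.tail_le hy
    linarith
  have hm0 : ∀ y, 0 ≤ y → m y ≠ 0 := fun y hy h0 => by
    have := hm y hy
    rw [h0] at this; norm_num at this
  have hmt : Tendsto m atTop (𝓝 1) := by
    rw [tendsto_iff_norm_sub_tendsto_zero]
    have h1 := (tail_tendsto D.int.norm).const_mul 4
    rw [mul_zero] at h1
    refine squeeze_zero' (Eventually.of_forall fun _ => norm_nonneg _) ?_ h1
    filter_upwards [Ici_mem_atTop 0] with y hy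
    exact S.m_sub_one D hy
  set b := 4 * β with hbd
  set u : ℝ → ℂ := fun y => rhoI b c y * exp (PhiI b c y) * m y with hu
  set u1 : ℝ → ℂ := fun y => exp (PhiI b c y) * (rho1I b c y * m y + -I / rhoI b c y * (m y - 2 * B y)) with hu1
  have ode : ∀ y, 0 < y → HasDerivAt u (u1 y) y ∧ HasDerivAt u1 (-wI b c y * u y) y := by
    intro y hy
    refine lg_hasDerivAt (Φ := PhiI b c) (ρ := rhoI b c) (ρ1 := rho1I b c) (m := m) (B := B) (y := y)
      (κ := -I) (q := -I * pI b c y) (g := gI b c y) (ρ2 := rho2I b c y) (V := -wI b c y) rhoI_ne ?_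
      (PhiI_hasDerivAt hc0 b y) (rhoI_hasDerivAt hc0 b y) (rho1I_hasDerivAt hc0 b y)
      (S.m_hasDerivAt D hy (PhiI_hasDerivAt hc0 b y)) (S.B_hasDerivAt D hy (PhiI_hasDerivAt hc0 b y))
      (gI_eq hc0 b y)
    unfold rhoI pI
    have := hh_ne (wI b c y)
    field_simp
  have hU : ∀ y : ℝ, 0 < y → HasDerivAt (fun y : ℝ => ent b c p q ((0 : ℝ) + y * I))
      ((fun y : ℝ => I * ent1 b c p q ((0 : ℝ) + y * I)) y) y := fun y _ => (ent_vert b c p q 0 y).1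
  have hU1 : ∀ y : ℝ, 0 < y → HasDerivAt (fun y : ℝ => I * ent1 b c p q ((0 : ℝ) + y * I))
      (-wI b c y * (fun y : ℝ => ent b c p q ((0 : ℝ) + y * I)) y) y := fun y _ => by
    have := (ent_vert b c p q 0 y).2
    rw [wI_eq] at this
    exact this
  -- bounds
  have hexp : ∀ y, 0 ≤ y → ‖exp (PhiI b c y)‖ ≤ 1 := by
    intro y hy
    apply norm_exp_le_one
    have := PhiI_re_anti hb hc0 (mem_Ici.2 le_rfl) (mem_Ici.2 hy) hy
    simpa [PhiI] using this
  have bu : ∀ y, 0 ≤ y → ‖u y‖ ≤ 2 := by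
    intro y hy
    have h1 := hI_ge hb hc1 hy
    have h2 : ‖rhoI b c y‖ ≤ 1 := by
      unfold rhoI; rw [norm_div, norm_one, div_le_one (by linarith)]; exact h1
    rw [hu]; simp only [norm_mul]
    calc ‖rhoI b c y‖ * ‖exp (PhiI b c y)‖ * ‖m y‖ ≤ 1 * 1 * 2 := by
          gcongr
          · exact hexp y hy
          · exact S.bd y hy
      _ = 2 := by norm_num
  have bu1 : ∃ K, 0 < K ∧ ∀ y, 0 ≤ y → ‖u1 y‖ ≤ K * Real.exp (y ^ 2) := by
    refine ⟨2 * (3 + b) + 4 * (c + 5 + b), by positivity, fun y hy => ?_⟩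
    have h1 := hI_ge hb hc1 hy
    have h4 := hh_norm (wI_ne (b := b) (c := c) (y := y) hc0)
    have h5 := wI_le hb hc1 hy
    obtain ⟨p1, p2, p3, p4⟩ := poly_exp y
    have h6 : ‖hh (wI b c y)‖ ≤ ‖wI b c y‖ := by
      rw [← h4]; exact le_self_pow₀ h1 (by norm_num)
    have e1 : ‖wI1 b y‖ = 3 * y ^ 2 + b := by
      unfold wI1; rw [norm_mul, norm_neg, Complex.norm_I, mul_one, Complex.norm_real,
        Real.norm_of_nonneg (by positivity)]
    have h7 : ‖rho1I b c y‖ ≤ 3 * y ^ 2 + b := by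
      unfold rho1I
      rw [norm_div, norm_neg, e1, norm_mul, norm_pow]
      refine div_le_self (by positivity) ?_
      have := one_le_pow₀ h1 (n := 5)
      norm_num; linarith
    have h8 : ‖-I / rhoI b c y‖ ≤ c + (y ^ 3 + b * y) := by
      have : -I / rhoI b c y = -I * hh (wI b c y) := by
        unfold rhoI; have := hh_ne (wI b c y); field_simp
      rw [this, norm_mul, norm_neg, Complex.norm_I, one_mul]
      linarith
    have n5 : ‖m y - 2 * B y‖ ≤ 4 := by
      refine (norm_sub_le _ _).trans ?_
      rw [norm_mul, Complex.norm_two]; linarith [S.bd y hy, hB y hy]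
    rw [hu1]; simp only
    rw [norm_mul]
    have n6 : ‖rho1I b c y * m y + -I / rhoI b c y * (m y - 2 * B y)‖
        ≤ (3 * y ^ 2 + b) * 2 + (c + (y ^ 3 + b * y)) * 4 := by
      refine (norm_add_le _ _).trans ?_
      rw [norm_mul, norm_mul]
      gcongr
      exact S.bd y hy
    calc ‖exp (PhiI b c y)‖ * ‖rho1I b c y * m y + -I / rhoI b c y * (m y - 2 * B y)‖
        ≤ 1 * ((3 * y ^ 2 + b) * 2 + (c + (y ^ 3 + b * y)) * 4) := by
          gcongr
          exact hexp y hy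
      _ ≤ _ := by
          have := mul_le_mul_of_nonneg_left p1 hb
          have := mul_le_mul_of_nonneg_left p3 hb
          have := mul_le_mul_of_nonneg_left p3 hc0.le
          nlinarith
  obtain ⟨K, hK, bu1⟩ := bu1
  obtain ⟨C, Y, hC, hdec⟩ := N.dec 2 (by norm_num)
  have hWt : Tendsto (fun y : ℝ => (fun y : ℝ => ent b c p q ((0 : ℝ) + y * I)) y * u1 y
      - (fun y : ℝ => I * ent1 b c p q ((0 : ℝ) + y * I)) y * u y) atTop (𝓝 0) := by
    have h1 : Tendsto (fun y : ℝ => C * (K + 2) * Real.exp (-y)) atTop (𝓝 0) := by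
      have := Real.tendsto_exp_neg_atTop_nhds_zero.const_mul (C * (K + 2))
      rwa [mul_zero] at this
    refine squeeze_zero_norm' ?_ h1
    filter_upwards [Ici_mem_atTop Y, Ici_mem_atTop 1] with y hy hy1
    have hy0 : (0 : ℝ) ≤ y := zero_le_one.trans hy1
    have hy1' : (1 : ℝ) ≤ y := hy1
    obtain ⟨d1, d2⟩ := hdec y hy
    refine (norm_sub_le _ _).trans ?_
    rw [norm_mul (ent b c p q _) (u1 y), norm_mul _ (u y), norm_mul I, Complex.norm_I, one_mul]
    have E : Real.exp (-(2 * y ^ 2)) * Real.exp (y ^ 2) ≤ Real.exp (-y) := by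
      rw [← Real.exp_add, Real.exp_le_exp]; nlinarith
    have E2 : Real.exp (-(2 * y ^ 2)) ≤ Real.exp (-y) := by
      rw [Real.exp_le_exp]; nlinarith
    calc _ ≤ (C * Real.exp (-(2 * y ^ 2))) * (K * Real.exp (y ^ 2)) + (C * Real.exp (-(2 * y ^ 2))) * 2 := by
          gcongr
          · exact bu1 y hy0
          · exact bu y hy0
      _ = C * K * (Real.exp (-(2 * y ^ 2)) * Real.exp (y ^ 2)) + C * 2 * Real.exp (-(2 * y ^ 2)) := by ring
      _ ≤ C * K * Real.exp (-y) + C * 2 * Real.exp (-y) := by gcongr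
      _ = _ := by ring
  have hw : ∀ y : ℝ, 0 < y → _ := fun y hy => wr_zero_of_tendsto hU hU1 (fun y hy => (ode y hy).1)
    (fun y hy => (ode y hy).2) hWt hy
  have hp : ∀ y : ℝ, 0 < y → _ := fun y hy => wr_prop hU (fun y hy => (ode y hy).1)
    (fun y hy => mul_ne_zero (mul_ne_zero rhoI_ne (Complex.exp_ne_zero _)) (hm0 y hy.le)) hw
    (y0 := 1) one_pos hy
  exact ⟨_, m, hp, hm, hmt⟩

noncomputable def JJ (b c c' : ℝ) : ℂ := ∫ s in Ioi (0 : ℝ), (pI b c s - pI b c' s)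

lemma p_sub (hc : 0 < c) (hc' : 0 < c') (b y : ℝ) :
    (pI b c y - pI b c' y) * (pI b c y + pI b c' y) = ((c - c' : ℝ) : ℂ) := by
  have h1 := pI_sq hc b y
  have h2 := pI_sq hc' b y
  have : wI b c y - wI b c' y = ((c - c' : ℝ) : ℂ) := by unfold wI; push_cast; ring
  rw [← this, ← h1, ← h2]; ring

lemma p_sub_le (hb : 0 ≤ b) (hc : 1 ≤ c) (hc' : 1 ≤ c') (hy : 0 ≤ y) :
    ‖pI b c y - pI b c' y‖ ≤ 4 * |c - c'| * (1 / Real.sqrt (1 + y) ^ 3) := by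
  have hc0 : 0 < c := by linarith
  have hc0' : 0 < c' := by linarith
  have h := congrArg norm (p_sub hc0 hc0' b y)
  rw [norm_mul, Complex.norm_real, Real.norm_eq_abs] at h
  have h1 := pI_re hc0 b y
  have h2 := pI_re hc0' b y
  have h3 : (pI b c y).re ≤ ‖pI b c y + pI b c' y‖ := by
    refine le_trans ?_ (Complex.re_le_norm _)
    rw [Complex.add_re]; linarith
  have h4 := pI_re_sq hc0 b y
  rw [pI_norm hc0] at h4
  have h5 := (wI_ge hb hc hy).2
  have hs := Real.sq_sqrt (by linarith : (0 : ℝ) ≤ 1 + y)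
  have hs0 := Real.sqrt_pos.2 (by linarith : (0 : ℝ) < 1 + y)
  set t := Real.sqrt (1 + y) with ht
  have h6 : t ^ 3 ≤ 4 * (pI b c y).re := by
    refine le_of_sq_le_sq ?_ (by linarith)
    have : (t ^ 3) ^ 2 = (1 + y) ^ 3 := by rw [← hs]; ring
    rw [this]
    nlinarith [mul_nonneg (by linarith : 0 ≤ y + 1) (sq_nonneg (y - 1))]
  have h7 : ‖pI b c y - pI b c' y‖ * (t ^ 3 / 4) ≤ |c - c'| := by
    rw [← h]
    gcongr
    linarith
  have : 0 < t ^ 3 := by positivity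
  rw [mul_one_div, le_div_iff₀ this]
  linarith

lemma p_sub_int (hb : 0 ≤ b) (hc : 1 ≤ c) (hc' : 1 ≤ c') :
    IntegrableOn (fun s => pI b c s - pI b c' s) (Ioi 0) := by
  have ht := (tail_int (r := 1) (Y := 0) (by norm_num)).1.const_mul (4 * |c - c'|)
  refine Integrable.mono' ht ?_ ?_
  · exact ((pI_cont (by linarith) b).sub (pI_cont (by linarith) b)).aestronglyMeasurable
  · filter_upwards [self_mem_ae_restrict measurableSet_Ioi] with s hs
    exact p_sub_le hb hc hc' (le_of_lt hs)

lemma JJ_le (hb : 0 ≤ b) (hc : 1 ≤ c) (hc' : 1 ≤ c') : ‖JJ b c c'‖ ≤ 8 * |c - c'| := by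
  obtain ⟨t1, t2⟩ := tail_int (r := 1) (Y := 0) (by norm_num)
  have ht := t1.const_mul (4 * |c - c'|)
  have : ‖JJ b c c'‖ ≤ ∫ s in Ioi (0 : ℝ), 4 * |c - c'| * (1 / Real.sqrt (1 + s) ^ 3) := by
    refine norm_integral_le_of_norm_le ht ?_
    filter_upwards [self_mem_ae_restrict measurableSet_Ioi] with s hs
    exact p_sub_le hb hc hc' (le_of_lt hs)
  rw [integral_const_mul, t2] at this
  refine this.trans (le_of_eq ?_)
  norm_num; ring

lemma JJ_sub (hb : 0 ≤ b) {c1 c2 : ℝ} (h1 : 1 ≤ c1) (h2 : 1 ≤ c2) (hc' : 1 ≤ c') :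
    JJ b c1 c' - JJ b c2 c' = JJ b c1 c2 := by
  unfold JJ
  rw [← integral_sub (p_sub_int hb h1 hc') (p_sub_int hb h2 hc')]
  congr 1; ext s; ring

lemma JJ_cont (hb : 0 ≤ b) (hc' : 1 ≤ c') : ContinuousOn (fun c => JJ b c c') (Ici 1) := by
  refine (LipschitzOnWith.of_dist_le_mul (K := 8) ?_).continuousOn
  intro c1 h1 c2 h2
  rw [dist_eq_norm, Real.dist_eq, JJ_sub hb h1 h2 hc']
  exact JJ_le hb h1 h2

lemma JJ_re_ge (hb : 0 ≤ b) (hc' : 1 ≤ c') (h : c' ≤ c) :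
    Real.sqrt c - (c' + 1 + b) ≤ (JJ b c c').re := by
  have hc : 1 ≤ c := hc'.trans h
  have hc0 : 0 < c := by linarith
  have hc0' : 0 < c' := by linarith
  have hi := p_sub_int hb hc hc'
  have e : (JJ b c c').re = ∫ s in Ioi (0 : ℝ), (pI b c s - pI b c' s).re := by
    unfold JJ; exact (integral_re hi).symm
  have hir : IntegrableOn (fun s => (pI b c s - pI b c' s).re) (Ioi 0) := hi.re
  have hpos : ∀ s, 0 ≤ (pI b c s - pI b c' s).re := by
    intro s
    have h1 := p_sub hc0 hc0' b s
    have r1 := pI_re hc0 b s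
    have r2 := pI_re hc0' b s
    set z := pI b c s - pI b c' s
    set w := pI b c s + pI b c' s with hw
    have hwr : 0 < w.re := by rw [hw, Complex.add_re]; linarith
    have i1 := congrArg Complex.re h1
    have i2 := congrArg Complex.im h1
    rw [Complex.mul_re, Complex.ofReal_re] at i1
    rw [Complex.mul_im, Complex.ofReal_im] at i2
    have : z.re * (w.re ^ 2 + w.im ^ 2) = (c - c') * w.re := by
      linear_combination w.re * i1 + w.im * i2
    by_contra hcon
    push Not at hcon
    have : 0 ≤ (c - c') * w.re := mul_nonneg (by linarith) hwr.le
    have : 0 < w.re ^ 2 + w.im ^ 2 := by positivity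
    nlinarith
  have h01 : ∫ s in Ioc (0 : ℝ) 1, (pI b c s - pI b c' s).re ≤ ∫ s in Ioi (0 : ℝ), (pI b c s - pI b c' s).re :=
    setIntegral_mono_set hir (Eventually.of_forall hpos) Ioc_subset_Ioi_self.eventuallyLE
  have hlow : ∫ s in Ioc (0 : ℝ) 1, (Real.sqrt c - (c' + 1 + b)) ≤ ∫ s in Ioc (0 : ℝ) 1, (pI b c s - pI b c' s).re := by
    refine setIntegral_mono_on (integrableOn_const (by simp)) (hir.mono_set Ioc_subset_Ioi_self) measurableSet_Ioc ?_
    intro s hs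
    have r1 := pI_re hc0 b s
    have r2 := (pI_parts hc0 b s).1
    have : Real.sqrt c ≤ (pI b c s).re := by
      apply Real.sqrt_le_iff.2 ⟨r1.le, by nlinarith⟩
    have h3 := Complex.re_le_norm (pI b c' s)
    have h4 := pI_norm hc0' b s
    have h5 := (wI_ge hb hc' hs.1.le).1
    have h6 := wI_le hb hc' hs.1.le
    have h7 : s ^ 3 ≤ 1 := pow_le_one₀ hs.1.le hs.2
    have h8 : b * s ≤ b := mul_le_of_le_one_right hb hs.2
    have h9 : ‖pI b c' s‖ ≤ ‖wI b c' s‖ := by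
      rw [← h4]
      refine le_self_pow₀ ?_ (by norm_num)
      by_contra hcon
      push Not at hcon
      have : ‖pI b c' s‖ ^ 2 < 1 := pow_lt_one₀ (norm_nonneg _) hcon (by norm_num)
      linarith
    rw [Complex.sub_re]; linarith
  have hk : ∫ s in Ioc (0 : ℝ) 1, (Real.sqrt c - (c' + 1 + b)) = Real.sqrt c - (c' + 1 + b) := by
    simp
  rw [e]
  linarith

lemma ratio_tendsto (hb : 0 ≤ b) (hc : 1 ≤ c) (hc' : 1 ≤ c') :
    Tendsto (fun y => (rhoI b c' y * exp (PhiI b c' y)) / (rhoI b c y * exp (PhiI b c y))) atTop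
      (𝓝 (exp (I * JJ b c c'))) := by
  have hc0 : 0 < c := by linarith
  have hc0' : 0 < c' := by linarith
  have hp : Tendsto (fun y => pI b c y - pI b c' y) atTop (𝓝 0) := by
    have h1 : Tendsto (fun y => 4 * |c - c'| * (1 / Real.sqrt (1 + y) ^ 3)) atTop (𝓝 0) := by
      rw [← mul_zero (4 * |c - c'|)]
      refine Tendsto.const_mul _ ?_
      refine Tendsto.div_atTop tendsto_const_nhds ?_
      refine (tendsto_pow_atTop (by norm_num)).comp ?_
      exact Real.tendsto_sqrt_atTop.comp (tendsto_atTop_add_const_left _ 1 tendsto_id)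
    refine squeeze_zero_norm' ?_ h1
    filter_upwards [Ici_mem_atTop 0] with y hy
    exact p_sub_le hb hc hc' hy
  have hr : Tendsto (fun y => hh (wI b c y) / hh (wI b c' y)) atTop (𝓝 1) := by
    rw [tendsto_iff_norm_sub_tendsto_zero]
    have h2 := hp.norm.const_mul 2
    rw [norm_zero, mul_zero] at h2
    refine squeeze_zero' (Eventually.of_forall fun _ => norm_nonneg _) ?_ h2
    filter_upwards [Ici_mem_atTop 0] with y hy
    have n0 := hh_ne (wI b c' y)
    have e : hh (wI b c y) / hh (wI b c' y) - 1 = (hh (wI b c y) - hh (wI b c' y)) / hh (wI b c' y) := by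
      field_simp
    rw [e, norm_div]
    have g1 := hI_ge hb hc hy
    have g2 := hI_ge hb hc' hy
    have r1 := hI_re hc0 b y
    have r2 := hI_re hc0' b y
    have r3 := pI_re hc0 b y
    have e2 : pI b c y - pI b c' y = (hh (wI b c y) - hh (wI b c' y)) * (hh (wI b c y) + hh (wI b c' y)) := by
      unfold pI; ring
    rw [e2, norm_mul]
    have k : 1 / 2 ≤ ‖hh (wI b c y) + hh (wI b c' y)‖ := by
      refine le_trans ?_ (Complex.re_le_norm _)
      rw [Complex.add_re]
      have q1 : (hh (wI b c y)).re ^ 2 + (hh (wI b c y)).im ^ 2 = ‖hh (wI b c y)‖ ^ 2 := by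
        rw [Complex.sq_norm, Complex.normSq_apply]; ring
      unfold pI at r3
      rw [sq, Complex.mul_re] at r3
      nlinarith
    refine (div_le_self (norm_nonneg _) g2).trans ?_
    nlinarith [norm_nonneg (hh (wI b c y) - hh (wI b c' y))]
  have hJ := (intervalIntegral_tendsto_integral_Ioi (0 : ℝ) (p_sub_int hb hc hc') tendsto_id)
  have hE := ((hJ.const_mul I).cexp).mul hr
  rw [mul_one] at hE
  refine hE.congr ?_
  intro y
  have e1 : ∫ s in (0 : ℝ)..id y, (pI b c s - pI b c' s) =
      (∫ s in (0 : ℝ)..y, pI b c s) - ∫ s in (0 : ℝ)..y, pI b c' s :=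
    intervalIntegral.integral_sub ((pI_cont hc0 b).intervalIntegrable _ _) ((pI_cont hc0' b).intervalIntegrable _ _)
  rw [e1]
  have e2 : exp (PhiI b c' y) = exp (I * ((∫ s in (0 : ℝ)..y, pI b c s) - ∫ s in (0 : ℝ)..y, pI b c' s))
      * exp (PhiI b c y) := by
    rw [← Complex.exp_add]; congr 1; unfold PhiI; ring
  rw [e2]
  unfold rhoI
  have n0 := hh_ne (wI b c' y)
  have n1 := hh_ne (wI b c y)
  have n2 := Complex.exp_ne_zero (PhiI b c y)
  field_simp

end
end Cub

set_option linter.unusedVariables false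
namespace Cub
open MeasureTheory Set Filter Topology

section
variable {b c c' y β : ℝ}

lemma axis0 (hβ : 0 ≤ β) (hc : cst (4 * β) ≤ c) {p q : ℂ} (N : NormSol β c p q) :
    ∃ γ : ℂ, γ ≠ 0 ∧ Tendsto (fun y : ℝ => (rhoI (4 * β) c y * exp (PhiI (4 * β) c y)) / EE β ((0 : ℝ) + y * I))
      atTop (𝓝 γ⁻¹) ∧ ‖p * hh c - γ‖ ≤ 1 / 2 * ‖γ‖ := by
  have hb : 0 ≤ 4 * β := by linarith
  have hc1 : 1 ≤ c := (cst_ge hb).trans hc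
  have hc0 : 0 < c := by linarith
  obtain ⟨γ, m, h1, h2, h3⟩ := axis_sol hβ hc N
  have hm0 : ∀ y, 0 ≤ y → m y ≠ 0 := fun y hy h0 => by
    have := h2 y hy
    rw [h0] at this; norm_num at this
  have hl := N.lim.div h3 one_ne_zero
  rw [div_one] at hl
  have hl' : Tendsto (fun y : ℝ => γ * ((rhoI (4 * β) c y * exp (PhiI (4 * β) c y)) / EE β ((0 : ℝ) + y * I)))
      atTop (𝓝 1) := by
    refine hl.congr' ?_
    filter_upwards [Ioi_mem_atTop 0] with y hy
    simp only [Pi.div_apply]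
    rw [h1 y hy]
    have := hm0 y (le_of_lt hy)
    field_simp
  have hγ : γ ≠ 0 := by
    intro h0
    rw [h0] at hl'
    simp only [zero_mul] at hl'
    exact zero_ne_one (tendsto_nhds_unique tendsto_const_nhds hl')
  refine ⟨γ, hγ, ?_, ?_⟩
  · have := hl'.const_mul γ⁻¹
    rw [mul_one] at this
    refine this.congr ?_
    intro y
    rw [inv_mul_cancel_left₀ hγ]
  · have c1 : Tendsto (fun y : ℝ => ent (4 * β) c p q ((0 : ℝ) + y * I)) (𝓝[>] 0) (𝓝 p) := by
      have := (ent_vert (4 * β) c p q 0 0).1.continuousAt.tendsto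
      simp only [ofReal_zero, zero_mul, add_zero, ent_zero] at this
      refine Tendsto.mono_left ?_ nhdsWithin_le_nhds
      simpa using this
    have c2 : Tendsto (fun y : ℝ => γ * (rhoI (4 * β) c y * exp (PhiI (4 * β) c y))) (𝓝[>] 0)
        (𝓝 (γ * (1 / hh c * 1))) := by
      have k1 := (rhoI_hasDerivAt hc0 (4 * β) 0).continuousAt
      have k2 := (PhiI_hasDerivAt hc0 (4 * β) 0).continuousAt
      have := (k1.mul k2.cexp).tendsto.const_mul γ
      have e1 : rhoI (4 * β) c 0 = 1 / hh c := by simp [rhoI, wI]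
      have e2 : PhiI (4 * β) c 0 = 0 := by simp [PhiI]
      simp only [Pi.mul_apply, e1, e2, Complex.exp_zero] at this
      exact this.mono_left nhdsWithin_le_nhds
    have key : ‖p - γ * (1 / hh c * 1)‖ ≤ 1 / 2 * ‖γ * (1 / hh c * 1)‖ := by
      refine le_of_tendsto_of_tendsto (c1.sub c2).norm (c2.norm.const_mul (1 / 2)) ?_
      filter_upwards [self_mem_nhdsWithin] with y hy
      rw [h1 y hy]
      have : γ * (rhoI (4 * β) c y * exp (PhiI (4 * β) c y) * m y) - γ * (rhoI (4 * β) c y * exp (PhiI (4 * β) c y))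
          = γ * (rhoI (4 * β) c y * exp (PhiI (4 * β) c y)) * (m y - 1) := by ring
      rw [this, norm_mul]
      have := h2 y (le_of_lt hy)
      nlinarith [norm_nonneg (γ * (rhoI (4 * β) c y * exp (PhiI (4 * β) c y)))]
    have n0 := hh_ne (c : ℂ)
    have hn : 0 < ‖hh (c : ℂ)‖ := norm_pos_iff.2 n0
    have e1 : p * hh c - γ = (p - γ * (1 / hh c * 1)) * hh c := by field_simp
    have e2 : γ = (γ * (1 / hh c * 1)) * hh c := by field_simp
    rw [e1, norm_mul]
    conv_rhs => rw [e2, norm_mul]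
    nlinarith

lemma hh_real (hc : 0 < c) : ∃ t : ℝ, 0 < t ∧ hh c = t := by
  refine ⟨Real.exp (Real.log c / 4), Real.exp_pos _, ?_⟩
  unfold hh
  rw [← Complex.ofReal_log hc.le]
  push_cast; rfl

/-- asymptotics of the value at the origin -/
lemma origin_asym (hβ : 0 ≤ β) : ∃ γ0 : ℂ, γ0 ≠ 0 ∧ ∀ c p q, cst (4 * β) ≤ c → NormSol β c p q →
    ‖p * hh c - γ0 * exp (I * JJ (4 * β) c (cst (4 * β)))‖ ≤
      1 / 2 * ‖γ0 * exp (I * JJ (4 * β) c (cst (4 * β)))‖ := by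
  have hb : 0 ≤ 4 * β := by linarith
  have h1 := cst_ge hb
  set k := cst (4 * β) with hk
  obtain ⟨P, Q, hN, -⟩ := family hβ (C2 := k) (by linarith)
  obtain ⟨γ0, hγ0, hl0, -⟩ := axis0 hβ le_rfl (hN k ⟨by linarith, le_rfl⟩)
  refine ⟨γ0, hγ0, fun c p q hc N => ?_⟩
  obtain ⟨γ, hγ, hl, hle⟩ := axis0 hβ hc N
  have hr := ratio_tendsto hb (h1.trans hc) h1
  have hd := hl0.div hl (inv_ne_zero hγ)
  have : γ0⁻¹ / γ⁻¹ = exp (I * JJ (4 * β) c k) := by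
    refine tendsto_nhds_unique hd (hr.congr' ?_)
    filter_upwards [Ici_mem_atTop (200 * (1 + β) ^ 2), Ici_mem_atTop 0] with y hy hy0
    have hE : EE β ((0 : ℝ) + y * I) ≠ 0 := EE_ne (quad_line hβ le_rfl hy0 (by
      have : 200 * (1 + β) ^ 2 ≤ y := hy
      linarith))
    simp only [Pi.div_apply]
    rw [div_div_div_cancel_right₀ hE]
  have e : γ0 * exp (I * JJ (4 * β) c k) = γ := by
    rw [← this]; field_simp
  rw [e]; exact hle

theorem exists_c (hβ : 0 ≤ β) (M : ℝ) : ∃ c p q, M < c ∧ 0 < c ∧ NormSol β c p q ∧ p.im = 0 := by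
  have hb : 0 ≤ 4 * β := by linarith
  have h1 := cst_ge hb
  obtain ⟨γ0, hγ0, hA⟩ := origin_asym hβ
  set k := cst (4 * β) with hk
  set c0 := max M k + 1 with hc0
  have hMc : M < c0 := by have := le_max_left M k; linarith
  have hkc : k ≤ c0 := by have := le_max_right M k; linarith
  set R : ℝ → ℝ := fun c => (JJ (4 * β) c k).re with hR
  have hRc : ContinuousOn R (Ici c0) := by
    refine Complex.continuous_re.comp_continuousOn ((JJ_cont hb h1).mono ?_)
    intro x hx; exact (h1.trans hkc).trans hx
  have hRt : Tendsto R atTop atTop := by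
    refine tendsto_atTop_mono' atTop ?_ (tendsto_atTop_add_const_right _ (-(k + 1 + 4 * β)) Real.tendsto_sqrt_atTop)
    filter_upwards [Ici_mem_atTop k] with c hc
    have := JJ_re_ge hb h1 hc
    simp only [hR]; linarith
  have hsurj : ∀ θ, R c0 ≤ θ → ∃ c, c0 ≤ c ∧ R c = θ := by
    intro θ hθ
    obtain ⟨c1, hc1, hθ1⟩ := ((hRt.eventually_ge_atTop θ).and (eventually_ge_atTop c0)).exists
    obtain ⟨c, hc, e⟩ := intermediate_value_Icc hθ1 (hRc.mono Icc_subset_Ici_self) ⟨hθ, hc1⟩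
    exact ⟨c, hc.1, e⟩
  obtain ⟨n, hn⟩ := exists_nat_gt ((R c0 + arg γ0) / (2 * Real.pi))
  have hpi := Real.pi_pos
  rw [div_lt_iff₀ (by positivity)] at hn
  obtain ⟨c1, hc1, e1⟩ := hsurj (Real.pi / 2 - arg γ0 + n * (2 * Real.pi)) (by linarith)
  obtain ⟨c2, hc2, e2⟩ := hsurj (Real.pi / 2 - arg γ0 + n * (2 * Real.pi) + Real.pi) (by linarith)
  have hform : ∀ c θ, R c = Real.pi / 2 - arg γ0 + n * (2 * Real.pi) + θ →
      γ0 * exp (I * JJ (4 * β) c k) = ((‖γ0‖ * Real.exp (-(JJ (4 * β) c k).im) : ℝ) : ℂ) * I * exp (θ * I) := by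
    intro c θ h
    have hJ : JJ (4 * β) c k = (R c : ℂ) + (JJ (4 * β) c k).im * I := (Complex.re_add_im _).symm
    conv_lhs => rw [← Complex.norm_mul_exp_arg_mul_I γ0]
    have : I * JJ (4 * β) c k = ((-(JJ (4 * β) c k).im : ℝ) : ℂ) + (R c : ℂ) * I := by
      conv_lhs => rw [hJ]
      push_cast
      linear_combination ((JJ (4 * β) c k).im : ℂ) * I_mul_I
    rw [this, mul_assoc, ← Complex.exp_add]
    have e3 : (arg γ0 : ℂ) * I + (((-(JJ (4 * β) c k).im : ℝ) : ℂ) + (R c : ℂ) * I)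
        = ((-(JJ (4 * β) c k).im : ℝ) : ℂ) + (Real.pi / 2 * I) + θ * I + n * (2 * Real.pi * I) := by
      rw [h]; push_cast; ring
    rw [e3, Complex.exp_add, Complex.exp_nat_mul_two_pi_mul_I, mul_one, Complex.exp_add, Complex.exp_add,
      Complex.exp_pi_div_two_mul_I]
    push_cast; ring
  set C2 := max c1 c2 with hC2
  have hk0 : 0 ≤ c0 := by linarith
  obtain ⟨P, Q, hN, hPc⟩ := family hβ (C2 := C2) (hk0.trans (hc1.trans (le_max_left _ _)))
  have himg : ∀ c, c0 ≤ c → c ≤ C2 → ∀ s : ℝ, ∀ A : ℝ, 0 < A → 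
      γ0 * exp (I * JJ (4 * β) c k) = (A : ℂ) * (s * I) → |s| = 1 → 0 < s * (P c).im := by
    intro c h hcC s A hA0 hf hs
    have h3 := hA c (P c) (Q c) (hkc.trans h) (hN c ⟨hk0.trans h, hcC⟩)
    rw [hf] at h3
    obtain ⟨t, ht, et⟩ := hh_real (c := c) (by linarith)
    rw [et] at h3
    have h4 := Complex.abs_im_le_norm (P c * t - (A : ℂ) * (s * I))
    have e4 : (P c * t - (A : ℂ) * (s * I)).im = (P c).im * t - A * s := by simp
    have e5 : ‖(A : ℂ) * (s * I)‖ = A := by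
      rw [norm_mul, norm_mul, Complex.norm_I, mul_one, Complex.norm_real, Complex.norm_real,
        Real.norm_eq_abs, Real.norm_eq_abs, hs, abs_of_pos hA0, mul_one]
    rw [e4] at h4
    rw [e5] at h3
    have h5 := h4.trans h3
    have hs2 : s = 1 ∨ s = -1 := by
      rcases abs_eq (zero_le_one) |>.1 hs with h | h <;> simp [h]
    rw [abs_le] at h5
    rcases hs2 with rfl | rfl
    · have : 0 < (P c).im * t := by linarith
      have := pos_of_mul_pos_left this ht.le
      linarith
    · have : 0 < (-(P c).im) * t := by linarith
      have := pos_of_mul_pos_left this ht.le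
      linarith
  have hpos1 : 0 < (P c1).im := by
    have := himg c1 hc1 (le_max_left _ _) 1 (‖γ0‖ * Real.exp (-(JJ (4 * β) c1 k).im))
      (mul_pos (norm_pos_iff.2 hγ0) (Real.exp_pos _)) (by
        rw [hform c1 0 (by linarith)]; simp) (by simp)
    linarith
  have hneg2 : (P c2).im < 0 := by
    have := himg c2 hc2 (le_max_right _ _) (-1) (‖γ0‖ * Real.exp (-(JJ (4 * β) c2 k).im))
      (mul_pos (norm_pos_iff.2 hγ0) (Real.exp_pos _)) (by
        rw [hform c2 Real.pi (by linarith), Complex.exp_pi_mul_I]; simp) (by simp)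
    linarith
  have hsub : uIcc c1 c2 ⊆ Icc 0 C2 := by
    intro x hx
    rw [uIcc, mem_Icc] at hx
    exact ⟨hk0.trans ((le_min hc1 hc2).trans hx.1), hx.2⟩
  have hcont : ContinuousOn (fun c => (P c).im) (uIcc c1 c2) :=
    Complex.continuous_im.comp_continuousOn (hPc.mono hsub)
  have hmem : (0 : ℝ) ∈ uIcc (P c1).im (P c2).im := by
    rw [uIcc_of_ge (by linarith)]; exact ⟨hneg2.le, hpos1.le⟩
  obtain ⟨c, hc, e⟩ := intermediate_value_uIcc hcont hmem
  have hcc : c0 ≤ c := by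
    rw [uIcc, mem_Icc] at hc
    exact (le_min hc1 hc2).trans hc.1
  exact ⟨c, P c, Q c, by linarith, by linarith, hN c (hsub hc), e⟩

end
end Cub

set_option linter.unusedVariables false
namespace Cub
open MeasureTheory Set Filter Topology

section
variable {b c r Y β : ℝ} {p q : ℂ}

lemma dec_line (hβ : 0 ≤ β) (hc : 0 ≤ c) (N : NormSol β c p q) (hr : 0 ≤ r) {K : ℝ} (hK : 0 ≤ K) :
    ∃ C Y : ℝ, 0 < C ∧ ∀ y : ℝ, Y ≤ y →
    ‖ent (4 * β) c p q (r + y * I)‖ ≤ C * Real.exp (-(K * y ^ 2)) ∧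
    ‖ent1 (4 * β) c p q (r + y * I)‖ ≤ C * Real.exp (-(K * y ^ 2)) := by
  set b := 4 * β with hb
  have hb0 : 0 ≤ b := by linarith
  set K0 := 8 + 2 * b + c with hK0
  have hK00 : 0 ≤ K0 := by positivity
  obtain ⟨C, Y, hC, hd⟩ := N.dec (K + K0 * r + 1) (by positivity)
  refine ⟨C, max Y (max 1 r), hC, fun y hy => ?_⟩
  have hyY : Y ≤ y := (le_max_left _ _).trans hy
  have hy1 : 1 ≤ y := (le_max_left _ _).trans ((le_max_right _ _).trans hy)
  have hyr : r ≤ y := (le_max_right _ _).trans ((le_max_right _ _).trans hy)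
  obtain ⟨d1, d2⟩ := hd y hyY
  set f : ℝ → ℂ × ℂ := fun s => (ent1 b c p q (s + y * I), (y : ℂ) * ent b c p q (s + y * I)) with hf
  set f' : ℝ → ℂ × ℂ := fun s => (((s + y * I : ℂ) ^ 3 - b * (s + y * I) + c) * ent b c p q (s + y * I),
    (y : ℂ) * ent1 b c p q (s + y * I)) with hf'
  have hder : ∀ s, HasDerivAt f (f' s) s := fun s =>
    (ent_horiz b c p q y s).2.prodMk ((ent_horiz b c p q y s).1.const_mul (y : ℂ))
  have ny : ‖(y : ℂ)‖ = y := by rw [Complex.norm_real, Real.norm_of_nonneg (by linarith)]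
  have bound : ∀ s ∈ Ico 0 r, ‖f' s‖ ≤ (K0 * y ^ 2) * ‖f s‖ + 0 := by
    intro s hs
    have hx : ‖(s + y * I : ℂ)‖ ≤ 2 * y := by
      refine (norm_add_le _ _).trans ?_
      rw [norm_mul, Complex.norm_I, mul_one, ny, Complex.norm_real, Real.norm_of_nonneg hs.1]
      linarith [hs.2]
    have hV : ‖(s + y * I : ℂ) ^ 3 - b * (s + y * I) + c‖ ≤ K0 * y ^ 3 := by
      refine (norm_add_le _ _).trans ?_
      refine (add_le_add_left (norm_sub_le _ _) _).trans ?_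
      rw [norm_pow, norm_mul, Complex.norm_real, Complex.norm_real, Real.norm_of_nonneg hb0, Real.norm_of_nonneg hc]
      have y3 : 1 ≤ y ^ 3 := one_le_pow₀ hy1
      have yy3 : y ≤ y ^ 3 := le_self_pow₀ hy1 (by norm_num)
      calc ‖(s + y * I : ℂ)‖ ^ 3 + b * ‖(s + y * I : ℂ)‖ + c ≤ (2 * y) ^ 3 + b * (2 * y) + c := by gcongr
        _ ≤ 8 * y ^ 3 + b * (2 * y ^ 3) + c * y ^ 3 := by
          have := mul_le_mul_of_nonneg_left y3 hc
          have := mul_le_mul_of_nonneg_left yy3 hb0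
          nlinarith
        _ = _ := by rw [hK0]; ring
    have n1 : ‖ent1 b c p q (s + y * I)‖ ≤ ‖f s‖ := norm_fst_le (f s)
    have n2 : ‖(y : ℂ) * ent b c p q (s + y * I)‖ ≤ ‖f s‖ := norm_snd_le (f s)
    rw [add_zero, Prod.norm_def]
    refine max_le ?_ ?_
    · simp only [hf', norm_mul]
      rw [norm_mul, ny] at n2
      calc _ ≤ K0 * y ^ 3 * ‖ent b c p q (s + y * I)‖ := by gcongr
        _ = K0 * y ^ 2 * (y * ‖ent b c p q (s + y * I)‖) := by ring
        _ ≤ _ := by gcongr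
    · simp only [hf', norm_mul]
      rw [ny]
      have : y ≤ K0 * y ^ 2 := by
        have : y ≤ y ^ 2 := le_self_pow₀ hy1 (by norm_num)
        nlinarith
      gcongr
  have h0 : ‖f 0‖ ≤ y * (C * Real.exp (-((K + K0 * r + 1) * y ^ 2))) := by
    rw [Prod.norm_def]
    have : 0 < C * Real.exp (-((K + K0 * r + 1) * y ^ 2)) := by positivity
    refine max_le ?_ ?_
    · simp only [hf]
      refine d2.trans ?_
      nlinarith
    · simp only [hf, norm_mul]
      rw [ny]
      gcongr
  have hg := norm_le_gronwallBound_of_norm_deriv_right_le (f := f) (f' := f') (K := K0 * y ^ 2) (ε := 0) (a := 0)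
    (b := r) (fun s _ => (hder s).continuousAt.continuousWithinAt) (fun s _ => (hder s).hasDerivWithinAt)
    h0 bound r ⟨hr, le_rfl⟩
  rw [gronwallBound_ε0, sub_zero] at hg
  have hfin : ‖f r‖ ≤ C * Real.exp (-(K * y ^ 2)) := by
    refine hg.trans ?_
    have e : y * (C * Real.exp (-((K + K0 * r + 1) * y ^ 2))) * Real.exp (K0 * y ^ 2 * r)
        = C * Real.exp (-(K * y ^ 2)) * (y * Real.exp (-(y ^ 2))) := by
      have : Real.exp (-((K + K0 * r + 1) * y ^ 2)) * Real.exp (K0 * y ^ 2 * r)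
          = Real.exp (-(K * y ^ 2)) * Real.exp (-(y ^ 2)) := by
        rw [← Real.exp_add, ← Real.exp_add]; congr 1; ring
      linear_combination (y * C) * this
    rw [e]
    have e2 : y * Real.exp (-(y ^ 2)) ≤ 1 := by
      rw [Real.exp_neg, ← div_eq_mul_inv, div_le_one (Real.exp_pos _)]
      exact (poly_exp y).1
    have : 0 < C * Real.exp (-(K * y ^ 2)) := by positivity
    nlinarith
  constructor
  · have n2 : ‖(y : ℂ) * ent b c p q (r + y * I)‖ ≤ ‖f r‖ := norm_snd_le (f r)
    rw [norm_mul, ny] at n2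
    have := norm_nonneg (ent b c p q (r + y * I))
    nlinarith
  · exact (norm_fst_le (f r)).trans hfin

lemma line_const (hβ : 0 ≤ β) (hc : 0 ≤ c) (N : NormSol β c p q) (hr : 0 ≤ r) (hY : 0 ≤ Y)
    (h : Rc β c ≤ r + Y) : ∃ (k : ℂ) (m : ℝ → ℂ), (∀ y : ℝ, Y < y →
      ent (4 * β) c p q (r + y * I) = k * (EE β (r + y * I) * m y)) ∧
      (∀ y, Y ≤ y → ‖m y - 1‖ ≤ 24 * (c + 1) / Real.sqrt (r + y) ∧ ‖m y - 1‖ ≤ 1 / 4) ∧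
      Tendsto m atTop (𝓝 1) := by
  obtain ⟨D, -⟩ := line_data hβ hc hr hY h
  obtain ⟨m, B, S⟩ := D.exists_sol
  have hm := fun y hy => line_m hβ hc hr hY h S (y := y) hy
  obtain ⟨C, Y1, hC, hd⟩ := dec_line hβ hc N hr (K := 1) (by norm_num)
  obtain ⟨C', hC', hd'⟩ := line_decay hβ hc hr hY h S (K := 0) le_rfl
  have ht : Tendsto (fun y : ℝ => ent (4 * β) c p q (r + y * I) * u1L β r m B y
      - (I * ent1 (4 * β) c p q (r + y * I)) * (EE β (r + y * I) * m y)) atTop (𝓝 0) := by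
    have h1 : Tendsto (fun y : ℝ => 2 * C * C' * Real.exp (-y)) atTop (𝓝 0) := by
      have := Real.tendsto_exp_neg_atTop_nhds_zero.const_mul (2 * C * C')
      rwa [mul_zero] at this
    refine squeeze_zero_norm' ?_ h1
    filter_upwards [Ici_mem_atTop Y1, Ici_mem_atTop Y, Ici_mem_atTop 1] with y hy hyY hy1
    have hy1' : (1 : ℝ) ≤ y := hy1
    obtain ⟨d1, d2⟩ := hd y hy
    obtain ⟨d3, d4⟩ := hd' y hyY
    simp only [zero_mul, neg_zero, Real.exp_zero, mul_one] at d3 d4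
    refine (norm_sub_le _ _).trans ?_
    rw [norm_mul (ent (4 * β) c p q _) (u1L β r m B y), norm_mul _ (EE β (r + y * I) * m y), norm_mul I,
      Complex.norm_I, one_mul]
    have E : Real.exp (-(1 * y ^ 2)) ≤ Real.exp (-y) := by
      rw [Real.exp_le_exp]; nlinarith
    calc _ ≤ (C * Real.exp (-(1 * y ^ 2))) * C' + (C * Real.exp (-(1 * y ^ 2))) * C' := by gcongr
      _ = 2 * C * C' * Real.exp (-(1 * y ^ 2)) := by ring
      _ ≤ _ := by gcongr
  have hw : ∀ y : ℝ, Y < y → ent (4 * β) c p q (r + y * I) * u1L β r m B y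
      - (I * ent1 (4 * β) c p q (r + y * I)) * (EE β (r + y * I) * m y) = 0 := by
    intro y hy
    refine tendsto_nhds_unique (tendsto_const_nhds (f := (atTop : Filter ℝ))) (ht.congr' ?_)
    filter_upwards [Ioi_mem_atTop Y] with s hs
    exact line_wr hβ hc hr hY h S hs hy
  refine ⟨_, m, fun y hy => line_ext hβ hc hr hY h S hw (y0 := Y + 1) (by linarith) hy,
    fun y hy => ⟨(hm y hy).1, (hm y hy).2.1⟩, m_tendsto hβ hc hr hY h S⟩

lemma EE_diff {x : ℂ} (h : Quad β x) : DifferentiableAt ℂ (EE β) x :=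
  (RR_hasDerivAt h.slit h.hD).differentiableAt.mul (EP_hasDerivAt h.slit h.hD).differentiableAt.cexp

lemma FF_diff {x : ℂ} (h : Quad β x) : DifferentiableAt ℂ (fun x => ent (4 * β) c p q x / EE β x) x :=
  (ent_hasDerivAt _ _ _ _ x).differentiableAt.div (EE_diff h) (EE_ne h)

theorem match_one (hβ : 0 ≤ β) (hc : 0 ≤ c) (N : NormSol β c p q) (hr : 0 ≤ r) :
    Tendsto (fun y : ℝ => ent (4 * β) c p q (r + y * I) / EE β (r + y * I)) atTop (𝓝 1) := by
  set Y := Rc β c with hY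
  have hY0 : 0 ≤ Y := (Rc_pos β hc).le
  have hQ : ∀ r : ℝ, 0 ≤ r → ∀ y : ℝ, Y ≤ y → Quad β (r + y * I) := fun r hr y hy =>
    quad_line hβ hr (hY0.trans hy) (Rc_ge hc (by linarith))
  set F : ℂ → ℂ := fun x => ent (4 * β) c p q x / EE β x with hF
  have hex : ∀ r : ℝ, ∃ k : ℂ, 0 ≤ r → (∀ y : ℝ, Y < y → ‖F (r + y * I) - k‖ ≤ ‖k‖ * (24 * (c + 1) / Real.sqrt y)) ∧
      (∀ y : ℝ, Y < y → ‖F (r + y * I) - k‖ ≤ ‖k‖ * (1 / 4)) ∧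
      Tendsto (fun y : ℝ => F (r + y * I)) atTop (𝓝 k) := by
    intro r
    by_cases hr : 0 ≤ r
    swap
    · exact ⟨0, fun h => absurd h hr⟩
    obtain ⟨k, m, h1, h2, h3⟩ := line_const hβ hc N hr hY0 (by linarith)
    have e : ∀ y : ℝ, Y < y → F (r + y * I) = k * m y := by
      intro y hy
      simp only [hF]
      rw [h1 y hy]
      have := EE_ne (hQ r hr y hy.le)
      field_simp
    have e' : ∀ y : ℝ, Y < y → ‖F (r + y * I) - k‖ = ‖k‖ * ‖m y - 1‖ := by
      intro y hy
      rw [e y hy, ← norm_mul]; congr 1; ring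
    refine ⟨k, fun _ => ⟨?_, ?_, ?_⟩⟩
    · intro y hy
      rw [e' y hy]
      have y0 : 0 < y := (Rc_pos β hc).trans hy
      have hs := Real.sqrt_pos.2 y0
      have := (h2 y hy.le).1
      have h5 : 24 * (c + 1) / Real.sqrt (r + y) ≤ 24 * (c + 1) / Real.sqrt y := by
        gcongr; linarith
      gcongr
      exact this.trans h5
    · intro y hy
      rw [e' y hy]
      gcongr
      exact (h2 y hy.le).2
    · have := h3.const_mul k
      rw [mul_one] at this
      refine this.congr' ?_
      filter_upwards [Ioi_mem_atTop Y] with y hy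
      exact (e y hy).symm
  choose k hk using hex
  have hk0 : k 0 = 1 := tendsto_nhds_unique (hk 0 le_rfl).2.2 N.lim
  -- uniform bound
  obtain ⟨C0, hC0⟩ : ∃ C0, ∀ x ∈ Icc 0 r, ‖k x‖ ≤ C0 := by
    have hcont : ContinuousOn (fun x : ℝ => F (x + (Y + 1 : ℝ) * I)) (Icc 0 r) := by
      intro x hx
      have h1 : ContinuousAt F (x + (Y + 1 : ℝ) * I) := (FF_diff (hQ x hx.1 (Y + 1) (by linarith))).continuousAt
      have h2 : ContinuousAt (fun x : ℝ => (x + (Y + 1 : ℝ) * I : ℂ)) x := by fun_prop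
      exact (ContinuousAt.comp (f := fun x : ℝ => (x + (Y + 1 : ℝ) * I : ℂ)) h1 h2).continuousWithinAt
    obtain ⟨C0, hC0⟩ := isCompact_Icc.exists_bound_of_continuousOn hcont
    refine ⟨2 * C0, fun x hx => ?_⟩
    have h1 := hC0 x hx
    have h2 := (hk x hx.1).2.1 (Y + 1) (by linarith)
    have h3 : ‖k x‖ ≤ ‖F (x + (Y + 1 : ℝ) * I)‖ + ‖F (x + (Y + 1 : ℝ) * I) - k x‖ := by
      have := norm_sub_le (F (x + (Y + 1 : ℝ) * I)) (F (x + (Y + 1 : ℝ) * I) - k x)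
      rwa [sub_sub_cancel] at this
    have := norm_nonneg (k x)
    linarith
  have hC00 : 0 ≤ C0 := (norm_nonneg _).trans (hC0 0 ⟨le_rfl, hr⟩)
  have key : ∀ y : ℝ, Y < y → ‖k r - k 0‖ ≤ (2 * r + 2) * (C0 * (24 * (c + 1))) / Real.sqrt y := by
    intro y hy
    have y0 : 0 < y := (Rc_pos β hc).trans hy
    have hs := Real.sqrt_pos.2 y0
    set ε := C0 * (24 * (c + 1) / Real.sqrt y) with hε
    have hε0 : 0 ≤ ε := by positivity
    have near : ∀ x ∈ Icc 0 r, ∀ t, y ≤ t → ‖F (x + t * I) - k x‖ ≤ ε := by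
      intro x hx t ht
      refine ((hk x hx.1).1 t (by linarith)).trans ?_
      have h5 : 24 * (c + 1) / Real.sqrt t ≤ 24 * (c + 1) / Real.sqrt y := by
        gcongr
      have := hC0 x hx
      rw [hε]
      gcongr
    have hrect := Complex.integral_boundary_rect_eq_zero_of_differentiableOn F (0 + y * I) (r + (y + 1 : ℝ) * I) (by
      intro x hx
      simp only [Complex.add_re, Complex.add_im, Complex.mul_re, Complex.mul_im, Complex.ofReal_re,
        Complex.ofReal_im, Complex.I_re, Complex.I_im, Complex.zero_re, Complex.zero_im] at hx
      norm_num at hx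
      rw [uIcc_of_le hr] at hx
      obtain ⟨hx1, hx2⟩ := hx
      simp only [mem_preimage, mem_Icc] at hx1 hx2
      have := hQ x.re hx1.1 x.im (by linarith)
      rw [Complex.re_add_im] at this
      exact (FF_diff this).differentiableWithinAt)
    have e1 : ((0 : ℂ) + y * I).re = 0 := by simp
    have e2 : ((0 : ℂ) + y * I).im = y := by simp
    have e3 : ((r : ℂ) + (y + 1 : ℝ) * I).re = r := by simp
    have e4 : ((r : ℂ) + (y + 1 : ℝ) * I).im = y + 1 := by simp
    rw [e1, e2, e3, e4] at hrect
    have ch : ∀ t : ℝ, Y < t → IntervalIntegrable (fun x : ℝ => F (x + t * I)) volume 0 r := by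
      intro t ht
      refine ContinuousOn.intervalIntegrable ?_
      rw [uIcc_of_le hr]
      intro x hx
      have h1 : ContinuousAt F (x + t * I) := (FF_diff (hQ x hx.1 t ht.le)).continuousAt
      have h2 : ContinuousAt (fun x : ℝ => (x + t * I : ℂ)) x := by fun_prop
      exact (ContinuousAt.comp (f := fun x : ℝ => (x + t * I : ℂ)) h1 h2).continuousWithinAt
    have cv : ∀ x : ℝ, 0 ≤ x → IntervalIntegrable (fun t : ℝ => F (x + t * I)) volume y (y + 1) := by
      intro x hx
      refine ContinuousOn.intervalIntegrable ?_
      rw [uIcc_of_le (by linarith)]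
      intro t ht
      have h1 : ContinuousAt F (x + t * I) := (FF_diff (hQ x hx t (by linarith [ht.1]))).continuousAt
      have h2 : ContinuousAt (fun t : ℝ => (x + t * I : ℂ)) t := by fun_prop
      exact (ContinuousAt.comp (f := fun t : ℝ => (x + t * I : ℂ)) h1 h2).continuousWithinAt
    have A1 : ‖(∫ x : ℝ in 0..r, F (x + y * I)) - ∫ x : ℝ in 0..r, F (x + ((y + 1 : ℝ) : ℂ) * I)‖ ≤ 2 * ε * r := by
      rw [← intervalIntegral.integral_sub (ch y hy) (ch (y + 1) (by linarith))]
      have := intervalIntegral.norm_integral_le_of_norm_le_const (a := 0) (b := r) (C := 2 * ε)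
        (f := fun x : ℝ => F (x + y * I) - F (x + ((y + 1 : ℝ) : ℂ) * I)) (by
        intro x hx
        rw [uIoc_of_le hr] at hx
        have hx' : x ∈ Icc 0 r := ⟨hx.1.le, hx.2⟩
        have n1 := near x hx' y le_rfl
        have n2 := near x hx' (y + 1) (by linarith)
        have := norm_sub_le (F (x + y * I) - k x) (F (x + ((y + 1 : ℝ) : ℂ) * I) - k x)
        rw [sub_sub_sub_cancel_right] at this
        linarith)
      rwa [sub_zero, abs_of_nonneg hr] at this
    have A2 : ∀ x ∈ Icc 0 r, ‖(∫ t : ℝ in y..(y + 1), F (x + t * I)) - k x‖ ≤ ε := by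
      intro x hx
      have e5 : (∫ t : ℝ in y..(y + 1), F (x + t * I)) - k x = ∫ t : ℝ in y..(y + 1), (F (x + t * I) - k x) := by
        rw [intervalIntegral.integral_sub (cv x hx.1) (by simp)]
        simp
      rw [e5]
      have := intervalIntegral.norm_integral_le_of_norm_le_const (a := y) (b := y + 1) (C := ε)
        (f := fun t : ℝ => F (x + t * I) - k x) (by
        intro t ht
        rw [uIoc_of_le (by linarith)] at ht
        exact near x hx t ht.1.le)
      rw [add_sub_cancel_left, abs_one, mul_one] at this
      exact this
    have a2 := A2 r ⟨hr, le_rfl⟩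
    have a3 := A2 0 ⟨le_rfl, hr⟩
    set T1 := (∫ x : ℝ in 0..r, F (x + y * I)) - ∫ x : ℝ in 0..r, F (x + ((y + 1 : ℝ) : ℂ) * I)
    set T2 := ∫ t : ℝ in y..(y + 1), F (r + t * I)
    set T3 := ∫ t : ℝ in y..(y + 1), F ((0 : ℝ) + t * I)
    have h6 : T2 - T3 = I * T1 := by
      simp only [smul_eq_mul] at hrect
      linear_combination (-I) * hrect + (T2 - T3) * I_mul_I
    have h7 : k r - k 0 = I * T1 - (T2 - k r) + (T3 - k 0) := by rw [← h6]; ring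
    rw [h7]
    have h8 : ‖I * T1 - (T2 - k r) + (T3 - k 0)‖ ≤ ‖T1‖ + ‖T2 - k r‖ + ‖T3 - k 0‖ := by
      refine (norm_add_le _ _).trans ?_
      gcongr
      refine (norm_sub_le _ _).trans ?_
      rw [norm_mul, Complex.norm_I, one_mul]
    have h9 : (2 * r + 2) * (C0 * (24 * (c + 1))) / Real.sqrt y = (2 * r + 2) * ε := by rw [hε]; ring
    rw [h9]
    linarith
  have hkr : k r = k 0 := by
    have h1 : Tendsto (fun y => (2 * r + 2) * (C0 * (24 * (c + 1))) / Real.sqrt y) atTop (𝓝 0) :=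
      Tendsto.div_atTop tendsto_const_nhds Real.tendsto_sqrt_atTop
    have h2 : ‖k r - k 0‖ ≤ 0 := by
      refine ge_of_tendsto h1 ?_
      filter_upwards [Ioi_mem_atTop Y] with y hy
      exact key y hy
    exact sub_eq_zero.1 (norm_le_zero_iff.1 h2)
  have := (hk r hr).2.2
  rwa [hkr, hk0] at this

theorem right_region (hβ : 0 ≤ β) (hc : 0 ≤ c) (N : NormSol β c p q) (hr : Rc β c ≤ r) {y : ℝ} (hy : 0 ≤ y) :
    ‖ent (4 * β) c p q (r + y * I) / EE β (r + y * I) - 1‖ ≤ 24 * (c + 1) / Real.sqrt (r + y) ∧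
    ‖ent (4 * β) c p q (r + y * I) / EE β (r + y * I) - 1‖ ≤ 1 / 4 := by
  have hRp := Rc_pos β hc
  have hr0 : 0 ≤ r := by linarith
  have hQ : ∀ y : ℝ, 0 ≤ y → Quad β (r + y * I) := fun y hy =>
    quad_line hβ hr0 hy (Rc_ge hc (by linarith))
  obtain ⟨k, m, h1, h2, h3⟩ := line_const hβ hc N hr0 le_rfl (by linarith)
  have e : ∀ y : ℝ, 0 < y → ent (4 * β) c p q (r + y * I) / EE β (r + y * I) = k * m y := by
    intro y hy
    rw [h1 y hy]
    have := EE_ne (hQ y hy.le)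
    field_simp
  have hk : k = 1 := by
    have h4 := h3.const_mul k
    rw [mul_one] at h4
    refine tendsto_nhds_unique h4 ((match_one hβ hc N hr0).congr' ?_)
    filter_upwards [Ioi_mem_atTop 0] with y hy
    exact e y hy
  have pos : ∀ y : ℝ, 0 < y → 
    ‖ent (4 * β) c p q (r + y * I) / EE β (r + y * I) - 1‖ ≤ 24 * (c + 1) / Real.sqrt (r + y) ∧
    ‖ent (4 * β) c p q (r + y * I) / EE β (r + y * I) - 1‖ ≤ 1 / 4 := by
    intro y hy
    rw [e y hy, hk, one_mul]
    exact h2 y hy.le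
  rcases hy.lt_or_eq with hy | rfl
  · exact pos y hy
  have hcont : ContinuousAt (fun y : ℝ => ‖ent (4 * β) c p q (r + y * I) / EE β (r + y * I) - 1‖) 0 := by
    have k1 : ContinuousAt (fun x => ent (4 * β) c p q x / EE β x) (r + (0 : ℝ) * I) :=
      (FF_diff (hQ 0 le_rfl)).continuousAt
    have k2 : ContinuousAt (fun y : ℝ => (r + y * I : ℂ)) 0 := by fun_prop
    exact ((ContinuousAt.comp (f := fun y : ℝ => (r + y * I : ℂ)) k1 k2).sub continuousAt_const).norm
  have hcr : ContinuousAt (fun y : ℝ => 24 * (c + 1) / Real.sqrt (r + y)) 0 := by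
    refine continuousAt_const.div (by fun_prop) ?_
    rw [add_zero]; exact (Real.sqrt_pos.2 (by linarith)).ne'
  constructor
  · refine le_of_tendsto_of_tendsto (b := 𝓝[>] (0 : ℝ)) (hcont.tendsto.mono_left nhdsWithin_le_nhds)
      (hcr.tendsto.mono_left nhdsWithin_le_nhds) ?_
    filter_upwards [self_mem_nhdsWithin] with y hy
    exact (pos y hy).1
  · refine le_of_tendsto (x := 𝓝[>] (0 : ℝ)) (hcont.tendsto.mono_left nhdsWithin_le_nhds) ?_
    filter_upwards [self_mem_nhdsWithin] with y hy
    exact (pos y hy).2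

end
end Cub

set_option linter.unusedVariables false
namespace Cub
open MeasureTheory Set Filter Topology

section
variable {b c r Y β : ℝ} {p q : ℂ}

lemma re_deriv {f : ℝ → ℂ} {f' : ℂ} {x : ℝ} (h : HasDerivAt f f' x) :
    HasDerivAt (fun x => (f x).re) f'.re x :=
  Complex.reCLM.hasFDerivAt.comp_hasDerivAt x h

lemma im_deriv {f : ℝ → ℂ} {f' : ℂ} {x : ℝ} (h : HasDerivAt f f' x) :
    HasDerivAt (fun x => (f x).im) f'.im x :=
  Complex.imCLM.hasFDerivAt.comp_hasDerivAt x h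

lemma mono_le {f f' : ℝ → ℝ} {s t : ℝ} (hst : s ≤ t) (h : ∀ x ∈ Icc s t, HasDerivAt f (f' x) x)
    (h0 : ∀ x ∈ Icc s t, 0 ≤ f' x) : f s ≤ f t := by
  refine monotoneOn_of_deriv_nonneg (convex_Icc s t)
    (fun x hx => (h x hx).continuousAt.continuousWithinAt)
    (fun x hx => (h x (interior_subset hx)).differentiableAt.differentiableWithinAt) ?_
    (left_mem_Icc.2 hst) (right_mem_Icc.2 hst) hst
  intro x hx
  rw [(h x (interior_subset hx)).deriv]
  exact h0 x (interior_subset hx)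

lemma mono_lt {f f' : ℝ → ℝ} {s t x0 : ℝ} (hst : s < t) (h : ∀ x ∈ Icc s t, HasDerivAt f (f' x) x)
    (h0 : ∀ x ∈ Icc s t, 0 ≤ f' x) (hx0 : x0 ∈ Icc s t) (hp : 0 < f' x0) : f s < f t := by
  by_contra hcon
  push Not at hcon
  have hc : ∀ x ∈ Icc s t, f x = f s := by
    intro x hx
    have h1 : f s ≤ f x := mono_le hx.1 (fun y hy => h y ⟨hy.1, hy.2.trans hx.2⟩)
      (fun y hy => h0 y ⟨hy.1, hy.2.trans hx.2⟩)
    have h2 : f x ≤ f t := mono_le hx.2 (fun y hy => h y ⟨hx.1.trans hy.1, hy.2⟩)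
      (fun y hy => h0 y ⟨hx.1.trans hy.1, hy.2⟩)
    linarith
  have h3 : HasDerivWithinAt f 0 (Icc s t) x0 :=
    (hasDerivWithinAt_const x0 (Icc s t) (f s)).congr hc (hc x0 hx0)
  have h4 := (uniqueDiffOn_Icc hst x0 hx0).eq_deriv _ h3 ((h x0 hx0).hasDerivWithinAt)
  linarith

lemma ent_real (b c : ℝ) (p q : ℂ) (s : ℝ) :
    HasDerivAt (fun s : ℝ => ent b c p q s) (ent1 b c p q s) s ∧
    HasDerivAt (fun s : ℝ => ent1 b c p q s) (((s ^ 3 - b * s + c : ℝ) : ℂ) * ent b c p q s) s := by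
  have h := ent_horiz b c p q 0 s
  simp only [Complex.ofReal_zero, zero_mul, add_zero] at h
  refine ⟨h.1, h.2.congr_deriv ?_⟩
  push_cast; ring

lemma EE_real (β : ℝ) {r : ℝ} (hr : 0 < r) : ∃ e : ℝ, EE β r = e := by
  obtain ⟨t, ht, h⟩ := hh_real hr
  refine ⟨t ^ 5 / (t ^ 8 - β) * Real.exp (2 / 5 * t ^ 10 - 4 * β * t ^ 2 - 2 / 3 * β ^ 2 * (t ^ 6)⁻¹), ?_⟩
  unfold EE RR EP
  rw [h]; push_cast; rfl

lemma V_nonneg {x : ℝ} (hb : 0 ≤ b) (hc : (b + 1) ^ 2 ≤ c) (hx : 0 ≤ x) : 0 ≤ x ^ 3 - b * x + c := by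
  rcases le_total x (b + 1) with h | h
  · nlinarith [mul_nonneg hb (sub_nonneg.2 h), pow_nonneg hx 3]
  · have h1 : 1 ≤ x := by linarith
    have h2 : b * x ≤ x ^ 3 := by nlinarith [mul_nonneg hx (by linarith : 0 ≤ x - b), mul_nonneg (mul_nonneg hx hx) (by linarith : 0 ≤ x - 1)]
    nlinarith

/-- a real solution vanishing at the origin grows at least linearly -/
lemma lin_growth {h h1 V : ℝ → ℝ} (d : ∀ x, HasDerivAt h (h1 x) x)
    (d1 : ∀ x, HasDerivAt h1 (V x * h x) x) (hV : ∀ x, 0 ≤ x → 0 ≤ V x) (h0 : h 0 = 0) {x : ℝ}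
    (hx : 0 ≤ x) : h1 0 ^ 2 * x ^ 2 ≤ h x ^ 2 := by
  have dp : ∀ x, HasDerivAt (fun x => h x * h1 x) (h1 x ^ 2 + V x * h x ^ 2) x := by
    intro x
    refine ((d x).mul (d1 x)).congr_deriv ?_
    ring
  have s1 : ∀ x, 0 ≤ x → 0 ≤ h x * h1 x := by
    intro x hx
    have := mono_le hx (fun y _ => dp y) (fun y hy => by have := hV y hy.1; positivity)
    simpa [h0] using this
  have s2 : ∀ x, 0 ≤ x → h1 0 ^ 2 ≤ h1 x ^ 2 := by
    intro x hx
    refine mono_le (f := fun x => h1 x ^ 2) (f' := fun x => 2 * (V x * (h x * h1 x))) hx (fun y _ => ?_)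
      (fun y hy => by have := hV y hy.1; have := s1 y hy.1; positivity)
    refine ((d1 y).pow 2).congr_deriv ?_
    push_cast; ring
  have s3 : ∀ x, 0 ≤ x → h1 0 ^ 2 * x ≤ h x * h1 x := by
    intro x hx
    have := mono_le (f := fun x => h x * h1 x - h1 0 ^ 2 * x)
      (f' := fun x => (h1 x ^ 2 + V x * h x ^ 2) - h1 0 ^ 2 * 1) hx
      (fun y _ => (dp y).sub ((hasDerivAt_id y).const_mul _))
      (fun y hy => by
        have := mul_nonneg (hV y hy.1) (sq_nonneg (h y)); have := s2 y hy.1; linarith)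
    simp only [h0] at this
    linarith
  have := mono_le (f := fun x => h x ^ 2 - h1 0 ^ 2 * x ^ 2)
      (f' := fun x => 2 * (h x * h1 x) - h1 0 ^ 2 * (2 * x)) hx
      (fun y _ => by
        refine (((d y).pow 2).sub (((hasDerivAt_id y).pow 2).const_mul (h1 0 ^ 2))).congr_deriv ?_
        simp; ring)
      (fun y hy => by have := s3 y hy.1; linarith)
  simp only [h0] at this
  linarith

theorem reality (hβ : 0 ≤ β) (hc : (4 * β + 1) ^ 2 ≤ c) (N : NormSol β c p q) (hp : p.im = 0) :
    q.im = 0 := by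
  by_contra hq
  have hc0 : 0 ≤ c := le_trans (sq_nonneg _) hc
  set b := 4 * β with hb
  have hb0 : 0 ≤ b := by positivity
  let h : ℝ → ℝ := fun x => (ent b c p q x).im
  let h1 : ℝ → ℝ := fun x => (ent1 b c p q x).im
  let g : ℝ → ℝ := fun x => (ent b c p q x).re
  let g1 : ℝ → ℝ := fun x => (ent1 b c p q x).re
  let V : ℝ → ℝ := fun x => x ^ 3 - b * x + c
  have dh : ∀ x, HasDerivAt h (h1 x) x := fun x => im_deriv (ent_real b c p q x).1
  have dg : ∀ x, HasDerivAt g (g1 x) x := fun x => re_deriv (ent_real b c p q x).1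
  have dh1 : ∀ x, HasDerivAt h1 (V x * h x) x := fun x => by
    refine (im_deriv (ent_real b c p q x).2).congr_deriv ?_
    rw [Complex.im_ofReal_mul]
  have dg1 : ∀ x, HasDerivAt g1 (V x * g x) x := fun x => by
    refine (re_deriv (ent_real b c p q x).2).congr_deriv ?_
    rw [Complex.re_ofReal_mul]
  have hh0 : h 0 = 0 := by simp [h, ent_zero, hp]
  have hh1 : h1 0 = q.im := by simp [h1, ent1_zero]
  have hη : 0 < q.im ^ 2 := by positivity
  have gr : ∀ x, 0 ≤ x → q.im ^ 2 * x ^ 2 ≤ h x ^ 2 := by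
    intro x hx
    have := lin_growth dh dh1 (fun x hx => V_nonneg hb0 hc hx) hh0 hx
    rwa [hh1] at this
  have hne : ∀ x, 1 ≤ x → h x ≠ 0 := by
    intro x hx h0
    have := gr x (by linarith)
    rw [h0] at this
    have : 0 < q.im ^ 2 * x ^ 2 := by positivity
    linarith
  obtain ⟨W, hW⟩ : ∃ W, ∀ x, g1 x * h x - g x * h1 x = W := by
    refine ⟨g1 0 * h 0 - g 0 * h1 0, fun x => ?_⟩
    have hd : ∀ x, HasDerivAt (fun x => g1 x * h x - g x * h1 x) 0 x := by
      intro x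
      refine (((dg1 x).mul (dh x)).sub ((dg x).mul (dh1 x))).congr_deriv ?_
      ring
    exact is_const_of_deriv_eq_zero (fun x => (hd x).differentiableAt) (fun x => (hd x).deriv) x 0
  set K := |W| / q.im ^ 2 with hK
  have hK0 : 0 ≤ K := by positivity
  have dq : ∀ x, 1 ≤ x → HasDerivAt (fun x => g x / h x) (W / h x ^ 2) x := by
    intro x hx
    refine ((dg x).div (dh x) (hne x hx)).congr_deriv ?_
    rw [hW]
  have bW : ∀ x, 1 ≤ x → |W / h x ^ 2| ≤ K * (1 / x ^ 2) := by
    intro x hx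
    have := gr x (by linarith)
    have h2 : 0 < q.im ^ 2 * x ^ 2 := by positivity
    rw [abs_div, abs_of_nonneg (sq_nonneg (h x)), hK, div_mul_div_comm, mul_one]
    gcongr
  have dx : ∀ x : ℝ, 1 ≤ x → HasDerivAt (fun x : ℝ => K * x⁻¹) (-(K * (1 / x ^ 2))) x := by
    intro x hx
    refine ((hasDerivAt_inv (by linarith : x ≠ 0)).const_mul K).congr_deriv ?_
    ring
  obtain ⟨M, hM0, hM⟩ : ∃ M, 0 ≤ M ∧ ∀ x, 1 ≤ x → |g x| ≤ M * |h x| := by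
    refine ⟨|g 1 / h 1| + K, by positivity, fun x hx => ?_⟩
    have u1 := mono_le (f := fun x => g x / h x - K * x⁻¹) hx (fun y hy => (dq y hy.1).sub (dx y hy.1))
      (fun y hy => by have := (abs_le.1 (bW y hy.1)).1; linarith)
    have u2 := mono_le (f := fun x => -(g x / h x) - K * x⁻¹) hx (fun y hy => (dq y hy.1).neg.sub (dx y hy.1))
      (fun y hy => by have := (abs_le.1 (bW y hy.1)).2; linarith)
    simp only [inv_one, mul_one] at u1 u2
    have hx' : 0 ≤ K * x⁻¹ := by positivity
    have hx2 : K * x⁻¹ ≤ K * 1 := by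
      gcongr
      exact inv_le_one_of_one_le₀ hx
    have hy := le_abs_self (g 1 / h 1)
    have hy2 := neg_abs_le (g 1 / h 1)
    have : |g x / h x| ≤ |g 1 / h 1| + K := by
      rw [abs_le]; constructor <;> linarith
    rwa [abs_div, div_le_iff₀ (abs_pos.2 (hne x hx))] at this
  set r := Rc β c + 1 + (24 * (c + 1) * (M + 2)) ^ 2 with hr
  have hRp := Rc_pos β hc0
  have hr1 : 1 ≤ r := by
    have := sq_nonneg (24 * (c + 1) * (M + 2)); linarith
  have hrR : Rc β c ≤ r := by have := sq_nonneg (24 * (c + 1) * (M + 2)); linarith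
  have key := (right_region hβ hc0 N hrR le_rfl).1
  simp only [Complex.ofReal_zero, zero_mul, add_zero] at key
  obtain ⟨e, he⟩ := EE_real β (by linarith : 0 < r)
  rw [he] at key
  have hs : 24 * (c + 1) * (M + 2) < Real.sqrt r := by
    apply Real.lt_sqrt_of_sq_lt
    linarith
  have hs0 : 0 < Real.sqrt r := lt_of_le_of_lt (by positivity) hs
  have key2 : 24 * (c + 1) / Real.sqrt r * (M + 2) < 1 := by
    rw [div_mul_eq_mul_div, div_lt_one hs0]; exact hs
  set z := ent (4 * β) c p q r / e with hz
  have zr : z.re = g r / e := by rw [hz, Complex.div_ofReal_re]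
  have zi : z.im = h r / e := by rw [hz, Complex.div_ofReal_im]
  have k1 := (Complex.abs_re_le_norm (z - 1)).trans key
  have k2 := (Complex.abs_im_le_norm (z - 1)).trans key
  simp only [Complex.sub_re, Complex.sub_im, Complex.one_re, Complex.one_im, sub_zero] at k1 k2
  have k3 : |z.re| ≤ M * |z.im| := by
    rw [zr, zi, abs_div, abs_div, ← mul_div_assoc]
    gcongr
    exact hM r hr1
  set ε := 24 * (c + 1) / Real.sqrt r with hε
  have k4 : M * |z.im| ≤ M * ε := by gcongr
  have k5 := (abs_le.1 k1).1
  have k6 := le_abs_self z.re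
  have hε0 : 0 ≤ ε := by positivity
  nlinarith

lemma ent_conj (b c : ℝ) {p q : ℂ} (hp : p.im = 0) (hq : q.im = 0) (x : ℂ) :
    ent b c p q ((starRingEnd ℂ) x) = (starRingEnd ℂ) (ent b c p q x) := by
  unfold ent
  rw [map_add, map_mul, map_mul, sol_conj, sol_conj, Complex.conj_eq_iff_im.2 hp,
    Complex.conj_eq_iff_im.2 hq]

lemma ent_im (b c : ℝ) {p q : ℂ} (hp : p.im = 0) (hq : q.im = 0) (x : ℝ) : 
    (ent b c p q x).im = 0 := by
  have := ent_conj b c hp hq x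
  rw [Complex.conj_ofReal] at this
  exact Complex.conj_eq_iff_im.1 this.symm

lemma ent1_im (b c : ℝ) {p q : ℂ} (hp : p.im = 0) (hq : q.im = 0) (x : ℝ) : 
    (ent1 b c p q x).im = 0 := by
  have h := im_deriv (ent_real b c p q x).1
  have e : (fun x : ℝ => (ent b c p q x).im) = fun _ => 0 := by
    funext x; exact ent_im b c hp hq x
  rw [e] at h
  exact h.unique (hasDerivAt_const x 0)

lemma ent_ne (hβ : 0 ≤ β) (hc : 0 ≤ c) (N : NormSol β c p q) (x : ℂ) (h : ent (4 * β) c p q x = 0)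
    (h1 : ent1 (4 * β) c p q x = 0) : False := by
  have w := sol_wr (4 * β) c x
  have hp : p = 0 := by
    unfold ent at h; unfold ent1 at h1
    linear_combination (sol' (4 * β) c 0 1 x) * h - (sol (4 * β) c 0 1 x) * h1 - p * w
  have hq : q = 0 := by
    unfold ent at h; unfold ent1 at h1
    linear_combination (sol (4 * β) c 1 0 x) * h1 - (sol' (4 * β) c 1 0 x) * h - q * w
  have := (right_region hβ hc N le_rfl le_rfl).2
  rw [hp, hq] at this
  norm_num [ent] at this

end
end Cub

set_option linter.unusedVariables false
namespace Cub
open MeasureTheory Set Filter Topology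

section
variable {b c r Y β : ℝ} {p q : ℂ}

lemma en {u u1 : ℝ → ℂ} {W : ℂ} {y : ℝ} (d : HasDerivAt u (u1 y) y) (d1 : HasDerivAt u1 (W * u y) y) :
    HasDerivAt (fun y => (starRingEnd ℂ) (u y) * u1 y)
      (((normSq (u1 y) : ℝ) : ℂ) + W * ((normSq (u y) : ℝ) : ℂ)) y := by
  have dc : HasDerivAt (fun y => (starRingEnd ℂ) (u y)) ((starRingEnd ℂ) (u1 y)) y :=
    (Complex.conjCLE : ℂ →L[ℝ] ℂ).hasFDerivAt.comp_hasDerivAt y d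
  refine (dc.mul d1).congr_deriv ?_
  rw [Complex.normSq_eq_conj_mul_self, Complex.normSq_eq_conj_mul_self]
  ring

lemma en_re {u u1 : ℝ → ℂ} {W : ℂ} {y : ℝ} (d : HasDerivAt u (u1 y) y) (d1 : HasDerivAt u1 (W * u y) y) :
    HasDerivAt (fun y => ((starRingEnd ℂ) (u y) * u1 y).re)
      (normSq (u1 y) + W.re * normSq (u y)) y := by
  refine (re_deriv (en d d1)).congr_deriv ?_
  simp

lemma en_im {u u1 : ℝ → ℂ} {W : ℂ} {y : ℝ} (d : HasDerivAt u (u1 y) y) (d1 : HasDerivAt u1 (W * u y) y) :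
    HasDerivAt (fun y => ((starRingEnd ℂ) (u y) * u1 y).im) (W.im * normSq (u y)) y := by
  refine (im_deriv (en d d1)).congr_deriv ?_
  simp

lemma V_re (b c r y : ℝ) : ((r + y * I : ℂ) ^ 3 - b * (r + y * I) + c).re =
    r ^ 3 - 3 * r * y ^ 2 - b * r + c := by
  simp [pow_succ]; ring

lemma V_im (b c r y : ℝ) : ((r + y * I : ℂ) ^ 3 - b * (r + y * I) + c).im =
    3 * r ^ 2 * y - y ^ 3 - b * y := by
  simp [pow_succ]; ring

/-- upward decay excludes a nonnegative flux -/
lemma up_flux (hβ : 0 ≤ β) (hc : 0 ≤ c) (N : NormSol β c p q) (hr : 0 ≤ r) {y0 : ℝ} (hy0 : 0 < y0)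
    (hry : 3 * r ^ 2 ≤ y0 ^ 2)
    (h : 0 ≤ ((starRingEnd ℂ) (ent (4 * β) c p q (r + y0 * I)) * (I * ent1 (4 * β) c p q (r + y0 * I))).im) :
    False := by
  set b := 4 * β with hb
  have hb0 : 0 ≤ b := by positivity
  set u : ℝ → ℂ := fun y => ent b c p q (r + y * I) with hu
  set u1 : ℝ → ℂ := fun y => I * ent1 b c p q (r + y * I) with hu1
  have d : ∀ y, HasDerivAt u (u1 y) y := fun y => (ent_vert b c p q r y).1
  have d1 : ∀ y : ℝ, HasDerivAt u1 (-((r + y * I : ℂ) ^ 3 - b * (r + y * I) + c) * u y) y :=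
    fun y => (ent_vert b c p q r y).2
  set G : ℝ → ℝ := fun y => ((starRingEnd ℂ) (u y) * u1 y).im with hG
  have dG : ∀ y, HasDerivAt G (y * (y ^ 2 + b - 3 * r ^ 2) * normSq (u y)) y := by
    intro y
    refine (en_im (d y) (d1 y)).congr_deriv ?_
    rw [Complex.neg_im, V_im]; ring
  have hG0 : 0 ≤ G y0 := h
  have hpos : ∀ y, y0 ≤ y → 0 ≤ y * (y ^ 2 + b - 3 * r ^ 2) := by
    intro y hy
    have : y0 ^ 2 ≤ y ^ 2 := by gcongr
    exact mul_nonneg (by linarith) (by linarith)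
  have hmono : ∀ s t, y0 ≤ s → s ≤ t → G s ≤ G t := fun s t hs hst =>
    mono_le hst (fun y _ => dG y) (fun y hy => mul_nonneg (hpos y (hs.trans hy.1)) (normSq_nonneg _))
  have hlim : Tendsto G atTop (𝓝 0) := by
    obtain ⟨C, Y, hC, hd⟩ := dec_line hβ hc N hr (zero_le_one : (0 : ℝ) ≤ 1)
    have e1 : Tendsto (fun y : ℝ => Real.exp (-(1 * y ^ 2))) atTop (𝓝 0) := by
      refine Real.tendsto_exp_atBot.comp (tendsto_neg_atTop_atBot.comp ?_)
      simp only [one_mul]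
      exact tendsto_pow_atTop (by norm_num)
    have e2 := (e1.const_mul C).mul (e1.const_mul C)
    simp only [mul_zero] at e2
    refine squeeze_zero_norm' ?_ e2
    filter_upwards [Ici_mem_atTop Y] with y hy
    obtain ⟨a1, a2⟩ := hd y hy
    refine (Complex.abs_im_le_norm _).trans ?_
    rw [norm_mul, RCLike.norm_conj, hu1]
    simp only [norm_mul, Complex.norm_I, one_mul] at a1 a2 ⊢
    gcongr
  have hle : ∀ s, y0 ≤ s → G s ≤ 0 := by
    intro s hs
    refine ge_of_tendsto hlim ?_
    filter_upwards [Ici_mem_atTop s] with t ht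
    exact hmono s t hs ht
  have hz : ∀ y, y0 < y → u y = 0 := by
    intro y hy
    by_contra hne
    have hn : 0 < normSq (u y) := Complex.normSq_pos.2 hne
    have hs : y0 ^ 2 < y ^ 2 := by gcongr
    have hp : 0 < y * (y ^ 2 + b - 3 * r ^ 2) := mul_pos (by linarith) (by linarith)
    have := mono_lt hy (fun y _ => dG y)
      (fun y hy => mul_nonneg (hpos y hy.1) (normSq_nonneg _)) (x0 := y) ⟨hy.le, le_rfl⟩ (mul_pos hp hn)
    have := hle y hy.le
    linarith
  have hy1 : y0 < y0 + 1 := by linarith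
  have h0 := hz _ hy1
  have h1 : u1 (y0 + 1) = 0 := by
    have e : u =ᶠ[𝓝 (y0 + 1)] fun _ => 0 := by
      filter_upwards [Ioi_mem_nhds hy1] with y hy using hz y hy
    exact ((d (y0 + 1)).congr_of_eventuallyEq e.symm).unique (hasDerivAt_const _ _)
  simp only [hu1, mul_eq_zero, Complex.I_ne_zero, false_or] at h1
  exact ent_ne hβ hc N _ h0 h1

/-- no zeros in the second open quadrant -/
lemma no_zero_left (hβ : 0 ≤ β) (hc : 0 < c) (N : NormSol β c p q) (hp0 : p.im = 0) (hq : q.im = 0)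
    {s y0 : ℝ} (hs : s ≤ 0) (hy0 : 0 < y0) : ent (4 * β) c p q (s + y0 * I) ≠ 0 := by
  intro h0
  set b := 4 * β with hb
  have hb0 : 0 ≤ b := by positivity
  rcases le_or_gt (s ^ 3 - 3 * s * y0 ^ 2 - b * s + c) 0 with hV | hV
  · set u : ℝ → ℂ := fun y => ent b c p q (s + y * I) with hu
    set u1 : ℝ → ℂ := fun y => I * ent1 b c p q (s + y * I) with hu1
    have d : ∀ y, HasDerivAt u (u1 y) y := fun y => (ent_vert b c p q s y).1
    have d1 : ∀ y : ℝ, HasDerivAt u1 (-((s + y * I : ℂ) ^ 3 - b * (s + y * I) + c) * u y) y :=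
      fun y => (ent_vert b c p q s y).2
    have hu0 : u y0 = 0 := h0
    have hn : 0 < normSq (u1 y0) := by
      rw [Complex.normSq_pos]
      intro h1
      simp only [hu1, mul_eq_zero, Complex.I_ne_zero, false_or] at h1
      exact ent_ne hβ hc.le N _ h0 h1
    have hp : ∀ y ∈ Icc 0 y0, 0 ≤ (-((s + y * I : ℂ) ^ 3 - b * (s + y * I) + c)).re := by
      intro y hy
      rw [Complex.neg_re, V_re]
      have : y ^ 2 ≤ y0 ^ 2 := pow_le_pow_left₀ hy.1 hy.2 2
      nlinarith [mul_nonneg (neg_nonneg.2 hs) (sub_nonneg.2 this)]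
    have := mono_lt hy0 (fun y _ => en_re (d y) (d1 y))
      (fun y hy => add_nonneg (normSq_nonneg _) (mul_nonneg (hp y hy) (normSq_nonneg _)))
      (x0 := y0) ⟨hy0.le, le_rfl⟩ (by rw [hu0]; simpa using hn)
    rw [hu0] at this
    simp only [hu, hu1, Complex.ofReal_zero, zero_mul, add_zero, map_zero, Complex.zero_re] at this
    have i1 := ent_im b c hp0 hq s
    have i2 := ent1_im b c hp0 hq s
    simp [Complex.mul_re, Complex.mul_im, i1, i2] at this
  · have hmid : ∀ σ, σ ∈ Icc s 0 → 0 ≤ σ ^ 3 - 3 * σ * y0 ^ 2 - b * σ + c := by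
      intro σ hσ
      rcases le_or_gt 0 (3 * y0 ^ 2 + b - σ ^ 2) with hk | hk
      · nlinarith [mul_nonneg (neg_nonneg.2 hσ.2) hk]
      · have h1 : σ ^ 2 ≤ s ^ 2 := by nlinarith [hσ.1, hσ.2]
        have h2 : (-s) * (3 * y0 ^ 2 + b - s ^ 2) ≤ (-s) * (3 * y0 ^ 2 + b - σ ^ 2) := by
          apply mul_le_mul_of_nonneg_left _ (by linarith); linarith
        have h3 : (-s) * (3 * y0 ^ 2 + b - σ ^ 2) ≤ (-σ) * (3 * y0 ^ 2 + b - σ ^ 2) :=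
          mul_le_mul_of_nonpos_right (by linarith [hσ.1]) hk.le
        nlinarith
    have := mono_le hs (fun x _ => en_re (ent_horiz b c p q y0 x).1 (ent_horiz b c p q y0 x).2)
      (fun x hx => add_nonneg (normSq_nonneg _) (mul_nonneg (by rw [V_re]; exact hmid x hx) (normSq_nonneg _)))
    rw [h0] at this
    simp only [map_zero, zero_mul, Complex.zero_re] at this
    refine up_flux hβ hc.le N le_rfl hy0 (by nlinarith) (le_of_le_of_eq this ?_)
    rw [← hb]
    simp only [Complex.mul_im, Complex.mul_re, Complex.I_re, Complex.I_im]
    ring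

lemma nonreal_upper (hβ : 0 ≤ β) (hc : 0 < c) (N : NormSol β c p q) (hp : p.im = 0) (hq : q.im = 0)
    {z : ℂ} (hz : ent (4 * β) c p q z = 0) (hi : 0 < z.im) : ‖z‖ ≤ 3 * Rc β c := by
  rw [← Complex.re_add_im z] at hz
  have h1 : 0 < z.re := by
    by_contra h
    exact no_zero_left hβ hc N hp hq (not_lt.1 h) hi hz
  have h2 : z.im ^ 2 < 3 * z.re ^ 2 := by
    by_contra h
    refine up_flux hβ hc.le N h1.le hi (not_lt.1 h) ?_
    rw [hz]; simp
  have h3 : z.re < Rc β c := by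
    by_contra h
    have := (right_region hβ hc.le N (not_lt.1 h) hi.le).2
    rw [hz] at this
    norm_num at this
  have h4 : z.im ≤ 2 * z.re := by nlinarith
  have h5 := Complex.norm_le_abs_re_add_abs_im z
  rw [abs_of_pos h1, abs_of_pos hi] at h5
  linarith

lemma nonreal_bdd (hβ : 0 ≤ β) (hc : 0 < c) (N : NormSol β c p q) (hp : p.im = 0) (hq : q.im = 0)
    {z : ℂ} (hz : ent (4 * β) c p q z = 0) (hi : z.im ≠ 0) : ‖z‖ ≤ 3 * Rc β c := by
  rcases lt_or_gt_of_ne hi with h | h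
  · have := nonreal_upper hβ hc N hp hq (z := (starRingEnd ℂ) z) (by rw [ent_conj _ _ hp hq, hz, map_zero])
      (by simpa using h)
    rwa [RCLike.norm_conj] at this
  · exact nonreal_upper hβ hc N hp hq hz h

theorem nonreal_finite (hβ : 0 ≤ β) (hc : 0 < c) (N : NormSol β c p q) (hp : p.im = 0) (hq : q.im = 0) :
    {z : ℂ | ent (4 * β) c p q z = 0 ∧ z.im ≠ 0}.Finite := by
  by_contra hinf
  obtain ⟨x, hx, hacc⟩ := Set.Infinite.exists_accPt_of_subset_isCompact hinf
    (isCompact_closedBall (0 : ℂ) (3 * Rc β c)) (fun z hz => by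
      rw [mem_closedBall_zero_iff]; exact nonreal_bdd hβ hc N hp hq hz.1 hz.2)
  have hd : Differentiable ℂ (ent (4 * β) c p q) := fun x => (ent_hasDerivAt _ _ _ _ x).differentiableAt
  have ha : AnalyticOnNhd ℂ (ent (4 * β) c p q) univ := fun x _ => hd.analyticAt x
  have hfr : ∃ᶠ z in 𝓝[≠] x, ent (4 * β) c p q z = 0 := by
    rw [accPt_iff_frequently_nhdsNE] at hacc
    exact hacc.mono (fun z hz => hz.1)
  have hall := ha.eqOn_zero_of_preconnected_of_frequently_eq_zero isPreconnected_univ (mem_univ x) hfr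
  have := (right_region hβ hc.le N le_rfl le_rfl).2
  rw [hall (mem_univ _)] at this
  norm_num at this

/-- oscillation -/
lemma osc_pos {g g1 P : ℝ → ℝ} {S : ℝ} (d : ∀ s, HasDerivAt g (g1 s) s)
    (d1 : ∀ s, HasDerivAt g1 (-(P s * g s)) s) (hP : ∀ s, S ≤ s → 1 ≤ P s)
    (hg : ∀ s, S ≤ s → 0 < g s) : False := by
  have anti : ∀ s t, S ≤ s → s ≤ t → g1 t ≤ g1 s := by
    intro s t hs hst
    have := mono_le (f := fun s => - g1 s) hst (fun y _ => (d1 y).neg) (fun y hy => by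
      have h1 := hP y (hs.trans hy.1)
      have h2 := hg y (hs.trans hy.1)
      rw [neg_neg]; positivity)
    simpa using this
  have nn : ∀ s, S ≤ s → 0 ≤ g1 s := by
    intro s hs
    by_contra hneg
    push Not at hneg
    set t := s + g s / (-g1 s) with ht
    have hgs := hg s hs
    have hst : s ≤ t := by
      have : 0 ≤ g s / (-g1 s) := div_nonneg hgs.le (by linarith)
      linarith
    have := mono_le (f := fun x => g1 s * x - g x) hst
      (fun y _ => ((hasDerivAt_id y).const_mul (g1 s)).sub (d y)) (fun y hy => by
        have := anti s y hs hy.1; linarith)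
    have h2 := hg t (hs.trans hst)
    have h3 : g1 s * t = g1 s * s - g s := by
      rw [ht]; field_simp [hneg.ne]; ring
    linarith
  have mon : ∀ s, S ≤ s → g S ≤ g s := fun s hs => mono_le hs (fun y _ => d y) (fun y hy => nn y hy.1)
  have hm := hg S le_rfl
  set t := S + (g1 S + 1) / g S with ht
  have h1 := nn S le_rfl
  have hst : S ≤ t := by
    have : 0 ≤ (g1 S + 1) / g S := by positivity
    linarith
  have := mono_le (f := fun x => - g1 x - g S * x) hst
      (fun y _ => (d1 y).neg.sub ((hasDerivAt_id y).const_mul (g S))) (fun y hy => by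
        have h2 := mon y hy.1
        have h3 := hP y hy.1
        rw [neg_neg]
        nlinarith)
  have h2 := nn t hst
  have h3 : g S * t = g S * S + (g1 S + 1) := by
    rw [ht]; field_simp
  linarith

lemma osc {g g1 P : ℝ → ℝ} {S : ℝ} (d : ∀ s, HasDerivAt g (g1 s) s)
    (d1 : ∀ s, HasDerivAt g1 (-(P s * g s)) s) (hP : ∀ s, S ≤ s → 1 ≤ P s) :
    ∃ s, S ≤ s ∧ g s = 0 := by
  by_contra hcon
  push Not at hcon
  have hcont : ContinuousOn g (Ici S) := fun x _ => (d x).continuousAt.continuousWithinAt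
  have hiv : ∀ x ∈ Ici S, ∀ y ∈ Ici S, g x < 0 → 0 < g y → False := by
    intro x hx y hy h1 h2
    obtain ⟨z, hz, hz0⟩ := isPreconnected_Ici.intermediate_value hx hy hcont ⟨h1.le, h2.le⟩
    exact hcon z hz hz0
  rcases lt_or_gt_of_ne (hcon S le_rfl) with h | h
  · refine osc_pos (g := fun s => - g s) (g1 := fun s => - g1 s) (P := P) (S := S) (fun s => (d s).neg)
      (fun s => by refine (d1 s).neg.congr_deriv ?_; ring) hP ?_
    intro s hs
    rcases lt_or_gt_of_ne (hcon s hs) with h' | h'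
    · simpa using h'
    · exact (hiv S self_mem_Ici s hs h h').elim
  · refine osc_pos d d1 hP ?_
    intro s hs
    rcases lt_or_gt_of_ne (hcon s hs) with h' | h'
    · exact (hiv s hs S self_mem_Ici h' h).elim
    · exact h'

theorem zeros_infinite (hb : 0 ≤ b) (hc : 0 ≤ c) (hp : p.im = 0) (hq : q.im = 0) :
    {z : ℂ | ent b c p q z = 0}.Infinite := by
  have key : ∀ S : ℝ, ∃ s : ℝ, S ≤ s ∧ ent b c p q ((-s : ℝ) : ℂ) = 0 := by
    intro S
    set T := max S (b + c + 1) with hT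
    have hT1 : b + c + 1 ≤ T := le_max_right _ _
    have dn : ∀ s : ℝ, HasDerivAt (fun s : ℝ => -s) (-1) s := fun s => hasDerivAt_neg s
    obtain ⟨s, hs, h0⟩ := osc (g := fun s => (ent b c p q ((-s : ℝ) : ℂ)).re)
      (g1 := fun s => -(ent1 b c p q ((-s : ℝ) : ℂ)).re) (P := fun s => s ^ 3 - b * s - c) (S := T)
      (fun s => by
        refine (HasDerivAt.comp (h := fun s : ℝ => -s) s (re_deriv (ent_real b c p q (-s)).1) (dn s)).congr_deriv ?_
        ring)
      (fun s => by
        refine (HasDerivAt.comp (h := fun s : ℝ => -s) s (re_deriv (ent_real b c p q (-s)).2) (dn s)).neg.congr_deriv ?_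
        rw [Complex.re_ofReal_mul]
        ring)
      (fun s hs => by
        have h1 : b + c + 1 ≤ s := hT1.trans hs
        have h2 : 1 ≤ s := by linarith
        have h3 : s ^ 2 * (b + c + 1) ≤ s ^ 3 := by nlinarith [sq_nonneg s]
        have h4 : s ≤ s ^ 2 := by nlinarith
        have h5 : 1 ≤ s ^ 2 := by nlinarith
        nlinarith)
    refine ⟨s, (le_max_left _ _).trans hs, ?_⟩
    exact Complex.ext h0 (ent_im b c hp hq (-s))
  intro hfin
  obtain ⟨R, hR⟩ := hfin.isBounded.exists_norm_le
  obtain ⟨s, hs, h0⟩ := key (|R| + 1)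
  have := hR _ h0
  rw [Complex.norm_real, norm_neg] at this
  have h1 := Real.le_norm_self s
  have h2 := le_abs_self R
  linarith

end
end Cub

/-- For real `a` and `b ≤ 0`, there are infinitely many positive real `c` such that
`w'' + (z³ + a·z² + b·z − c)·w = 0` has a nonzero entire solution with infinitely many
zeros, all but finitely many of them real. -/
theorem stmt_19 (a b : ℝ) (hb : b ≤ 0) :
    {c : ℝ | 0 < c ∧ ∃ w : ℂ → ℂ,
        Differentiable ℂ w ∧ w ≠ 0 ∧
        (∀ z : ℂ, iteratedDeriv 2 w z
            + (z ^ 3 + (a : ℂ) * z ^ 2 + (b : ℂ) * z - (c : ℂ)) * w z = 0) ∧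
        {z : ℂ | w z = 0}.Infinite ∧
        {z : ℂ | w z = 0 ∧ z.im ≠ 0}.Finite}.Infinite := by
  refine Set.infinite_of_forall_exists_gt fun N => ?_
  set β : ℝ := (a ^ 2 / 3 - b) / 4 with hβd
  have hβ : 0 ≤ β := by
    have := sq_nonneg a
    rw [hβd]; apply div_nonneg _ (by norm_num); linarith
  set δ : ℝ := a * b / 3 - 2 * a ^ 3 / 27 with hδ
  obtain ⟨γ, p, q, hM, hγ, hN, hp⟩ := Cub.exists_c hβ (max ((4 * β + 1) ^ 2) (δ + |N|))
  have hγ1 : (4 * β + 1) ^ 2 ≤ γ := (le_max_left _ _).trans hM.le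
  have hγ2 : δ + |N| < γ := lt_of_le_of_lt (le_max_right _ _) hM
  have hq := Cub.reality hβ hγ1 hN hp
  have hcN := le_abs_self N
  have hcN0 := abs_nonneg N
  refine ⟨γ - δ, ⟨by linarith, ?_⟩, by linarith⟩
  set ψ := Cub.ent (4 * β) γ p q with hψ
  set f : ℂ → ℂ := fun z => -(z + a / 3) with hf
  have hinj : Function.Injective f := by
    intro x y h
    simpa [hf] using h
  have hinv : ∀ z, f (-z - a / 3) = z := by intro z; simp only [hf]; ring
  have him : ∀ z, (f z).im = - z.im := by
    intro z
    have : f z = -(z + ((a / 3 : ℝ) : ℂ)) := by simp only [hf]; push_cast; ring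
    rw [this, Complex.neg_im, Complex.add_im, Complex.ofReal_im, add_zero]
  have df : ∀ z, HasDerivAt f (-1) z := fun z => ((hasDerivAt_id z).add_const _).neg
  have d1 : ∀ z, HasDerivAt (fun z => ψ (f z)) (-Cub.ent1 (4 * β) γ p q (f z)) z := by
    intro z
    refine ((Cub.ent_hasDerivAt (4 * β) γ p q (f z)).comp z (df z)).congr_deriv ?_
    ring
  have d2 : ∀ z, HasDerivAt (fun z => -Cub.ent1 (4 * β) γ p q (f z))
      ((f z ^ 3 - (4 * β : ℝ) * f z + γ) * ψ (f z)) z := by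
    intro z
    refine ((Cub.ent1_hasDerivAt (4 * β) γ p q (f z)).comp z (df z)).neg.congr_deriv ?_
    ring
  have e1 : deriv (fun z => ψ (f z)) = fun z => -Cub.ent1 (4 * β) γ p q (f z) :=
    funext fun z => (d1 z).deriv
  have hinf := Cub.zeros_infinite (b := 4 * β) (by positivity) hγ.le hp hq
  have hfin := Cub.nonreal_finite hβ hγ hN hp hq
  refine ⟨fun z => ψ (f z), fun z => (d1 z).differentiableAt, ?_, ?_, ?_, ?_⟩
  · intro h
    have h0 : ∀ x, ψ x = 0 := fun x => by
      have := congrFun h (-x - a / 3)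
      simpa only [hinv, Pi.zero_apply] using this
    have h1 : Cub.ent1 (4 * β) γ p q 0 = 0 := by
      have h2 := Cub.ent_hasDerivAt (4 * β) γ p q 0
      have h3 : Cub.ent (4 * β) γ p q = fun _ => 0 := funext h0
      rw [h3] at h2
      exact h2.unique (hasDerivAt_const _ _)
    exact Cub.ent_ne hβ hγ.le hN 0 (h0 0) h1
  · intro z
    rw [iteratedDeriv_succ, iteratedDeriv_one, e1, (d2 z).deriv, hf, hβd, hδ]
    push_cast
    ring
  · have : {z : ℂ | ψ (f z) = 0} = f ⁻¹' {z | ψ z = 0} := rfl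
    rw [this]
    refine hinf.preimage fun x _ => ⟨_, hinv x⟩
  · have : {z : ℂ | ψ (f z) = 0 ∧ z.im ≠ 0} = f ⁻¹' {z | ψ z = 0 ∧ z.im ≠ 0} := by
      ext z
      simp only [Set.mem_setOf_eq, Set.mem_preimage, him, neg_ne_zero]
    rw [this]
    exact hfin.preimage hinj.injOn
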